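/- arXiv:2107.06674 — 7 statements merged into one kernel-verified Lean document; each statement's English description precedes it below -/
import Mathlib

section
/- Let G be a finite group, N a normal subgroup of G, and A ⊆ G a nonempty symmetric subset. Let K ≥ 1 be a real number and k ≥ 1 a natural number. Suppose |A^3| ≤ K·|A|, that A^k contains some left coset xN of N, and that every group homomorphism from N to GL_d(ℂ) with nontrivial image satisfies d ≥ K^{3k}. Then A^3 contains a left coset of N. In particular, if A^k = G and every group homomorphism from G to GL_d(ℂ) with nontrivial image satisfies d ≥ K^{3k}, then A^3 = G. -/
open scoped Pointwise
open Matrix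

set_option synthInstance.maxHeartbeats 400000
set_option maxHeartbeats 1000000

/-!
Convolution by a function `F` of mean zero on a finite group `G` commutes with right translations,
so every eigenspace of its Gram operator is a subrepresentation of `𝕜 ^ G`. For a nonzero
eigenvalue this subrepresentation is not trivial, since convolution by `F` kills the constants; if
`G` is `D`-quasirandom, each nonzero eigenvalue therefore has multiplicity at least `D`, and
comparison with the trace `|G| ‖F‖²` bounds it by `|G| ‖F‖² / D`. Applied to the balanced
indicator function of `X` and the indicator function of `Y`, this bound shows that the convolution
of `X` and `Y` is nearly constant, hence Gowers' theorem: `X Y Z = G` as soon as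
`|X| |Y| |Z| ≥ |G|³ / D`. Real representations suffice here, as each of them complexifies without
changing its dimension.

If `A ^ k` contains a coset of the normal subgroup `N`, then `A ^ (k + 1)` has at least as many
elements as the union of the cosets of `N` that meet `A`. Small tripling bounds `|A ^ (k + 1)|` by
`K ^ k |A|`, so by pigeonhole `B = {u ∈ N | z u ∈ A}` has at least `|N| / K ^ k` elements for some
`z`. Gowers' theorem then applies inside `N` to conjugates of `B`: moving the factors `z` of
`(z B) (z B) (z B) ⊆ A ^ 3` to the left shows that this product is all of `z ^ 3 N`.
-/

open scoped InnerProductSpace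
open Module (finrank finBasis)
open Module.End (eigenspace HasEigenvalue)

section PositiveOperator

variable {𝕜 E : Type*} [RCLike 𝕜] [NormedAddCommGroup E] [InnerProductSpace 𝕜 E]
  [FiniteDimensional 𝕜 E] {S : E →ₗ[𝕜] E}

theorem mul_finrank_eigenspace_le_re_trace (hS : S.IsPositive) (μ : ℝ) :
    μ * finrank 𝕜 (eigenspace S (μ : 𝕜)) ≤ RCLike.re (S.trace 𝕜 E) := by
  let eig := hS.isSymmetric.eigenvalues rfl
  calc μ * finrank 𝕜 (eigenspace S (μ : 𝕜))
      = ∑ i with eig i = μ, eig i := by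
        rw [Finset.sum_congr rfl fun i hi => (Finset.mem_filter.mp hi).2, Finset.sum_const,
          nsmul_eq_mul, mul_comm, ← hS.isSymmetric.card_filter_eigenvalues_eq rfl]
        simp only [RCLike.ofReal_inj, eig]
    _ ≤ ∑ i, eig i := Finset.sum_le_univ_sum_of_nonneg (hS.nonneg_eigenvalues rfl)
    _ = RCLike.re (S.trace 𝕜 E) := (hS.isSymmetric.re_trace_eq_sum_eigenvalues rfl).symm

theorem re_inner_apply_self_eq_sum_eigenvalues (hS : S.IsSymmetric) (v : E) :
    RCLike.re ⟪v, S v⟫_𝕜 =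
      ∑ i, hS.eigenvalues rfl i * ‖(hS.eigenvectorBasis rfl).repr v i‖ ^ 2 := by
  rw [← (hS.eigenvectorBasis rfl).repr.inner_map_map, PiLp.inner_apply, map_sum]
  refine Finset.sum_congr rfl fun i _ => ?_
  rw [hS.eigenvectorBasis_apply_self_apply, ← smul_eq_mul, inner_smul_right,
    inner_self_eq_norm_sq_to_K]
  norm_cast

theorem mul_re_inner_apply_self_le_re_trace_mul_norm_sq (hS : S.IsPositive) {D : ℝ}
    (hD : ∀ μ : 𝕜, μ ≠ 0 → HasEigenvalue S μ → D ≤ finrank 𝕜 (eigenspace S μ)) (v : E) :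
    D * RCLike.re ⟪v, S v⟫_𝕜 ≤ RCLike.re (S.trace 𝕜 E) * ‖v‖ ^ 2 := by
  let eig := hS.isSymmetric.eigenvalues rfl
  have eig_nonneg (i) : 0 ≤ eig i := hS.nonneg_eigenvalues rfl i
  have mul_eig_le (i) : D * eig i ≤ RCLike.re (S.trace 𝕜 E) := by
    refine le_trans ?_ (mul_finrank_eigenspace_le_re_trace hS (eig i))
    rw [mul_comm]
    obtain h | h := eq_or_ne (eig i) 0
    · simp [h]
    · gcongr
      · exact eig_nonneg i
      · exact hD _ (RCLike.ofReal_ne_zero.mpr h) (hS.isSymmetric.hasEigenvalue_eigenvalues rfl i)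
  rw [re_inner_apply_self_eq_sum_eigenvalues hS.isSymmetric,
    ← (hS.isSymmetric.eigenvectorBasis rfl).repr.norm_map v, EuclideanSpace.norm_sq_eq,
    Finset.mul_sum, Finset.mul_sum]
  refine Finset.sum_le_sum fun i _ => ?_
  rw [← mul_assoc]
  gcongr
  exact mul_eig_le i

end PositiveOperator

/-- Gowers' `D`-quasirandomness over `R`: every homomorphism to `GL_d(R)` with nontrivial image has
`d ≥ D`. For a finite group over `ℂ` this is the usual lower bound on the dimensions of the
nontrivial irreducible representations. -/
def IsQuasirandom (R : Type*) [CommRing R] (G : Type*) [Group G] (D : ℝ) : Prop :=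
  ∀ (d : ℕ) (φ : G →* GL (Fin d) R), φ.range ≠ ⊥ → D ≤ d

namespace IsQuasirandom

variable {G : Type*} [Group G] {D : ℝ}

theorem of_injective {R S : Type*} [CommRing R] [CommRing S] {f : R →+* S}
    (hf : Function.Injective f) (hG : IsQuasirandom S G D) : IsQuasirandom R G D := by
  intro d φ hφ
  have map_injective : Function.Injective (GeneralLinearGroup.map (n := Fin d) f) :=
    Units.map_injective (Matrix.map_injective hf)
  refine hG d ((GeneralLinearGroup.map f).comp φ) ?_
  rwa [MonoidHom.range_comp, Ne, Subgroup.map_eq_bot_iff_of_injective _ map_injective]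

theorem le_finrank {F V : Type*} [Field F] [AddCommGroup V] [Module F V] [FiniteDimensional F V]
    (hG : IsQuasirandom F G D) {ρ : Representation F G V} (hρ : ¬ ρ.IsTrivial) :
    D ≤ finrank F V := by
  let toGL : (V →ₗ[F] V)ˣ ≃* GL (Fin (finrank F V)) F :=
    Units.mapEquiv (LinearMap.toMatrixAlgEquiv (finBasis F V)).toMulEquiv
  refine hG _ (toGL.toMonoidHom.comp ρ.toHomUnits) fun h => hρ ⟨fun g => ?_⟩
  rw [MonoidHom.range_eq_bot_iff] at h
  have hg : ρ.toHomUnits g = 1 := toGL.injective ((DFunLike.congr_fun h g).trans toGL.map_one.symm)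
  exact congrArg Units.val hg

theorem mul_re_inner_apply_self_le {𝕜 E : Type*} [RCLike 𝕜] [NormedAddCommGroup E]
    [InnerProductSpace 𝕜 E] [FiniteDimensional 𝕜 E] (hG : IsQuasirandom 𝕜 G D)
    {ρ : Representation 𝕜 G E} {S : E →ₗ[𝕜] E} (hS : S.IsPositive)
    (hcomm : ∀ g, Commute S (ρ g)) (hinv : ∀ v ∈ ρ.invariants, S v = 0) (v : E) :
    D * RCLike.re ⟪v, S v⟫_𝕜 ≤ RCLike.re (S.trace 𝕜 E) * ‖v‖ ^ 2 := by
  refine mul_re_inner_apply_self_le_re_trace_mul_norm_sq hS (fun μ hμ hSμ => ?_) v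
  let W : Subrepresentation ρ :=
    ⟨eigenspace S μ, fun g => Module.End.mapsTo_genEigenspace_of_comm (hcomm g) μ 1⟩
  obtain ⟨w, hw, hw0⟩ := hSμ.exists_hasEigenvector
  refine hG.le_finrank (ρ := W.toRepresentation) fun hW => ?_
  have w_mem : w ∈ ρ.invariants := fun g =>
    congrArg Subtype.val (W.toRepresentation.isTrivial_apply g ⟨w, hw⟩)
  rw [Module.End.mem_eigenspace_iff, hinv w w_mem, eq_comm, smul_eq_zero] at hw
  exact hw.elim hμ hw0

end IsQuasirandom

section Convolution

/-- The right regular representation on `𝕜 ^ G`, with its Euclidean inner product; it commutes with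
convolution from the left. -/
def rightTranslation (𝕜 G : Type*) [RCLike 𝕜] [Monoid G] :
    Representation 𝕜 G (EuclideanSpace 𝕜 G) where
  toFun u :=
    { toFun v := WithLp.toLp 2 fun g => v (g * u)
      map_add' _ _ := rfl
      map_smul' _ _ := rfl }
  map_one' := by ext; simp
  map_mul' u w := by ext v g; exact congrArg v (mul_assoc g u w).symm

/-- The matrix of the convolution operator `v ↦ F ∗ v`, where `(F ∗ v) g = ∑ h, F (g * h⁻¹) * v h`;
its spectrum measures the mixing of `F`. -/
def convolutionMatrix {G R : Type*} [Group G] (F : G → R) : Matrix G G R :=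
  of fun g h => F (g * h⁻¹)

variable {𝕜 G : Type*} [RCLike 𝕜] [Group G]

theorem rightTranslation_apply (u : G) (v : EuclideanSpace 𝕜 G) (g : G) :
    rightTranslation 𝕜 G u v g = v (g * u) := rfl

variable [Fintype G]

theorem commute_toEuclideanLin_rightTranslation [DecidableEq G] {M : Matrix G G 𝕜}
    (hM : ∀ g h u, M (g * u) (h * u) = M g h) (u : G) :
    Commute (toEuclideanLin M) (rightTranslation 𝕜 G u) := by
  refine LinearMap.ext fun v => PiLp.ext fun g => ?_
  calc ∑ h, M g h * v (h * u)
      = ∑ h, M (g * u) (h * u) * v (h * u) := by simp only [hM]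
    _ = ∑ h, M (g * u) h * v h :=
      Equiv.sum_comp (Equiv.mulRight u) fun h => M (g * u) h * v h

theorem gram_convolutionMatrix_mul_right (F : G → 𝕜) (g h u : G) :
    ((convolutionMatrix F)ᴴ * convolutionMatrix F) (g * u) (h * u) =
      ((convolutionMatrix F)ᴴ * convolutionMatrix F) g h := by
  simp only [Matrix.mul_apply, conjTranspose_apply, convolutionMatrix, of_apply]
  rw [← Equiv.sum_comp (Equiv.mulRight u)]
  simp only [Equiv.coe_mulRight, _root_.mul_inv_rev, mul_assoc, mul_inv_cancel_left]

theorem re_trace_gram_convolutionMatrix (F : G → 𝕜) :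
    RCLike.re (trace ((convolutionMatrix F)ᴴ * convolutionMatrix F)) =
      Fintype.card G * ∑ g, ‖F g‖ ^ 2 := by
  have sum_column (h : G) : ∑ g, ‖F (g * h⁻¹)‖ ^ 2 = ∑ g, ‖F g‖ ^ 2 :=
    Equiv.sum_comp (Equiv.mulRight h⁻¹) fun g => ‖F g‖ ^ 2
  simp only [trace, diag_apply, Matrix.mul_apply, conjTranspose_apply, convolutionMatrix, of_apply,
    RCLike.star_def, RCLike.conj_mul]
  norm_cast
  simp only [sum_column, Finset.sum_const, Finset.card_univ, nsmul_eq_mul]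

theorem convolutionMatrix_mulVec_eq_zero {F v : G → 𝕜} (hF : ∑ g, F g = 0)
    (hv : ∀ g, v g = v 1) : convolutionMatrix F *ᵥ v = 0 := by
  ext g
  have sum_row : ∑ h, F (g * h⁻¹) = ∑ h, F h :=
    Equiv.sum_comp ((Equiv.inv G).trans (Equiv.mulLeft g)) F
  simp only [mulVec, dotProduct, convolutionMatrix, of_apply, hv, ← Finset.sum_mul, sum_row, hF,
    zero_mul, Pi.zero_apply]

theorem IsQuasirandom.sum_norm_sq_convolution_le {D : ℝ} (hG : IsQuasirandom 𝕜 G D) {F : G → 𝕜}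
    (hF : ∑ g, F g = 0) (v : G → 𝕜) :
    D * ∑ g, ‖∑ h, F (g * h⁻¹) * v h‖ ^ 2 ≤
      Fintype.card G * (∑ g, ‖F g‖ ^ 2) * ∑ g, ‖v g‖ ^ 2 := by
  classical
  let M := convolutionMatrix F
  let T := toEuclideanLin M
  let S := toEuclideanLin (Mᴴ * M)
  have hS : S = T.adjoint ∘ₗ T := by
    simp only [S, T, toLpLin_mul_same, toEuclideanLin_conjTranspose_eq_adjoint]
  have S_positive : S.IsPositive := hS ▸ T.isPositive_adjoint_comp_self
  have S_invariant (w) (hw : w ∈ (rightTranslation 𝕜 G).invariants) : S w = 0 := by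
    have hw1 (g) : w g = w 1 := by
      simpa only [rightTranslation_apply, one_mul] using congrArg (fun w => w 1) (hw g)
    simp [hS, T, M, toLpLin_apply, convolutionMatrix_mulVec_eq_zero hF hw1]
  have trace_S : RCLike.re (S.trace 𝕜 _) = Fintype.card G * ∑ g, ‖F g‖ ^ 2 := by
    rw [← re_trace_gram_convolutionMatrix, ← trace_toLin_eq _ (PiLp.basisFun 2 𝕜 G),
      ← toLpLin_eq_toLin]
  have inner_S (w) : RCLike.re ⟪w, S w⟫_𝕜 = ‖T w‖ ^ 2 := by
    rw [hS, LinearMap.comp_apply, LinearMap.adjoint_inner_right, inner_self_eq_norm_sq]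
  have := hG.mul_re_inner_apply_self_le S_positive
    (commute_toEuclideanLin_rightTranslation (gram_convolutionMatrix_mul_right F))
    S_invariant (WithLp.toLp 2 v)
  rwa [trace_S, inner_S, EuclideanSpace.norm_sq_eq, EuclideanSpace.norm_sq_eq] at this

end Convolution

section Mixing

theorem sum_indicator_sub_const_sq {α : Type*} [Fintype α] [DecidableEq α] (X : Finset α) (a : ℝ) :
    ∑ i, ((if i ∈ X then 1 else 0) - a) ^ 2 = X.card * (1 - 2 * a) + Fintype.card α * a ^ 2 := by
  have expand (i : α) :
      ((if i ∈ X then 1 else 0) - a) ^ 2 = (if i ∈ X then 1 else 0) * (1 - 2 * a) + a ^ 2 := by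
    split_ifs <;> ring
  simp only [expand, Finset.sum_add_distrib, ← Finset.sum_mul, Finset.sum_boole,
    Finset.filter_univ_mem, Finset.sum_const, Finset.card_univ, nsmul_eq_mul]

variable {G : Type*} [Group G] [Fintype G] [DecidableEq G] {D : ℝ}

theorem sum_indicator_mul_indicator_eq_convolution (X Y : Finset G) (g : G) :
    ∑ h, (if g * h⁻¹ ∈ X then 1 else 0) * (if h ∈ Y then 1 else 0) = (X.convolution Y g : ℝ) := by
  have card_eq : Finset.card {h | g * h⁻¹ ∈ X ∧ h ∈ Y} = X.convolution Y g :=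
    Finset.card_nbij' (fun h => (g * h⁻¹, h)) Prod.snd
      (by simp +contextual [Set.MapsTo])
      (by
        rintro ⟨a, b⟩ h
        obtain ⟨hab, rfl⟩ := Finset.mem_filter.mp h
        simpa using hab)
      (by simp [Set.LeftInvOn])
      (by simp +contextual [Set.LeftInvOn, ← eq_mul_inv_iff_mul_eq])
  simp only [ite_zero_mul_ite_zero, mul_one, Finset.sum_boole, card_eq]

theorem IsQuasirandom.sum_sq_convolution_sub_le (hG : IsQuasirandom ℝ G D) (X Y : Finset G) :
    D * ∑ g, (X.convolution Y g - X.card * Y.card / Fintype.card G : ℝ) ^ 2 ≤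
      X.card * Y.card * (Fintype.card G - X.card) := by
  let F : G → ℝ := fun g => (if g ∈ X then 1 else 0) - X.card / Fintype.card G
  let v : G → ℝ := fun g => if g ∈ Y then 1 else 0
  have sum_F : ∑ g, F g = 0 := by
    simp [F, field]
  have sum_v : ∑ g, ‖v g‖ ^ 2 = Y.card := by
    simp [v]
  have conv_F_v (g : G) :
      ∑ h, F (g * h⁻¹) * v h = X.convolution Y g - X.card * Y.card / Fintype.card G := by
    simp only [F, v, sub_mul, Finset.sum_sub_distrib, ← Finset.mul_sum,
      sum_indicator_mul_indicator_eq_convolution, Finset.sum_boole, Finset.filter_univ_mem]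
    ring
  calc D * ∑ g, (X.convolution Y g - X.card * Y.card / Fintype.card G : ℝ) ^ 2
      = D * ∑ g, ‖∑ h, F (g * h⁻¹) * v h‖ ^ 2 := by
        simp only [conv_F_v, Real.norm_eq_abs, sq_abs]
    _ ≤ Fintype.card G * (∑ g, ‖F g‖ ^ 2) * ∑ g, ‖v g‖ ^ 2 := hG.sum_norm_sq_convolution_le sum_F v
    _ = X.card * Y.card * (Fintype.card G - X.card) := by
        rw [sum_v]
        simp only [Real.norm_eq_abs, sq_abs, F, sum_indicator_sub_const_sq]
        field_simp
        ring

theorem IsQuasirandom.mul_card_le_of_notMem_mul_mul (hG : IsQuasirandom ℝ G D) {X Y Z : Finset G}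
    {g : G} (hg : g ∉ X * Y * Z) :
    D * (X.card * Y.card * Z.card) ≤ Fintype.card G ^ 2 * (Fintype.card G - X.card : ℝ) := by
  let n : ℝ := Fintype.card G
  let p : ℝ := X.card * Y.card
  let W := Z.image (g * ·⁻¹)
  have card_W : W.card = Z.card :=
    Finset.card_image_of_injective _ ((mul_right_injective g).comp inv_injective)
  have conv_eq_zero (w) (hw : w ∈ W) : X.convolution Y w = 0 := by
    obtain ⟨c, hc, rfl⟩ := Finset.mem_image.mp hw
    rw [Finset.convolution_eq_zero]
    exact fun hmem => hg <| by simpa using Finset.mul_mem_mul hmem hc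
  have n_pos : 0 < n := by positivity
  have card_le : X.card ≤ n := Nat.cast_le.mpr X.card_le_univ
  have p_nonneg : 0 ≤ p := by positivity
  change D * (p * Z.card) ≤ n ^ 2 * (n - X.card)
  obtain hDp | hDp := le_or_gt (D * p) 0
  · calc D * (p * Z.card) = D * p * Z.card := by ring
      _ ≤ 0 := mul_nonpos_of_nonpos_of_nonneg hDp (Nat.cast_nonneg _)
      _ ≤ n ^ 2 * (n - X.card) := mul_nonneg (sq_nonneg n) (sub_nonneg.mpr card_le)
  have D_pos : 0 < D := pos_of_mul_pos_left hDp p_nonneg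
  have p_pos : 0 < p := pos_of_mul_pos_right hDp D_pos.le
  refine le_of_mul_le_mul_right ?_ p_pos
  calc D * (p * Z.card) * p
      = n ^ 2 * (D * ∑ w ∈ W, (X.convolution Y w - p / n) ^ 2) := by
        rw [Finset.sum_congr rfl fun w hw => by rw [conv_eq_zero w hw], Finset.sum_const,
          card_W, nsmul_eq_mul, Nat.cast_zero]
        field_simp
        ring
    _ ≤ n ^ 2 * (D * ∑ w, (X.convolution Y w - p / n) ^ 2) := by
        gcongr
        exact Finset.subset_univ _
    _ ≤ n ^ 2 * (p * (n - X.card)) :=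
        mul_le_mul_of_nonneg_left (hG.sum_sq_convolution_sub_le X Y) (sq_nonneg n)
    _ = n ^ 2 * (n - X.card) * p := by ring

theorem IsQuasirandom.mul_mul_eq_univ (hG : IsQuasirandom ℝ G D) {X Y Z : Finset G}
    (h : (Fintype.card G : ℝ) ^ 3 ≤ D * (X.card * Y.card * Z.card)) :
    X * Y * Z = Finset.univ := by
  rw [Finset.eq_univ_iff_forall]
  by_contra! ⟨g, hg⟩
  have X_nonempty : X.Nonempty := by
    by_contra! rfl
    have : (0 : ℝ) < Fintype.card G ^ 3 := by positivity
    rw [Finset.card_empty, Nat.cast_zero, zero_mul, zero_mul, mul_zero] at h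
    exact this.not_ge h
  have X_card_pos : (0 : ℝ) < X.card := by exact_mod_cast X_nonempty.card_pos
  have : (Fintype.card G : ℝ) ^ 3 < Fintype.card G ^ 3 :=
    calc (Fintype.card G : ℝ) ^ 3 ≤ D * (X.card * Y.card * Z.card) := h
      _ ≤ Fintype.card G ^ 2 * (Fintype.card G - X.card : ℝ) :=
        hG.mul_card_le_of_notMem_mul_mul hg
      _ < Fintype.card G ^ 2 * Fintype.card G := by gcongr; linarith
      _ = Fintype.card G ^ 3 := by ring
  exact this.false

end Mixing

section SmallTripling

variable {G : Type*} [Group G]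

theorem one_le_of_small_tripling [DecidableEq G] {A : Finset G} (hne : A.Nonempty) {K : ℝ}
    (htrip : ((A ^ 3).card : ℝ) ≤ K * A.card) : 1 ≤ K := by
  have card_le : (A.card : ℝ) ≤ (A ^ 3).card := mod_cast Finset.card_le_card_pow three_ne_zero
  exact one_le_of_le_mul_right₀ (by exact_mod_cast hne.card_pos) (card_le.trans htrip)

theorem card_pow_succ_le_of_small_tripling [DecidableEq G] {A : Finset G} (hne : A.Nonempty)
    (hsym : A⁻¹ = A) {K : ℝ} (htrip : ((A ^ 3).card : ℝ) ≤ K * A.card) (k : ℕ) :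
    ((A ^ (k + 1)).card : ℝ) ≤ K ^ k * A.card := by
  have one_le_K : 1 ≤ K := one_le_of_small_tripling hne htrip
  obtain _ | _ | k := k
  · simp
  · calc ((A ^ 2).card : ℝ) ≤ (A ^ 3).card := mod_cast hne.card_pow_mono (Nat.le_succ 2)
      _ ≤ K ^ 1 * A.card := by rwa [pow_one]
  · calc ((A ^ (k + 3)).card : ℝ) ≤ K ^ (k + 1) * A.card :=
        Finset.small_pow_of_small_tripling (Nat.le_add_left 3 k) htrip hsym
      _ ≤ K ^ (k + 2) * A.card := by
        gcongr
        exact Nat.le_succ _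

theorem ncard_mul_subgroup (N : Subgroup G) (A : Set G) :
    (A * N : Set G).ncard = Nat.card N * ((QuotientGroup.mk : G → G ⧸ N) '' A).ncard := by
  rw [← QuotientGroup.preimage_image_mk_eq_mul]
  exact QuotientGroup.card_preimage_mk N _

theorem ncard_mul_leftCoset (N : Subgroup G) [N.Normal] (A : Set G) (x : G) :
    (A * (x • (N : Set G))).ncard = (A * N : Set G).ncard := by
  rw [(normal_iff_eq_cosets N).mp ‹_› x, mul_smul_comm, Set.ncard_smul_set]

theorem exists_card_le_mul_card_leftCoset {N : Subgroup G} [Fintype N] [DecidableEq G]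
    {A : Finset G} (hne : A.Nonempty) {C : ℝ} (hC : 0 < C)
    (hA : ((A * N : Set G).ncard : ℝ) ≤ C * A.card) :
    ∃ z : G, (Fintype.card N : ℝ) ≤ C * Finset.card {u : N | z * u ∈ A} := by
  classical
  let mk : G → G ⧸ N := QuotientGroup.mk
  have card_image : (A.image mk).card • (Fintype.card N / C) ≤ (A.card : ℝ) := by
    rw [ncard_mul_subgroup, ← Finset.coe_image, Set.ncard_coe_finset, Nat.cast_mul,
      Nat.card_eq_fintype_card, mul_comm] at hA
    rwa [nsmul_eq_mul, ← mul_div_assoc, div_le_iff₀' hC]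
  obtain ⟨_, hz, card_fiber⟩ := Finset.exists_le_card_fiber_of_nsmul_le_card_of_maps_to
    (fun _ => Finset.mem_image_of_mem mk) (hne.image mk) card_image
  obtain ⟨z, -, rfl⟩ := Finset.mem_image.mp hz
  refine ⟨z, ((div_le_iff₀' hC).mp card_fiber).trans ?_⟩
  have fiber_subset :
      ({a ∈ A | mk a = mk z} : Finset G) ⊆
        ({u : N | z * u ∈ A} : Finset N).image fun u : N => z * u := by
    intro a ha
    obtain ⟨ha, haz⟩ := Finset.mem_filter.mp ha
    exact Finset.mem_image.mpr ⟨⟨z⁻¹ * a, QuotientGroup.eq.mp haz.symm⟩, by simpa, by simp⟩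
  gcongr
  exact (Finset.card_le_card fiber_subset).trans Finset.card_image_le

theorem exists_dense_leftCoset [DecidableEq G] {N : Subgroup G} [N.Normal] [Fintype N]
    {A : Finset G} (hne : A.Nonempty) (hsym : A⁻¹ = A) {K : ℝ}
    (htrip : ((A ^ 3).card : ℝ) ≤ K * A.card) {k : ℕ} {x : G} (hx : x • (N : Set G) ⊆ ↑(A ^ k)) :
    ∃ z : G, (Fintype.card N : ℝ) ≤ K ^ k * Finset.card {u : N | z * u ∈ A} := by
  have K_pos : 0 < K := zero_lt_one.trans_le (one_le_of_small_tripling hne htrip)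
  refine exists_card_le_mul_card_leftCoset hne (pow_pos K_pos k) ?_
  have coset_subset : (A : Set G) * x • (N : Set G) ⊆ ↑(A ^ (k + 1)) := by
    rw [pow_succ', Finset.coe_mul]
    exact Set.mul_subset_mul_left hx
  calc ((A * N : Set G).ncard : ℝ) = (A * x • (N : Set G) : Set G).ncard := by
        rw [ncard_mul_leftCoset]
    _ ≤ (A ^ (k + 1)).card := by
        rw [← Set.ncard_coe_finset]
        exact_mod_cast Set.ncard_le_ncard coset_subset (Finset.finite_toSet _)
    _ ≤ K ^ k * A.card := card_pow_succ_le_of_small_tripling hne hsym htrip k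

end SmallTripling

theorem IsQuasirandom.smul_subset_pow_three {G : Type*} [Group G] {N : Subgroup G} [N.Normal]
    [Fintype N] {D : ℝ} (hN : IsQuasirandom ℝ N D) {A : Set G} {z : G} {B : Finset N}
    (hB : ∀ u ∈ B, z * u ∈ A) (hcard : (Fintype.card N : ℝ) ^ 3 ≤ D * (B.card : ℝ) ^ 3) :
    z ^ 3 • (N : Set G) ⊆ A ^ 3 := by
  classical
  let c : MulAut N := MulAut.conjNormal z⁻¹
  have prod_eq : c ^ 2 • B * c • B * B = Finset.univ := by
    refine hN.mul_mul_eq_univ ?_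
    rwa [Finset.card_smul_finset, Finset.card_smul_finset, ← pow_three']
  have conj_identity (b₁ b₂ b₃ : N) :
      z ^ 3 * ↑(c ^ 2 • b₁ * c • b₂ * b₃) = z * b₁ * (z * b₂) * (z * b₃) := by
    simp only [c, ← map_pow, MulAut.smul_def, Subgroup.coe_mul, MulAut.conjNormal_apply]
    group
  refine Set.smul_set_subset_iff.mpr fun u hu => ?_
  obtain ⟨_, hcc, b₃, h₃, hbu⟩ := Finset.mem_mul.mp (prod_eq ▸ Finset.mem_univ (⟨u, hu⟩ : N))
  obtain ⟨_, hc₁, _, hc₂, rfl⟩ := Finset.mem_mul.mp hcc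
  obtain ⟨b₁, h₁, rfl⟩ := Finset.mem_smul_finset.mp hc₁
  obtain ⟨b₂, h₂, rfl⟩ := Finset.mem_smul_finset.mp hc₂
  have factorization : z ^ 3 • u = z * b₁ * (z * b₂) * (z * b₃) := by
    rw [← conj_identity, hbu, smul_eq_mul]
  rw [factorization, pow_three' A]
  exact Set.mul_mem_mul (Set.mul_mem_mul (hB b₁ h₁) (hB b₂ h₂)) (hB b₃ h₃)

theorem gowers_trick_general {G : Type*} [Group G] (N : Subgroup G) [N.Normal] {A : Set G}
    (hA : A.Finite) (hne : A.Nonempty) (hsym : A⁻¹ = A) {K : ℝ} {k : ℕ}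
    (htrip : ((A ^ 3).ncard : ℝ) ≤ K * A.ncard) (hcoset : ∃ x : G, x • (N : Set G) ⊆ A ^ k)
    (hN : IsQuasirandom ℝ N (K ^ (3 * k))) :
    (∃ y : G, y • (N : Set G) ⊆ A ^ 3) ∧ (N = ⊤ → A ^ 3 = Set.univ) := by
  have exists_coset : ∃ y : G, y • (N : Set G) ⊆ A ^ 3 := by
    classical
    lift A to Finset G using hA
    obtain ⟨x, hx⟩ := hcoset
    rw [← Finset.coe_pow] at hx
    rw [← Finset.coe_pow, Set.ncard_coe_finset, Set.ncard_coe_finset] at htrip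
    have : Finite N := Set.finite_smul_set.mp ((Finset.finite_toSet _).subset hx)
    have : Fintype N := Fintype.ofFinite N
    obtain ⟨z, hz⟩ := exists_dense_leftCoset (Finset.coe_nonempty.mp hne)
      (by exact_mod_cast hsym) htrip hx
    let B : Finset N := {u : N | z * u ∈ A}
    have B_subset : ∀ u ∈ B, z * u ∈ (A : Set G) := fun u hu => (Finset.mem_filter.mp hu).2
    refine ⟨z ^ 3, hN.smul_subset_pow_three B_subset ?_⟩
    rw [mul_comm 3, pow_mul, ← mul_pow]
    gcongr
  refine ⟨exists_coset, ?_⟩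
  rintro rfl
  obtain ⟨y, hy⟩ := exists_coset
  simpa [Set.smul_set_univ, Set.univ_subset_iff] using hy

/-- If `A` is a nonempty symmetric `K`-tripling subset of a finite group `G`, `A^k`
contains a coset of a normal subgroup `N` with `deg_ℂ(N) ≥ K^{3k}`, then `A³` contains a
coset of `N`. In particular, if `A^k = G` and `deg_ℂ(G) ≥ K^{3k}` then `A³ = G`. -/
theorem gowers_trick
    (G : Type) [Group G] [Finite G] (N : Subgroup G) [N.Normal]
    (A : Set G) (hne : A.Nonempty) (hsym : A⁻¹ = A)
    (K : ℝ) (hK : 1 ≤ K) (k : ℕ) (hk : 1 ≤ k)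
    (htrip : ((A ^ 3).ncard : ℝ) ≤ K * (A.ncard : ℝ))
    (hcoset : ∃ x : G, x • (N : Set G) ⊆ A ^ k)
    (hqr : ∀ (d : ℕ) (φ : ↥N →* GL (Fin d) ℂ), φ.range ≠ ⊥ → K ^ (3 * k) ≤ (d : ℝ)) :
    (∃ y : G, y • (N : Set G) ⊆ A ^ 3) ∧
      (N = ⊤ → A ^ k = Set.univ → A ^ 3 = Set.univ) := by
  obtain ⟨exists_coset, eq_univ⟩ := gowers_trick_general N A.toFinite hne hsym htrip hcoset
    (IsQuasirandom.of_injective Complex.ofReal_injective (f := Complex.ofRealHom) hqr)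
  exact ⟨exists_coset, fun hN _ => eq_univ hN⟩
end

section
/- There is an absolute constant C ≥ 1 with the following property. Let G be a nontrivial finite perfect group (G = [G,G]), let N be a solvable normal subgroup of G, and suppose G admits a group homomorphism to GL_d(ℂ) with nontrivial image. Then the quotient G/N admits a group homomorphism to GL_e(ℂ) with nontrivial image for some e ≤ C·d². (Equivalently, deg_ℂ(G) ≥ c·deg_ℂ(G/Sol(G))^{1/2} for an absolute constant c > 0, where deg_ℂ denotes the minimal dimension of a nontrivial complex representation and Sol(G) is the soluble radical of G.) -/
open Matrix

set_option synthInstance.maxHeartbeats 400000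
set_option maxHeartbeats 1000000

/-!
Let `V` be a nontrivial representation of `G` of minimal dimension `m`. It is irreducible, and `G`
acts trivially on every set of at most `m` points. If `K` is a normal subgroup of `G` with
commutative image in `End V`, then `G` permutes the at most `m` associated primes of `V` over the
algebra spanned by that image, which is therefore a field with at most `m` automorphisms; `G`
centralizes it, and `K` acts by scalars.

If `N` acts by scalars, conjugation makes `End V` a nontrivial representation of `G ⧸ N` of
dimension `m ^ 2`. Otherwise the image of `N` in `G ⧸ Z`, where `Z` is the group of scalars,
contains a nontrivial abelian normal subgroup `A` of `G ⧸ Z`. Representatives of `A` are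
eigenvectors in `End V` with distinct characters, so `|A| ≤ m ^ 2`, and a simple submodule of `A`
is an absolutely irreducible representation `E` of `G` over a finite field, of dimension `k` with
`2 ^ k ≤ m ^ 2`. If `N` acts on `E` by scalars, then `G ⧸ N` acts nontrivially on the projective
space of `E`. Otherwise the same argument applied to `E` gives a nontrivial action of `G` on at
most `k ^ 2` points; thus `m < k ^ 2`, which forces `k ≤ 15`, and `G ⧸ N` acts nontrivially on a
quotient of a subgroup of the symmetric group of degree at most `15 ^ 2`.
-/

namespace MinDegree

open Module Submodule Group
open scoped Pointwise

universe u v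

/-- Every permutation action of `G` on at most `D` points is trivial. Quantifying over `Fin n` keeps
the notion free of universes. -/
def ActsTriviallyUpTo (G : Type*) [Group G] (D : ℕ) : Prop :=
  ∀ n ≤ D, ∀ φ : G →* Equiv.Perm (Fin n), φ = 1

theorem ActsTriviallyUpTo.eq_one {G X : Type*} [Group G] [Finite X] {D : ℕ}
    (hG : ActsTriviallyUpTo G D) (hX : Nat.card X ≤ D) (φ : G →* Equiv.Perm X) : φ = 1 := by
  let e : Equiv.Perm X ≃* Equiv.Perm (Fin (Nat.card X)) := (Finite.equivFin X).permCongrHom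
  have he : e.toMonoidHom.comp φ = 1 := hG _ hX _
  ext1 g
  exact e.injective ((DFunLike.congr_fun he g).trans e.map_one.symm)

theorem ActsTriviallyUpTo.smul_eq {G X : Type*} [Group G] [Finite X] [MulAction G X] {D : ℕ}
    (hG : ActsTriviallyUpTo G D) (hX : Nat.card X ≤ D) (g : G) (x : X) : g • x = x :=
  congr($(hG.eq_one hX (MulAction.toPermHom G X)) g x)

theorem iSupIndep_restrictScalars {ι L R V : Type*} [Semiring L] [Semiring R] [SMul L R]
    [AddCommMonoid V] [Module L V] [Module R V] [IsScalarTower L R V] {p : ι → Submodule R V}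
    (hp : iSupIndep p) : iSupIndep fun i ↦ (p i).restrictScalars L := by
  intro i
  have := (hp i).map (restrictScalarsLatticeHom L R V)
  simp only [_root_.map_iSup] at this
  exact this

section AssociatedPrimes

variable {L R V : Type*} [CommRing R] [IsArtinianRing R] [AddCommGroup V] [Module R V]

variable (R V) in
theorem iSupIndep_torsionBySet_associatedPrimes :
    iSupIndep fun P : associatedPrimes R V ↦ torsionBySet R V (P : Ideal R) := by
  refine iSupIndep_iff_supIndep.mpr fun s ↦ supIndep_torsionBySet_ideal fun P _ Q _ hPQ ↦ ?_
  have hP : (P : Ideal R).IsMaximal := P.2.isPrime.isMaximal'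
  have hQ : (Q : Ideal R).IsMaximal := Q.2.isPrime.isMaximal'
  exact hP.coprime_of_ne hQ (Subtype.coe_ne_coe.mpr hPQ)

theorem torsionBySet_ne_bot_of_mem_associatedPrimes {P : Ideal R}
    (hP : P ∈ associatedPrimes R V) : torsionBySet R V (P : Set R) ≠ ⊥ := by
  obtain ⟨hprime, x, rfl⟩ := isAssociatedPrime_iff.mp hP
  refine (Submodule.ne_bot_iff _).mpr ⟨x, ?_, ?_⟩
  · exact (mem_torsionBySet_iff _ _).mpr fun r ↦ mem_colon_singleton.mp r.2
  · rintro rfl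
    exact hprime.ne_top (by simp [Ideal.eq_top_iff_one, mem_colon_singleton])

variable [Field L] [SMul L R] [Module L V] [IsScalarTower L R V] [FiniteDimensional L V]

variable (L R V) in
theorem card_associatedPrimes_le_finrank :
    Finite (associatedPrimes R V) ∧ Nat.card (associatedPrimes R V) ≤ finrank L V := by
  let T (P : associatedPrimes R V) := (torsionBySet R V (P : Ideal R)).restrictScalars L
  have hT : iSupIndep T := iSupIndep_restrictScalars (iSupIndep_torsionBySet_associatedPrimes R V)
  have hT_ne (P) : T P ≠ ⊥ := fun h ↦
    torsionBySet_ne_bot_of_mem_associatedPrimes P.2 ((restrictScalars_eq_bot_iff L R V).mp h)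
  have hfin : Finite (associatedPrimes R V) := WellFoundedGT.finite_of_iSupIndep hT hT_ne
  have := Fintype.ofFinite {P // T P ≠ ⊥}
  refine ⟨hfin, ?_⟩
  rw [← Nat.card_congr (Equiv.subtypeUnivEquiv hT_ne), Nat.card_eq_fintype_card]
  exact hT.subtype_ne_bot_le_finrank

end AssociatedPrimes

section Irreducible

variable {G L V : Type*} [Monoid G] [Field L] [AddCommGroup V] [Module L V]
  (ρ : Representation L G V)

theorem nontrivial_of_isIrreducible [hρ : ρ.IsIrreducible] : Nontrivial V := by
  by_contra hV
  rw [not_nontrivial_iff_subsingleton] at hV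
  have : (⊥ : Subrepresentation ρ) = ⊤ :=
    Subrepresentation.toSubmodule_injective (Subsingleton.elim _ _)
  exact bot_ne_top this

variable {ρ} in
theorem eq_bot_or_eq_top_of_isIrreducible [ρ.IsIrreducible] {W : Submodule L V}
    (hW : ∀ g, ∀ w ∈ W, ρ g w ∈ W) : W = ⊥ ∨ W = ⊤ :=
  (eq_bot_or_eq_top (⟨W, hW⟩ : Subrepresentation ρ)).imp (congrArg Subrepresentation.toSubmodule)
    (congrArg Subrepresentation.toSubmodule)

/-- A representation is absolutely irreducible if it is irreducible and only the scalars commute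
with it. This is the form in which both Schur's lemma over `ℂ` and the passage to the endomorphism
field of a simple module are used. -/
structure IsAbsolutelyIrreducible : Prop where
  isIrreducible : ρ.IsIrreducible
  exists_eq_algebraMap (f : End L V) (hf : ∀ g, Commute (ρ g) f) :
    ∃ c : L, f = algebraMap L (End L V) c

end Irreducible

section Clifford

variable {G L R V : Type*} [Group G] [Field L] [CommRing R] [MulSemiringAction G R]
  [AddCommGroup V] [Module L V] [Module R V] {ρ : Representation L G V}

theorem smul_mem_associatedPrimes [IsNoetherianRing R]
    (hρ : ∀ g (r : R) v, ρ g (r • v) = (g • r) • ρ g v) (g : G) {P : Ideal R}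
    (hP : P ∈ associatedPrimes R V) : g • P ∈ associatedPrimes R V := by
  obtain ⟨hprime, x, hx⟩ := isAssociatedPrime_iff.mp hP
  refine isAssociatedPrime_iff.mpr ⟨inferInstance, ρ g x, Ideal.ext fun r ↦ ?_⟩
  have hr : ρ g ((g⁻¹ • r) • x) = r • ρ g x := by rw [hρ, smul_inv_smul]
  rw [Ideal.mem_pointwise_smul_iff_inv_smul_mem, hx, mem_colon_singleton, mem_colon_singleton,
    mem_bot, mem_bot, ← hr, map_eq_zero_iff _ (ρ.apply_bijective g).injective]

variable [FiniteDimensional L V]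

-- `G` fixes each of the at most `dim V` associated primes of `V`, so the torsion of such a prime is
-- a nonzero subrepresentation.
theorem isField_of_faithfulSMul [SMul L R] [IsScalarTower L R V] [IsArtinianRing R]
    [FaithfulSMul R V] [ρ.IsIrreducible] (hG : ActsTriviallyUpTo G (finrank L V))
    (hρ : ∀ g (r : R) v, ρ g (r • v) = (g • r) • ρ g v) : IsField R := by
  have := nontrivial_of_isIrreducible ρ
  obtain ⟨P, hP⟩ := associatedPrimes.nonempty R V
  obtain ⟨hfin, hcard⟩ := card_associatedPrimes_le_finrank L R V
  let X : SubMulAction G (Ideal R) := ⟨associatedPrimes R V, smul_mem_associatedPrimes hρ⟩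
  have : Finite X := hfin
  have hfix (g : G) : g • P = P := congrArg Subtype.val (hG.smul_eq (X := X) hcard g ⟨P, hP⟩)
  have htop : (torsionBySet R V (P : Set R)).restrictScalars L = ⊤ := by
    refine (eq_bot_or_eq_top_of_isIrreducible (ρ := ρ) fun g v hv ↦ ?_).resolve_left ?_
    · refine (mem_torsionBySet_iff _ _).mpr fun ⟨r, hr⟩ ↦ ?_
      have hr' : g⁻¹ • r ∈ P := by
        rwa [← Ideal.mem_pointwise_smul_iff_inv_smul_mem, hfix]
      have hv' : (g⁻¹ • r) • v = 0 := (mem_torsionBySet_iff _ _).mp hv ⟨_, hr'⟩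
      change r • ρ g v = 0
      rw [← smul_inv_smul g r, ← hρ, hv', map_zero]
    · exact (restrictScalars_eq_bot_iff L R V).not.mpr
        (torsionBySet_ne_bot_of_mem_associatedPrimes hP)
  have hbot : P = ⊥ := by
    refine (Submodule.eq_bot_iff _).mpr fun r hr ↦ ?_
    refine eq_of_smul_eq_smul fun v : V ↦ ?_
    have hv : v ∈ (torsionBySet R V (P : Set R)).restrictScalars L := htop ▸ mem_top
    rw [zero_smul]
    exact (mem_torsionBySet_iff _ _).mp hv ⟨r, hr⟩
  have hmax : P.IsMaximal := hP.isPrime.isMaximal'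
  have : Nontrivial R := Submodule.nontrivial_iff R |>.mp ⟨P, ⊤, hmax.ne_top⟩
  exact Ring.isField_iff_maximal_bot.mpr (hbot ▸ hmax)

theorem smul_eq_self_of_isField [Nontrivial V] (hR : IsField R) [Algebra L R]
    [IsScalarTower L R V] [SMulCommClass G L R] (hG : ActsTriviallyUpTo G (finrank L V))
    (g : G) (r : R) : g • r = r := by
  let := hR.toField
  obtain ⟨v, hv⟩ := exists_ne (0 : V)
  have hinj : Function.Injective ((LinearMap.toSpanSingleton R V v).restrictScalars L) :=
    smul_left_injective R hv
  have : FiniteDimensional L R := FiniteDimensional.of_injective _ hinj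
  have hcard : Nat.card (R ≃ₐ[L] R) ≤ finrank L V := by
    rw [Nat.card_eq_fintype_card]
    exact AlgEquiv.card_le.trans (LinearMap.finrank_le_finrank_of_injective hinj)
  have := hG.eq_one hcard ((MulAction.toPermHom _ _).comp (MulSemiringAction.toAlgAut G L R))
  have : MulSemiringAction.toAlgAut G L R g * 1 = 1 := congr($this g 1)
  exact congr($this r)

end Clifford

section Conjugation

variable {G L V : Type*} [Group G] [Field L] [AddCommGroup V] [Module L V]
  (ρ : Representation L G V)

/-- The representation of `G` by conjugation on the endomorphisms of `V`. -/
abbrev conjRep : Representation L G (End L V) := ρ.linHom ρ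

theorem conjRep_mul (g : G) (f h : End L V) :
    conjRep ρ g (f * h) = conjRep ρ g f * conjRep ρ g h := by
  ext v
  simp [Representation.linHom_apply]

theorem conjRep_one (g : G) : conjRep ρ g 1 = 1 := by
  ext v
  simp [Representation.linHom_apply]

theorem conjRep_apply_apply (g h : G) : conjRep ρ g (ρ h) = ρ (g * h * g⁻¹) := by
  ext v
  simp [Representation.linHom_apply]

theorem conjRep_apply_eq_self_iff (g : G) (f : End L V) :
    conjRep ρ g f = f ↔ Commute (ρ g) f :=
  Units.mul_inv_eq_iff_eq_mul (a := ρ g * f) (ρ.asGroupHom g)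

/-- Conjugation on a subalgebra of `End L V` that is stable under it. -/
abbrev conjAction (R : Subalgebra L (End L V)) (hR : ∀ g, ∀ f ∈ R, conjRep ρ g f ∈ R) :
    MulSemiringAction G R where
  smul g r := ⟨conjRep ρ g r, hR g r r.2⟩
  one_smul r := Subtype.ext congr($(map_one (conjRep ρ)) r)
  mul_smul g h r := Subtype.ext congr($(map_mul (conjRep ρ) g h) r)
  smul_zero _ := Subtype.ext (map_zero _)
  smul_add _ _ _ := Subtype.ext (map_add _ _ _)
  smul_one g := Subtype.ext (conjRep_one ρ g)
  smul_mul g r s := Subtype.ext (conjRep_mul ρ g r s)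

theorem conjRep_mem_adjoin {S : Set (End L V)} (hS : ∀ g, ∀ f ∈ S, conjRep ρ g f ∈ S) (g : G)
    {f : End L V} (hf : f ∈ Algebra.adjoin L S) : conjRep ρ g f ∈ Algebra.adjoin L S := by
  let c : End L V →ₐ[L] End L V :=
    AlgHom.ofLinearMap (conjRep ρ g) (conjRep_one ρ g) (conjRep_mul ρ g)
  have : Algebra.adjoin L S ≤ (Algebra.adjoin L S).comap c :=
    Algebra.adjoin_le fun f hf ↦ Algebra.subset_adjoin (hS g f hf)
  exact this hf

variable {ρ}

open scoped IsMulCommutative in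
theorem commute_of_normal_of_commute [FiniteDimensional L V] [ρ.IsIrreducible]
    (hG : ActsTriviallyUpTo G (finrank L V)) (K : Subgroup G) [K.Normal]
    (hK : ∀ a ∈ K, ∀ b ∈ K, Commute (ρ a) (ρ b)) (g : G) {a : G} (ha : a ∈ K) :
    Commute (ρ g) (ρ a) := by
  have := nontrivial_of_isIrreducible ρ
  let R := Algebra.adjoin L (ρ '' K)
  have hR (g : G) : ∀ f ∈ R, conjRep ρ g f ∈ R := by
    refine fun f ↦ conjRep_mem_adjoin ρ ?_ g
    rintro g _ ⟨a, ha, rfl⟩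
    exact ⟨_, ‹K.Normal›.conj_mem a ha g, (conjRep_apply_apply ρ g a).symm⟩
  have : IsMulCommutative R := Algebra.isMulCommutative_adjoin L (by
    rintro _ ⟨a, ha, rfl⟩ _ ⟨b, hb, rfl⟩
    exact hK a ha b hb)
  let := conjAction ρ R hR
  have : SMulCommClass G L R := ⟨fun g c r ↦ Subtype.ext (map_smul (conjRep ρ g) c r.1)⟩
  have : IsArtinianRing R := isArtinian_of_tower L inferInstance
  have hρ (g : G) (r : R) (v : V) : ρ g (r • v) = (g • r) • ρ g v := by
    change ρ g ((r : End L V) v) = conjRep ρ g (r : End L V) (ρ g v)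
    simp [Representation.linHom_apply]
  have hfield : IsField R := isField_of_faithfulSMul hG hρ
  have := smul_eq_self_of_isField (V := V) hfield hG g ⟨ρ a, Algebra.subset_adjoin ⟨a, ha, rfl⟩⟩
  exact (conjRep_apply_eq_self_iff ρ g _).mp (congrArg Subtype.val this)

end Conjugation

section Eigencharacters

variable {G L V : Type*} [Monoid G] [Field L] [AddCommGroup V] [Module L V]
  {ρ : Representation L G V}

theorem exists_eigencharacter {v : V} (hv : v ≠ 0) (h : ∀ g, ∃ c : L, ρ g v = c • v) :
    ∃ χ : G →* L, ∀ g, ρ g v = χ g • v := by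
  choose χ hχ using h
  have hinj : Function.Injective fun c : L ↦ c • v := smul_left_injective L hv
  refine ⟨⟨⟨χ, hinj ?_⟩, fun g h ↦ hinj ?_⟩, hχ⟩
  · simp [← hχ]
  · change χ (g * h) • v = (χ g * χ h) • v
    rw [← hχ, map_mul, Module.End.mul_apply, hχ h, map_smul, hχ g, smul_smul, mul_comm]

theorem linearIndependent_of_eigencharacter_injective {ι : Type*} {v : ι → V}
    (hv : ∀ i, v i ≠ 0) {χ : ι → G →* L} (hχ : Function.Injective χ)
    (h : ∀ i g, ρ g (v i) = χ i g • v i) : LinearIndependent L v := by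
  refine linearIndependent_iff'.mpr fun s c hc i hi ↦ ?_
  obtain ⟨f, hf⟩ : ∃ f : Dual L V, f (v i) ≠ 0 := by
    simpa using (forall_dual_apply_eq_zero_iff L (v i)).not.mpr (hv i)
  have hsum : ∑ j ∈ s, (c j * f (v j)) • (χ j : G → L) = 0 := by
    ext g
    simpa [h, mul_comm, mul_left_comm] using congr(f (ρ g $hc))
  have hχ' : LinearIndependent L fun j ↦ (χ j : G → L) :=
    (linearIndependent_monoidHom G L).comp χ hχ
  exact (mul_eq_zero.mp (linearIndependent_iff'.mp hχ' s _ hsum i hi)).resolve_right hf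

end Eigencharacters

section Scalars

variable {G L V : Type*} [Group G] [Field L] [AddCommGroup V] [Module L V]
  (ρ : Representation L G V)

/-- The normal subgroup of elements that act by scalars, encoded as the kernel of the conjugation
representation (see `mem_scalarSubgroup_iff`). -/
abbrev scalarSubgroup : Subgroup G := (conjRep ρ).ker

variable {ρ}

theorem mem_scalarSubgroup_iff_commute {g : G} :
    g ∈ scalarSubgroup ρ ↔ ∀ f : End L V, Commute (ρ g) f := by
  simp_rw [← conjRep_apply_eq_self_iff]
  exact LinearMap.ext_iff

theorem mem_scalarSubgroup_iff {g : G} :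
    g ∈ scalarSubgroup ρ ↔ ∃ c : L, ρ g = algebraMap L (End L V) c := by
  have : ρ g ∈ Subalgebra.center L (End L V) ↔ ∃ c : L, algebraMap L (End L V) c = ρ g := by
    rw [Algebra.IsCentral.center_eq_bot, Algebra.mem_bot, Set.mem_range]
  simp_rw [mem_scalarSubgroup_iff_commute, eq_comm (a := ρ g), ← this, Subalgebra.mem_center_iff]
  exact forall_congr' fun f ↦ eq_comm

theorem le_scalarSubgroup_of_normal_of_commute [FiniteDimensional L V]
    (hρ : IsAbsolutelyIrreducible ρ) (hG : ActsTriviallyUpTo G (finrank L V)) (K : Subgroup G)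
    [K.Normal] (hK : ∀ a ∈ K, ∀ b ∈ K, Commute (ρ a) (ρ b)) : K ≤ scalarSubgroup ρ := by
  have := hρ.isIrreducible
  exact fun a ha ↦ mem_scalarSubgroup_iff.mpr <| hρ.exists_eq_algebraMap _ fun g ↦
    commute_of_normal_of_commute hG K hK g ha

end Scalars

section Perfect

variable {G : Type*} [Group G] [IsPerfect G]

theorem eq_one_of_commute {M : Type*} [Monoid M] (f : G →* M)
    (hf : ∀ a b, Commute (f a) (f b)) : f = 1 := by
  have hker : commutator G ≤ f.toHomUnits.ker := Subgroup.commutator_le.mpr fun a _ b _ ↦ by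
    rw [MonoidHom.mem_ker, map_commutatorElement, commutatorElement_eq_one_iff_mul_comm]
    exact Units.ext (hf a b)
  ext1 g
  exact congrArg Units.val (MonoidHom.mem_ker.mp (hker (IsPerfect.mem_commutator (g := g))))

variable {L V : Type*} [Field L] [AddCommGroup V] [Module L V] {ρ : Representation L G V}

theorem apply_eq_self_of_forall_exists_smul {v : V} (h : ∀ g, ∃ c : L, ρ g v = c • v) (g : G) :
    ρ g v = v := by
  obtain rfl | hv := eq_or_ne v 0
  · exact map_zero _
  obtain ⟨χ, hχ⟩ := exists_eigencharacter hv h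
  rw [hχ, eq_one_of_commute χ fun _ _ ↦ Commute.all _ _, MonoidHom.one_apply, one_smul]

end Perfect

section AbelianNormal

variable {G L V : Type*} [Group G] [Field L] [AddCommGroup V] [Module L V]
  {ρ : Representation L G V}

theorem exists_conjRep_eq_smul_of_commute {x y : G}
    (h : Commute (x : G ⧸ scalarSubgroup ρ) y) : ∃ c : L, conjRep ρ x (ρ y) = c • ρ y := by
  have hmem : x * y * x⁻¹ * y⁻¹ ∈ scalarSubgroup ρ := by
    rw [← QuotientGroup.eq_one_iff]
    exact commutatorElement_eq_one_iff_commute.mpr h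
  obtain ⟨c, hc⟩ := mem_scalarSubgroup_iff.mp hmem
  refine ⟨c, ?_⟩
  rw [conjRep_apply_apply, Algebra.smul_def, ← hc, ← map_mul, inv_mul_cancel_right]

theorem center_quotient_scalarSubgroup_eq_bot [IsPerfect G] (hρ : IsAbsolutelyIrreducible ρ) :
    Subgroup.center (G ⧸ scalarSubgroup ρ) = ⊥ := by
  refine (Subgroup.eq_bot_iff_forall _).mpr fun y hy ↦ ?_
  obtain ⟨y, rfl⟩ := QuotientGroup.mk_surjective y
  have hfix := apply_eq_self_of_forall_exists_smul (ρ := conjRep ρ) (v := ρ y) fun x ↦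
    exists_conjRep_eq_smul_of_commute (Subgroup.mem_center_iff.mp hy x)
  rw [QuotientGroup.eq_one_iff, mem_scalarSubgroup_iff]
  exact hρ.exists_eq_algebraMap _ fun g ↦ (conjRep_apply_eq_self_iff ρ g _).mp (hfix g)

-- The elements of `B` that commute with `ρ(B)` form a normal subgroup with commutative image.
theorem mem_scalarSubgroup_of_forall_commute [FiniteDimensional L V]
    (hρ : IsAbsolutelyIrreducible ρ) (hG : ActsTriviallyUpTo G (finrank L V)) {B : Subgroup G}
    [B.Normal] {k : G} (hk : k ∈ B) (hkB : ∀ x ∈ B, Commute (ρ x) (ρ k)) :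
    k ∈ scalarSubgroup ρ := by
  let π := ρ.asGroupHom.rangeRestrict
  have hπ (x y : G) : π x * π y = π y * π x ↔ Commute (ρ x) (ρ y) := by
    rw [Subtype.ext_iff, Units.ext_iff]
    rfl
  have : (B.map π).Normal := Subgroup.Normal.map ‹_› π ρ.asGroupHom.rangeRestrict_surjective
  let K : Subgroup G := B ⊓ (Subgroup.centralizer (B.map π)).comap π
  have hK (x : G) (hx : x ∈ K) : ∀ y ∈ B, Commute (ρ y) (ρ x) := by
    intro y hy
    exact (hπ y x).mp (hx.2 _ (Subgroup.mem_map_of_mem π hy))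
  refine le_scalarSubgroup_of_normal_of_commute hρ hG K (fun a ha b hb ↦ hK b hb a ha.1) ⟨hk, ?_⟩
  rintro _ ⟨x, hx, rfl⟩
  exact (hπ x k).mpr (hkB x hx)

theorem mk_eq_mk_of_conjRep_eq_smul [FiniteDimensional L V]
    (hρ : IsAbsolutelyIrreducible ρ) (hG : ActsTriviallyUpTo G (finrank L V)) {B : Subgroup G}
    [B.Normal] {y y' : G} (hy : y ∈ B) (hy' : y' ∈ B) {χ : B → L}
    (h : ∀ b : B, conjRep ρ b (ρ y) = χ b • ρ y) (h' : ∀ b : B, conjRep ρ b (ρ y') = χ b • ρ y') :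
    (y : G ⧸ scalarSubgroup ρ) = y' := by
  refine QuotientGroup.eq.mpr <| mem_scalarSubgroup_of_forall_commute hρ hG
    (B.mul_mem (B.inv_mem hy) hy') fun x hx ↦ (conjRep_apply_eq_self_iff ρ x _).mp ?_
  have hunit : IsUnit (conjRep ρ x (ρ y)) := by
    rw [conjRep_apply_apply]
    exact (Group.isUnit _).map ρ
  refine hunit.mul_left_cancel ?_
  rw [← conjRep_mul, h ⟨x, hx⟩, smul_mul_assoc, ← map_mul, mul_inv_cancel_left, h' ⟨x, hx⟩]

theorem card_le_finrank_sq_of_isMulCommutative [FiniteDimensional L V]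
    (hρ : IsAbsolutelyIrreducible ρ) (hG : ActsTriviallyUpTo G (finrank L V))
    (A : Subgroup (G ⧸ scalarSubgroup ρ)) [A.Normal] [IsMulCommutative A] :
    Finite A ∧ Nat.card A ≤ finrank L V ^ 2 := by
  have := hρ.isIrreducible
  have := nontrivial_of_isIrreducible ρ
  let B : Subgroup G := A.comap (QuotientGroup.mk' (scalarSubgroup ρ))
  let y (a : A) : G := (a : G ⧸ scalarSubgroup ρ).out
  have hy (a : A) : (y a : G ⧸ scalarSubgroup ρ) = a := Quotient.out_eq' _
  have hyB (a : A) : y a ∈ B := by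
    change (y a : G ⧸ scalarSubgroup ρ) ∈ A
    exact hy a ▸ a.2
  have hne (a : A) : ρ (y a) ≠ 0 := ((Group.isUnit _).map ρ).ne_zero
  have hcomm (a : A) (b : B) : Commute ((b : G) : G ⧸ scalarSubgroup ρ) (y a) := by
    rw [hy]
    exact congrArg Subtype.val (mul_comm' (⟨_, b.2⟩ : A) a)
  choose χ hχ using fun a : A ↦ exists_eigencharacter (ρ := (conjRep ρ).comp B.subtype) (hne a)
    fun b ↦ exists_conjRep_eq_smul_of_commute (hcomm a b)
  have hχ_inj : Function.Injective χ := by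
    intro a a' h
    refine Subtype.ext ?_
    rw [← hy a, ← hy a']
    exact mk_eq_mk_of_conjRep_eq_smul hρ hG (hyB a) (hyB a') (hχ a) (h ▸ hχ a')
  have hli : LinearIndependent L fun a ↦ ρ (y a) :=
    linearIndependent_of_eigencharacter_injective hne hχ_inj hχ
  have hfin : Finite A := hli.finite
  refine ⟨hfin, ?_⟩
  have := Fintype.ofFinite A
  rw [Nat.card_eq_fintype_card, sq, ← finrank_linearMap L L V V]
  exact hli.fintype_card_le_finrank

end AbelianNormal

section EndomorphismField

open scoped MonoidAlgebra

variable {G E : Type*} [Group G] [AddCommGroup E] [Module ℤ[G] E]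

variable (G E) in
/-- A `ℤ[G]`-module viewed as a representation over a field of `ℤ[G]`-endomorphisms. -/
noncomputable abbrev repOverEnd (F : Type*) [Field F] [Module F E] [SMulCommClass ℤ[G] F E] :
    Representation F G E :=
  (Module.toModuleEnd F (S := ℤ[G]) E).toMonoidHom.comp (MonoidAlgebra.of ℤ G)

theorem isAbsolutelyIrreducible_repOverEnd [IsSimpleModule ℤ[G] E] {F : Type*} [Field F]
    [Module F E] [SMulCommClass ℤ[G] F E] (hF : ∀ f : End ℤ[G] E, ∃ c : F, ∀ x, f x = c • x) :
    IsAbsolutelyIrreducible (repOverEnd G E F) := by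
  have := IsSimpleModule.nontrivial ℤ[G] E
  have : Nontrivial (Subrepresentation (repOverEnd G E F)) :=
    ⟨⊥, ⊤, fun h ↦ bot_ne_top (α := Submodule F E) congr(Subrepresentation.toSubmodule $h)⟩
  refine ⟨⟨fun W ↦ ?_⟩, fun f hf ↦ ?_⟩
  · let W' : Submodule ℤ[G] E := MonoidAlgebra.submoduleOfSMulMem
      W.toSubmodule.toAddSubgroup.toIntSubmodule fun g ↦ W.apply_mem_toSubmodule g
    refine (eq_bot_or_eq_top W').imp (fun h ↦ ?_) fun h ↦ ?_
    · exact Subrepresentation.toSubmodule_injective (SetLike.ext fun x ↦ SetLike.ext_iff.mp h x)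
    · exact Subrepresentation.toSubmodule_injective (SetLike.ext fun x ↦ SetLike.ext_iff.mp h x)
  · obtain ⟨c, hc⟩ := hF <| MonoidAlgebra.equivariantOfLinearOfComm
      f.toAddMonoidHom.toIntLinearMap fun g v ↦ congr($(hf g) v).symm
    exact ⟨c, LinearMap.ext hc⟩

theorem exists_isAbsolutelyIrreducible_of_finite {M : Type v} [AddCommGroup M] [Finite M]
    [Nontrivial M] [Module ℤ[G] M]
    (hM : ∀ v : M, (∀ g, MonoidAlgebra.of ℤ G g • v = v) → v = 0) :
    ∃ (F E : Type v) (_ : Field F) (_ : AddCommGroup E) (_ : Module F E)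
      (σ : Representation F G E),
      IsAbsolutelyIrreducible σ ∧ σ ≠ 1 ∧ Finite E ∧ Nat.card E ≤ Nat.card M := by
  classical
  obtain ⟨E, hE, -⟩ := (eq_bot_or_exists_atom_le (⊤ : Submodule ℤ[G] M)).resolve_left top_ne_bot
  have : IsSimpleModule ℤ[G] E := isSimpleModule_iff_isAtom.mpr hE
  have : Finite (End ℤ[G] E) := DFunLike.finite _
  let : Field (End ℤ[G] E) := littleWedderburn _
  refine ⟨End ℤ[G] E, E, inferInstance, inferInstance, inferInstance,
    repOverEnd G E (End ℤ[G] E), isAbsolutelyIrreducible_repOverEnd fun f ↦ ⟨f, fun _ ↦ rfl⟩,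
    fun h ↦ ?_, inferInstance, Nat.card_le_card_of_injective _ Subtype.val_injective⟩
  obtain ⟨v, hv, hv0⟩ := exists_mem_ne_zero_of_ne_bot hE.ne_bot
  exact hv0 (hM v fun g ↦ congr(($h g ⟨v, hv⟩ : M)))

end EndomorphismField

section Descent

theorem exists_normal_isMulCommutative_le {H : Type*} [Group H] (M : Subgroup H) [M.Normal]
    [Group.IsSolvable M] (hM : M ≠ ⊥) :
    ∃ A ≤ M, A ≠ ⊥ ∧ A.Normal ∧ IsMulCommutative A := by
  classical
  have hsolv : ∃ n, derivedSeries M n = ⊥ := Group.IsSolvable.solvable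
  obtain ⟨n, hn⟩ : ∃ n, Nat.find hsolv = n + 1 := by
    refine Nat.exists_eq_succ_of_ne_zero fun h ↦ hM ?_
    have hbot := Nat.find_spec hsolv
    rw [h, derivedSeries_zero] at hbot
    have := Subgroup.subsingleton_iff.mp (subsingleton_of_bot_eq_top hbot.symm)
    exact M.eq_bot_of_subsingleton
  let D := derivedSeries M n
  refine ⟨D.map M.subtype, Subgroup.map_subtype_le D, ?_, ?_, ?_⟩
  · rw [Ne, Subgroup.map_eq_bot_iff_of_injective _ M.subtype_injective]
    exact Nat.find_min hsolv (by lia)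
  · have : D.Characteristic := inferInstance
    infer_instance
  · have : IsMulCommutative D := by
      rw [← Subgroup.commutator_self_eq_bot_iff, ← derivedSeries_succ, ← hn]
      exact Nat.find_spec hsolv
    infer_instance

open scoped IsMulCommutative in
theorem exists_finite_isAbsolutelyIrreducible {G : Type u} {L V : Type*} [Group G]
    [IsPerfect G] [Field L] [AddCommGroup V] [Module L V] [FiniteDimensional L V]
    {ρ : Representation L G V} (hρ : IsAbsolutelyIrreducible ρ)
    (hG : ActsTriviallyUpTo G (finrank L V))
    {N : Subgroup G} [N.Normal] [Group.IsSolvable N] (hN : ¬N ≤ scalarSubgroup ρ) :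
    ∃ (F E : Type u) (_ : Field F) (_ : AddCommGroup E) (_ : Module F E)
      (σ : Representation F G E),
      IsAbsolutelyIrreducible σ ∧ σ ≠ 1 ∧ Finite E ∧ Nat.card E ≤ finrank L V ^ 2 := by
  let π := QuotientGroup.mk' (scalarSubgroup ρ)
  have : (N.map π).Normal := Subgroup.Normal.map ‹_› π (QuotientGroup.mk'_surjective _)
  have : Group.IsSolvable (N.map π) :=
    Group.isSolvable_of_surjective (π.subgroupMap_surjective N)
  obtain ⟨A, -, hA, _, _⟩ := exists_normal_isMulCommutative_le (N.map π) (by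
    rwa [Ne, Subgroup.map_eq_bot_iff, QuotientGroup.ker_mk'])
  obtain ⟨_, hcard⟩ := card_le_finrank_sq_of_isMulCommutative hρ hG A
  let := MulDistribMulAction.compHom A ((MulAut.conjNormal (H := A)).comp π)
  let τ := Representation.ofMulDistribMulAction G A
  have : Nontrivial A := (Subgroup.nontrivial_iff_ne_bot A).mpr hA
  have : Finite τ.asModule := inferInstanceAs (Finite (Additive A))
  have : Nontrivial τ.asModule := inferInstanceAs (Nontrivial (Additive A))
  obtain ⟨F, E, _, _, _, σ, hσ, hσ1, hE, hcardE⟩ :=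
    exists_isAbsolutelyIrreducible_of_finite (G := G) (M := τ.asModule) fun v hv ↦ by
      let a : A := (τ.asModuleEquiv v).toMul
      have ha : (a : G ⧸ scalarSubgroup ρ) ∈ Subgroup.center (G ⧸ scalarSubgroup ρ) := by
        refine Subgroup.mem_center_iff.mpr fun x ↦ ?_
        obtain ⟨g, rfl⟩ := QuotientGroup.mk_surjective x
        have hfix : τ g (τ.asModuleEquiv v) = τ.asModuleEquiv v := by
          rw [← Representation.asAlgebraHom_of, ← Representation.asModuleEquiv_map_smul, hv g]
        exact mul_inv_eq_iff_eq_mul.mp congr(((Additive.toMul $hfix : A) : G ⧸ scalarSubgroup ρ))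
      rw [center_quotient_scalarSubgroup_eq_bot hρ, Subgroup.mem_bot] at ha
      exact Subtype.ext ha
  exact ⟨F, E, _, _, _, σ, hσ, hσ1, hE, hcardE.trans hcard⟩

end Descent

section Numerics

theorem sq_lt_two_pow_succ (m : ℕ) : m ^ 2 < 2 ^ (m + 1) := by
  obtain hm | hm := lt_or_ge m 3
  · interval_cases m <;> norm_num
  induction m, hm using Nat.le_induction with
  | base => norm_num
  | succ n hn ih => rw [pow_succ 2 (n + 1)]; nlinarith

theorem pow_four_le_two_pow {m : ℕ} (hm : 16 ≤ m) : m ^ 4 ≤ 2 ^ m := by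
  induction m, hm using Nat.le_induction with
  | base => norm_num
  | succ n hn ih =>
    have h₁ : 16 * n ≤ n ^ 2 := by nlinarith
    have h₂ : 16 * n ^ 2 ≤ n ^ 3 := by nlinarith
    have h₃ : 16 * n ^ 3 ≤ n ^ 4 := by nlinarith [pow_nonneg n.zero_le 3]
    rw [pow_succ 2]
    nlinarith

theorem two_pow_finrank_le_card (F E : Type*) [Field F] [AddCommGroup E] [Module F E] [Finite E] :
    2 ^ finrank F E ≤ Nat.card E := by
  obtain hE | hE := subsingleton_or_nontrivial E
  · simp [finrank_zero_of_subsingleton]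
  · obtain ⟨v, hv⟩ := exists_ne (0 : E)
    have : Finite F := Finite.of_injective _ (smul_left_injective F hv)
    rw [Module.natCard_eq_pow_finrank (K := F)]
    exact Nat.pow_le_pow_left Finite.one_lt_card _

end Numerics

section Permutations

theorem ActsTriviallyUpTo.mono {G : Type*} [Group G] {D D' : ℕ} (hG : ActsTriviallyUpTo G D)
    (h : D' ≤ D) : ActsTriviallyUpTo G D' :=
  fun n hn ↦ hG n (hn.trans h)

theorem ActsTriviallyUpTo.representation_eq_one {G F E : Type*} [Group G] [Field F] [AddCommGroup E]
    [Module F E] [Finite E] {D : ℕ} (hG : ActsTriviallyUpTo G D) (hE : Nat.card E ≤ D)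
    (σ : Representation F G E) : σ = 1 := by
  have := hG.eq_one hE ((MulAction.toPermHom (E →ₗ[F] E)ˣ E).comp σ.asGroupHom)
  ext g v
  exact congr($this g v)

theorem ActsTriviallyUpTo.of_quotient {G : Type*} [Group G] [IsPerfect G] {N : Subgroup G}
    [N.Normal] [Group.IsSolvable N] {D : ℕ} (h : ActsTriviallyUpTo (G ⧸ N) D.factorial) :
    ActsTriviallyUpTo G D := by
  intro n hn φ
  let f := φ.rangeRestrict
  have hf : Function.Surjective f := φ.rangeRestrict_surjective
  have := IsPerfect.ofSurjective hf
  have : (N.map f).Normal := Subgroup.Normal.map ‹_› f hf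
  let q : G ⧸ N →* φ.range ⧸ N.map f := QuotientGroup.map N _ f (Subgroup.le_comap_map f N)
  have hcard : Nat.card (φ.range ⧸ N.map f) ≤ D.factorial :=
    calc Nat.card (φ.range ⧸ N.map f)
      _ ≤ Nat.card φ.range := Nat.card_le_card_of_surjective _ (QuotientGroup.mk'_surjective _)
      _ ≤ Nat.card (Equiv.Perm (Fin n)) := Nat.card_le_card_of_injective _ Subtype.val_injective
      _ = n.factorial := by rw [Nat.card_perm, Nat.card_fin]
      _ ≤ D.factorial := Nat.factorial_le hn
  have hq := h.eq_one hcard ((MulAction.toPermHom _ _).comp q)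
  have htop : N.map f = ⊤ := by
    refine (Subgroup.eq_top_iff' _).mpr fun x ↦ ?_
    obtain ⟨g, rfl⟩ := hf x
    rw [← QuotientGroup.eq_one_iff]
    exact (mul_one (q g)).symm.trans congr($hq g 1)
  have hsolv : Group.IsSolvable φ.range := by
    have := Group.isSolvable_of_surjective (f.subgroupMap_surjective N)
    rw [htop] at this
    exact Group.isSolvable_of_surjective (f := (Subgroup.topEquiv (G := φ.range)).toMonoidHom)
      Subgroup.topEquiv.surjective
  have : Subsingleton φ.range := by
    by_contra hφ
    rw [not_subsingleton_iff_nontrivial] at hφ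
    exact IsPerfect.not_isSolvable φ.range hsolv
  ext1 g
  exact congrArg Subtype.val (Subsingleton.elim (f g) 1)

open scoped LinearAlgebra.Projectivization

theorem card_projectivization_le (F E : Type*) [Field F] [AddCommGroup E] [Module F E] [Finite E] :
    Finite (ℙ F E) ∧ Nat.card (ℙ F E) ≤ Nat.card E := by
  have hrep : Function.Injective (Projectivization.rep : ℙ F E → E) := fun x y h ↦ by
    rw [← x.mk_rep, ← y.mk_rep]
    congr 1
  exact ⟨Finite.of_injective _ hrep, Nat.card_le_card_of_injective _ hrep⟩

theorem ActsTriviallyUpTo.eq_one_of_le_scalarSubgroup {G F E : Type*} [Group G] [IsPerfect G]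
    [Field F] [AddCommGroup E] [Module F E] [Finite E] {N : Subgroup G} [N.Normal] {D : ℕ}
    (hG : ActsTriviallyUpTo (G ⧸ N) D) (hE : Nat.card E ≤ D) {σ : Representation F G E}
    (hN : N ≤ scalarSubgroup σ) : σ = 1 := by
  obtain ⟨_, hcard⟩ := card_projectivization_le F E
  let φ : G →* Equiv.Perm (ℙ F E) := (MulAction.toPermHom (E →ₗ[F] E)ˣ (ℙ F E)).comp σ.asGroupHom
  have hφ_mk (g : G) {v : E} (hv : v ≠ 0) :
      φ g (.mk F v hv) = .mk F v hv ↔ ∃ c : F, c • v = σ g v :=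
    Projectivization.mk_eq_mk_iff' _ _ _ _ _
  have hφN : N ≤ φ.ker := fun g hg ↦ by
    obtain ⟨c, hc⟩ := mem_scalarSubgroup_iff.mp (hN hg)
    refine MonoidHom.mem_ker.mpr (Equiv.ext fun x ↦ ?_)
    induction x using Projectivization.ind with
    | h v hv => exact (hφ_mk g hv).mpr ⟨c, congr($hc.symm v)⟩
  have hφ1 := hG.eq_one (hcard.trans hE) (QuotientGroup.lift N φ hφN)
  ext g v
  refine apply_eq_self_of_forall_exists_smul (fun g ↦ ?_) g
  obtain rfl | hv := eq_or_ne v 0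
  · exact ⟨0, by simp⟩
  · obtain ⟨c, hc⟩ := (hφ_mk g hv).mp congr($hφ1 g (.mk F v hv))
    exact ⟨c, hc.symm⟩

end Permutations

section Dichotomy

-- Two descents: `k` is logarithmic in `m`, and the second descent gives a nontrivial action on at
-- most `k ^ 2` points, so `m < k ^ 2` bounds `k`.
theorem ActsTriviallyUpTo.not_of_not_le_scalarSubgroup {G L V : Type*} [Group G] [IsPerfect G]
    [Field L] [AddCommGroup V] [Module L V] [FiniteDimensional L V] {ρ : Representation L G V}
    (hρ : IsAbsolutelyIrreducible ρ) (hG : ActsTriviallyUpTo G (finrank L V))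
    {N : Subgroup G} [N.Normal] [Group.IsSolvable N] (hN : ¬N ≤ scalarSubgroup ρ)
    (hGN : ActsTriviallyUpTo (G ⧸ N) (finrank L V ^ 2)) : ¬ActsTriviallyUpTo G (15 ^ 2) := by
  obtain ⟨F, E, _, _, _, σ, hσ, hσ1, _, hE⟩ := exists_finite_isAbsolutelyIrreducible hρ hG hN
  set m := finrank L V
  set k := finrank F E
  have hkm : 2 ^ k ≤ m ^ 2 := (two_pow_finrank_le_card F E).trans hE
  have hk_le : k ≤ m := by
    by_contra! h
    exact (sq_lt_two_pow_succ m).not_ge ((Nat.pow_le_pow_right two_pos h).trans hkm)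
  have hNσ : ¬N ≤ scalarSubgroup σ := fun h ↦ hσ1 (hGN.eq_one_of_le_scalarSubgroup hE h)
  obtain ⟨F', E', _, _, _, τ, -, hτ1, _, hE'⟩ :=
    exists_finite_isAbsolutelyIrreducible hσ (hG.mono hk_le) hNσ
  have hk_sq : ¬ActsTriviallyUpTo G (k ^ 2) := fun h ↦ hτ1 (h.representation_eq_one hE' τ)
  have hk_lt : k ≤ 15 := by
    by_contra! h
    refine hk_sq (hG.mono ((Nat.pow_le_pow_iff_left two_ne_zero).mp ?_))
    rw [← pow_mul]
    exact (pow_four_le_two_pow h).trans hkm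
  exact fun h ↦ hk_sq (h.mono (Nat.pow_le_pow_left hk_lt 2))

end Dichotomy

section PermutationRepresentations

/-- The permutation representation over `k` attached to an action `φ` of `G` on `X`. Unlike
`Representation.ofMulAction`, it takes the action as a homomorphism rather than an instance. -/
noncomputable def permRep (k : Type*) [Field k] {G X : Type*} [Group G] (φ : G →* Equiv.Perm X) :
    Representation k G (X →₀ k) where
  toFun g := Finsupp.lmapDomain k k (φ g)
  map_one' := by ext; simp
  map_mul' g h := by ext; simp

variable {k G X : Type*} [Field k] [Group G] {φ : G →* Equiv.Perm X}

theorem permRep_single (g : G) (x : X) :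
    permRep k φ g (.single x 1) = .single (φ g x) 1 :=
  Finsupp.mapDomain_single

theorem permRep_eq_one_iff : permRep k φ = 1 ↔ φ = 1 := by
  refine ⟨fun h ↦ MonoidHom.ext fun g ↦ Equiv.ext fun x ↦ ?_, fun h ↦ ?_⟩
  · refine Finsupp.single_left_injective (one_ne_zero (α := k)) ?_
    exact (permRep_single g x).symm.trans congr($h g _)
  · subst h
    exact MonoidHom.ext fun _ ↦ Finsupp.lmapDomain_id k k

theorem eq_one_of_isIrreducible_permRep [(permRep k φ).IsIrreducible] : φ = 1 := by
  let ε : (X →₀ k) →ₗ[k] k := Finsupp.linearCombination k fun _ ↦ 1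
  have hε_single (x : X) : ε (.single x 1) = 1 := by simp [ε]
  have hε (g : G) : ε ∘ₗ permRep k φ g = ε := by
    ext x
    simp [permRep_single, hε_single]
  refine MonoidHom.ext fun g ↦ Equiv.ext fun x ↦ ?_
  obtain hbot | htop := eq_bot_or_eq_top_of_isIrreducible (ρ := permRep k φ)
    (W := LinearMap.ker ε) fun g f hf ↦ congr($(hε g) f).trans hf
  · refine Finsupp.single_left_injective (one_ne_zero (α := k)) ?_
    exact LinearMap.ker_eq_bot.mp hbot ((hε_single _).trans (hε_single _).symm)
  · exact absurd ((hε_single x).symm.trans congr($(LinearMap.ker_eq_top.mp htop) _)) one_ne_zero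

end PermutationRepresentations

section NontrivialRepresentations

/-- `G` has a nontrivial representation of dimension `d` over `k`. -/
def HasNontrivialRep (k G : Type*) [Field k] [Group G] (d : ℕ) : Prop :=
  ∃ φ : G →* GL (Fin d) k, φ.range ≠ ⊥

variable {k G V : Type*} [Field k] [Group G] [AddCommGroup V] [Module k V]

theorem HasNontrivialRep.of_representation [FiniteDimensional k V] {ρ : Representation k G V}
    (hρ : ρ ≠ 1) : HasNontrivialRep k G (finrank k V) := by
  let b := Module.finBasis k V
  let φ : G →* GL (Fin (finrank k V)) k :=
    ((LinearMap.toMatrixAlgEquiv b : End k V →* Matrix _ _ k).comp ρ).toHomUnits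
  refine ⟨φ, fun h ↦ hρ ?_⟩
  ext1 g
  refine (LinearMap.toMatrixAlgEquiv b).injective ?_
  rw [MonoidHom.one_apply, map_one]
  exact congrArg Units.val (DFunLike.congr_fun (MonoidHom.range_eq_bot_iff.mp h) g)

theorem HasNontrivialRep.exists_representation {d : ℕ} (h : HasNontrivialRep k G d) :
    ∃ ρ : Representation k G (Fin d → k), ρ ≠ 1 := by
  obtain ⟨φ, hφ⟩ := h
  let ρ : Representation k G (Fin d → k) :=
    (toLinAlgEquiv' : Matrix _ _ k ≃ₐ[k] End k (Fin d → k)).toMonoidHom.comp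
      ((Units.coeHom _).comp φ)
  refine ⟨ρ, fun h ↦ hφ (MonoidHom.range_eq_bot_iff.mpr (MonoidHom.ext fun g ↦ ?_))⟩
  refine Units.ext (Matrix.toLinAlgEquiv'.injective ?_)
  rw [MonoidHom.one_apply, Units.val_one, map_one]
  exact congr($h g)

theorem isAbsolutelyIrreducible_of_isAlgClosed [IsAlgClosed k] [FiniteDimensional k V]
    {ρ : Representation k G V} (hρ : ρ.IsIrreducible) : IsAbsolutelyIrreducible ρ := by
  refine ⟨hρ, fun f hf ↦ ?_⟩
  let f' : Representation.IntertwiningMap ρ ρ := ⟨f, fun g ↦ (hf g).eq.symm⟩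
  obtain ⟨c, hc⟩ :=
    Representation.IsIrreducible.algebraMap_intertwiningMap_bijective_of_isAlgClosed.2 f'
  exact ⟨c, congrArg Representation.IntertwiningMap.toLinearMap hc.symm⟩

variable [IsPerfect G]

theorem eq_one_of_isTrivial_quotient {ρ : Representation k G V} (W : Submodule k V)
    (hW : ∀ g, ∀ w ∈ W, ρ g w = w) (hVW : ∀ g v, ρ g v - v ∈ W) : ρ = 1 := by
  refine eq_one_of_commute ρ fun a b ↦ LinearMap.ext fun v ↦ ?_
  have h (a b : G) : ρ a (ρ b v) = ρ a v + ρ b v - v := by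
    rw [← sub_add_cancel (ρ b v) v, map_add, hW a _ (hVW b v)]
    abel
  change ρ a (ρ b v) = ρ b (ρ a v)
  rw [h, h, add_comm]

theorem isIrreducible_of_forall_lt_finrank [FiniteDimensional k V] {ρ : Representation k G V}
    (hρ : ρ ≠ 1) (hmin : ∀ e < finrank k V, ¬HasNontrivialRep k G e) : ρ.IsIrreducible := by
  have : Nontrivial V := by
    by_contra hV
    rw [not_nontrivial_iff_subsingleton] at hV
    exact hρ (MonoidHom.ext fun g ↦ Subsingleton.elim _ _)
  have : Nontrivial (Subrepresentation ρ) :=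
    ⟨⊥, ⊤, fun h ↦ bot_ne_top (α := Submodule k V) congr(Subrepresentation.toSubmodule $h)⟩
  refine ⟨fun W ↦ or_iff_not_imp_left.mpr fun hbot ↦ by_contra fun htop ↦ hρ ?_⟩
  have htriv {U : Type _} [AddCommGroup U] [Module k U] [FiniteDimensional k U]
      (σ : Representation k G U) (hU : finrank k U < finrank k V) : σ = 1 :=
    by_contra fun hσ ↦ hmin _ hU (.of_representation hσ)
  have hW_pos : 0 < finrank k W.toSubmodule := by
    rw [finrank_pos_iff, nontrivial_iff_ne_bot]
    exact fun h ↦ hbot (Subrepresentation.toSubmodule_injective h)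
  have hW := htriv W.toRepresentation
    (finrank_lt fun h ↦ htop (Subrepresentation.toSubmodule_injective h))
  have hVW := htriv (ρ.quotient W.toSubmodule W.apply_mem_toSubmodule) (by
    have := W.toSubmodule.finrank_quotient_add_finrank
    lia)
  refine eq_one_of_isTrivial_quotient W.toSubmodule
    (fun g w hw ↦ congr(($hW g ⟨w, hw⟩ : V))) fun g v ↦ ?_
  exact (Submodule.Quotient.eq _).mp congr($hVW g (Submodule.Quotient.mk v))

theorem actsTriviallyUpTo_of_forall_lt {m : ℕ} (hm : ∀ e < m, ¬HasNontrivialRep k G e) :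
    ActsTriviallyUpTo G m := by
  intro n hn φ
  by_contra hφ
  have hρ : permRep k φ ≠ 1 := fun h ↦ hφ (permRep_eq_one_iff.mp h)
  have := isIrreducible_of_forall_lt_finrank hρ fun e he ↦ hm e (by
    rw [finrank_finsupp_self, Fintype.card_fin] at he
    lia)
  exact hφ (eq_one_of_isIrreducible_permRep (k := k))

theorem HasNontrivialRep.quotient_of_le_scalarSubgroup [FiniteDimensional k V]
    {ρ : Representation k G V} (hρ : ρ ≠ 1) {N : Subgroup G} [N.Normal]
    (hN : N ≤ scalarSubgroup ρ) : HasNontrivialRep k (G ⧸ N) (finrank k V ^ 2) := by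
  have hlift : (QuotientGroup.lift N (conjRep ρ) hN : Representation k (G ⧸ N) _) ≠ 1 := by
    refine fun h ↦ hρ (eq_one_of_commute ρ fun a b ↦ ?_)
    exact mem_scalarSubgroup_iff_commute.mp (MonoidHom.mem_ker.mpr congr($h a)) _
  rw [sq, ← finrank_linearMap k k V V]
  exact .of_representation hlift

end NontrivialRepresentations

end MinDegree

open Module MinDegree in
theorem min_degree_of_perfect_quotient_general {k : Type*} [Field k] [IsAlgClosed k]
    {G : Type*} [Group G] [Group.IsPerfect G] (N : Subgroup G) [N.Normal] [Group.IsSolvable N]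
    {d : ℕ} (h : HasNontrivialRep k G d) :
    ∃ e ≤ (15 ^ 2).factorial * d ^ 2, HasNontrivialRep k (G ⧸ N) e := by
  classical
  obtain ⟨m, hm, hmin, hmd⟩ : ∃ m, HasNontrivialRep k G m ∧
      (∀ e < m, ¬HasNontrivialRep k G e) ∧ m ≤ d :=
    ⟨_, Nat.find_spec ⟨d, h⟩, fun _ ↦ Nat.find_min ⟨d, h⟩, Nat.find_min' _ h⟩
  obtain ⟨ρ, hρ⟩ := hm.exists_representation
  have hdim : finrank k (Fin m → k) = m := finrank_fin_fun k
  have hirr := isIrreducible_of_forall_lt_finrank hρ (hdim.symm ▸ hmin)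
  have hm_pos : 0 < m := hdim ▸ finrank_pos_iff.mpr (nontrivial_of_isIrreducible ρ)
  have hsq_le : m ^ 2 ≤ (15 ^ 2).factorial * d ^ 2 :=
    (Nat.pow_le_pow_left hmd 2).trans (Nat.le_mul_of_pos_left _ (Nat.factorial_pos _))
  have hfact_le : (15 ^ 2).factorial ≤ (15 ^ 2).factorial * d ^ 2 :=
    Nat.le_mul_of_pos_right _ (pow_pos (hm_pos.trans_le hmd) 2)
  by_cases hN : N ≤ scalarSubgroup ρ
  · exact ⟨m ^ 2, hsq_le, hdim ▸ HasNontrivialRep.quotient_of_le_scalarSubgroup hρ hN⟩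
  by_contra! hnone
  have hGN := actsTriviallyUpTo_of_forall_lt fun e he ↦ hnone e he.le
  have hG : ActsTriviallyUpTo G (finrank k (Fin m → k)) :=
    hdim.symm ▸ actsTriviallyUpTo_of_forall_lt hmin
  exact hG.not_of_not_le_scalarSubgroup (isAbsolutelyIrreducible_of_isAlgClosed hirr) hN
    (hdim.symm ▸ hGN.mono hsq_le) (hGN.mono hfact_le).of_quotient

/-- For a nontrivial finite perfect group `G` with solvable normal subgroup `N`:
if `G` has a nontrivial complex representation of dimension `d`, then `G/N` has a
nontrivial complex representation of dimension `e ≤ C·d²` for an absolute constant `C`. -/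
theorem min_degree_of_perfect_quotient :
    ∃ C : ℕ, 1 ≤ C ∧
      ∀ (G : Type) [Group G], ∀ (_ : Finite G) (_ : Nontrivial G),
      ⁅(⊤ : Subgroup G), (⊤ : Subgroup G)⁆ = ⊤ →
      ∀ (N : Subgroup G) (_ : N.Normal), IsSolvable ↥N →
      ∀ d : ℕ, (∃ φ : G →* GL (Fin d) ℂ, φ.range ≠ ⊥) →
      ∃ e : ℕ, e ≤ C * d ^ 2 ∧ ∃ ψ : G ⧸ N →* GL (Fin e) ℂ, ψ.range ≠ ⊥ := by
  refine ⟨(15 ^ 2).factorial, Nat.factorial_pos _, fun G _ _ _ hG N _ hN d h ↦ ?_⟩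
  have : Group.IsPerfect G := Group.isPerfect_def.mpr hG
  have : Group.IsSolvable N := hN
  exact min_degree_of_perfect_quotient_general N h
end

section
/- Let p be a prime, let U be a finite p-group, and let T be a finite group of order coprime to p acting on U by automorphisms. Let H = [U,T] denote the subgroup of U generated by the set {u⁻¹·(t•u) : u ∈ U, t ∈ T}; this subgroup is T-invariant. Then T has no nontrivial fixed points on the abelianization of H: if x ∈ H satisfies (t•x)·x⁻¹ ∈ [H,H] for all t ∈ T, then x ∈ [H,H]. (In other words, C_{H/[H,H]}(T) = 1.) -/
set_option synthInstance.maxHeartbeats 400000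
set_option maxHeartbeats 1000000

/-!
For `u : U`, the classes of the elements `u⁻¹ * (t • u)` in the abelianization of `H = [U, T]` form
a 1-cocycle in `t`, and the norm `a ↦ ∏ t, t • a` kills every value of a 1-cocycle. Since these
elements generate `H`, the norm is trivial on the abelianization. On the class of a fixed point
`x` the norm is the `|T|`-th power, so `x ^ |T| ∈ [H, H]`; and `x` is itself a power of `x ^ |T|`
because its order is coprime to `|T|`.
-/

section Norm

variable (T M : Type*) [Fintype T]

/-- The norm `a ↦ ∏ t, t • a` of the action of a finite monoid `T` on a commutative monoid `M`; the
multiplicative counterpart of `Representation.norm`. -/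
def mulNormHom [Monoid T] [CommMonoid M] [MulDistribMulAction T M] : M →* M :=
  ∏ t : T, MulDistribMulAction.toMonoidHom M t

variable {T M}

theorem mulNormHom_apply [Monoid T] [CommMonoid M] [MulDistribMulAction T M] (a : M) :
    mulNormHom T M a = ∏ t : T, t • a := by
  simp only [mulNormHom, MonoidHom.finsetProd_apply, MulDistribMulAction.toMonoidHom_apply]

theorem mulNormHom_eq_pow_card_of_forall_smul_eq [Monoid T] [CommMonoid M]
    [MulDistribMulAction T M] {a : M} (ha : ∀ t : T, t • a = a) :
    mulNormHom T M a = a ^ Nat.card T := by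
  simp only [mulNormHom_apply, ha, Finset.prod_const, Finset.card_univ, Nat.card_eq_fintype_card]

theorem mulNormHom_eq_one_of_isMulCocycle₁ [Group T] [CommGroup M] [MulDistribMulAction T M]
    {c : T → M} (hc : groupCohomology.IsMulCocycle₁ c) (t : T) : mulNormHom T M (c t) = 1 := by
  have hsmul (s : T) : s • c t = c (s * t) / c s := eq_div_of_mul_eq' (hc s t).symm
  simp only [mulNormHom_apply, hsmul, Finset.prod_div_distrib]
  exact div_eq_one.mpr (Equiv.prod_comp (Equiv.mulRight t) c)

end Norm

section Abelianization

variable {T G : Type*} [Group G]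

instance abelianizationMulDistribMulAction [Monoid T] [MulDistribMulAction T G] :
    MulDistribMulAction T (Abelianization G) where
  smul t := Abelianization.map (MulDistribMulAction.toMonoidHom G t)
  one_smul a := by
    induction a using QuotientGroup.induction_on with
    | H g => exact congrArg Abelianization.of (one_smul T g)
  mul_smul s t a := by
    induction a using QuotientGroup.induction_on with
    | H g => exact congrArg Abelianization.of (mul_smul s t g)
  smul_mul _ := map_mul _
  smul_one _ := map_one _

theorem smul_abelianization_of [Monoid T] [MulDistribMulAction T G] (t : T) (g : G) :
    t • Abelianization.of g = Abelianization.of (t • g) :=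
  rfl

theorem abelianization_of_eq_one_iff_coe_mem_commutator {H : Subgroup G} {h : H} :
    Abelianization.of h = 1 ↔ (h : G) ∈ ⁅H, H⁆ := by
  rw [← Subgroup.map_subtype_commutator, ← MonoidHom.mem_ker, Abelianization.ker_of]
  exact (Subgroup.mem_map_iff_mem H.subtype_injective).symm

end Abelianization

section ActionCommutator

variable (T U : Type*) [Group U]

/-- The subgroup `[U, T]` of `U` generated by the elements `u⁻¹ * (t • u)`, for an action of `T`
on `U`. -/
def actionCommutator [SMul T U] : Subgroup U :=
  Subgroup.closure {y : U | ∃ (t : T) (u : U), y = u⁻¹ * (t • u)}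

namespace actionCommutator

variable {T U}

theorem inv_mul_smul_mem [SMul T U] (t : T) (u : U) : u⁻¹ * (t • u) ∈ actionCommutator T U :=
  Subgroup.subset_closure ⟨t, u, rfl⟩

theorem smul_inv_mul_smul [Monoid T] [MulDistribMulAction T U] (s t : T) (u : U) :
    s • (u⁻¹ * (t • u)) = (u⁻¹ * (s • u))⁻¹ * (u⁻¹ * ((s * t) • u)) := by
  rw [smul_mul', smul_inv', mul_smul]
  group

theorem smul_mem [Monoid T] [MulDistribMulAction T U] (s : T) {h : U}
    (hh : h ∈ actionCommutator T U) : s • h ∈ actionCommutator T U := by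
  suffices actionCommutator T U ≤
      (actionCommutator T U).comap (MulDistribMulAction.toMonoidHom U s) from this hh
  refine (Subgroup.closure_le _).mpr ?_
  rintro _ ⟨t, u, rfl⟩
  change s • (u⁻¹ * (t • u)) ∈ actionCommutator T U
  rw [smul_inv_mul_smul]
  exact mul_mem (inv_mem (inv_mul_smul_mem s u)) (inv_mul_smul_mem (s * t) u)

instance [Monoid T] [MulDistribMulAction T U] :
    MulDistribMulAction T (actionCommutator T U) where
  smul t h := ⟨t • (h : U), smul_mem t h.2⟩
  one_smul h := Subtype.ext (one_smul T (h : U))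
  mul_smul s t h := Subtype.ext (mul_smul s t (h : U))
  smul_mul t g h := Subtype.ext (smul_mul' t (g : U) (h : U))
  smul_one t := Subtype.ext (smul_one t)

theorem coe_smul [Monoid T] [MulDistribMulAction T U] (t : T) (h : actionCommutator T U) :
    ((t • h : actionCommutator T U) : U) = t • (h : U) :=
  rfl

theorem isMulCocycle₁_inv_mul_smul [Monoid T] [MulDistribMulAction T U] (u : U) :
    groupCohomology.IsMulCocycle₁ fun t : T ↦
      Abelianization.of (⟨u⁻¹ * (t • u), inv_mul_smul_mem t u⟩ : actionCommutator T U) := by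
  intro s t
  rw [smul_abelianization_of, mul_comm, ← map_mul]
  refine congrArg Abelianization.of (Subtype.ext ?_)
  rw [Subgroup.coe_mul, coe_smul, smul_inv_mul_smul, mul_inv_cancel_left]

theorem mulNormHom_abelianization_eq_one [Group T] [Fintype T] [MulDistribMulAction T U] :
    mulNormHom T (Abelianization (actionCommutator T U)) = 1 := by
  refine Abelianization.hom_ext _ _
    (MonoidHom.eq_of_eqOn_dense Subgroup.closure_closure_coe_preimage ?_)
  rintro ⟨_, _⟩ ⟨t, u, rfl⟩
  exact mulNormHom_eq_one_of_isMulCocycle₁ (isMulCocycle₁_inv_mul_smul u) t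

theorem pow_card_mem_commutator [Group T] [Finite T] [MulDistribMulAction T U] {x : U}
    (hx : x ∈ actionCommutator T U)
    (hfix : ∀ t : T, (t • x) * x⁻¹ ∈ ⁅actionCommutator T U, actionCommutator T U⁆) :
    x ^ Nat.card T ∈ ⁅actionCommutator T U, actionCommutator T U⁆ := by
  have := Fintype.ofFinite T
  lift x to actionCommutator T U using hx
  have hfixed (t : T) : t • Abelianization.of x = Abelianization.of x := by
    rw [smul_abelianization_of, ← mul_inv_eq_one, ← map_inv, ← map_mul]
    exact abelianization_of_eq_one_iff_coe_mem_commutator.mpr (hfix t)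
  refine abelianization_of_eq_one_iff_coe_mem_commutator (h := x ^ Nat.card T).mp ?_
  rw [map_pow, ← mulNormHom_eq_pow_card_of_forall_smul_eq hfixed, mulNormHom_abelianization_eq_one,
    MonoidHom.one_apply]

end actionCommutator

end ActionCommutator

theorem no_fixed_points_on_abelianization_of_commutator_general
    {T U : Type*} [Group U] [Group T] [Finite T] [MulDistribMulAction T U] {x : U}
    (hcop : (Nat.card T).Coprime (orderOf x)) (hx : x ∈ actionCommutator T U)
    (hfix : ∀ t : T, (t • x) * x⁻¹ ∈ ⁅actionCommutator T U, actionCommutator T U⁆) :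
    x ∈ ⁅actionCommutator T U, actionCommutator T U⁆ :=
  Subgroup.zpowers_le.mpr (actionCommutator.pow_card_mem_commutator hx hfix)
    (mem_zpowers_pow_iff.mpr hcop)

/-- Let `U` be a finite `p`-group and `T` a finite `p'`-group acting on `U` by
automorphisms, and let `H = [U,T]` be the subgroup generated by `{u⁻¹·(t•u)}`.
Then `T` has no nontrivial fixed points on the abelianization of `H`:
if `x ∈ H` and `(t•x)·x⁻¹ ∈ [H,H]` for all `t`, then `x ∈ [H,H]`. -/
theorem no_fixed_points_on_abelianization_of_commutator
    (p : ℕ) (hp : p.Prime)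
    (U : Type) [Group U] [Finite U] (hU : IsPGroup p U)
    (T : Type) [Group T] [Finite T] (hT : Nat.Coprime (Nat.card T) p)
    [MulDistribMulAction T U] :
    ∀ x ∈ Subgroup.closure {y : U | ∃ (t : T) (u : U), y = u⁻¹ * (t • u)},
      (∀ t : T, (t • x) * x⁻¹ ∈
        ⁅Subgroup.closure {y : U | ∃ (t : T) (u : U), y = u⁻¹ * (t • u)},
          Subgroup.closure {y : U | ∃ (t : T) (u : U), y = u⁻¹ * (t • u)}⁆) →
      x ∈ ⁅Subgroup.closure {y : U | ∃ (t : T) (u : U), y = u⁻¹ * (t • u)},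
            Subgroup.closure {y : U | ∃ (t : T) (u : U), y = u⁻¹ * (t • u)}⁆ := by
  intro x hx hfix
  obtain ⟨k, hk⟩ := hU x
  have hcop : (Nat.card T).Coprime (orderOf x) :=
    (hT.pow_right k).coprime_dvd_right (orderOf_dvd_of_pow_eq_one hk)
  exact no_fixed_points_on_abelianization_of_commutator_general hcop hx hfix
end

section
/- Let p be a prime, let U be a finite p-group and T a finite group of order coprime to p acting on U by automorphisms, and let n ≥ 1 be a natural number. Define the lower central series of a group X by γ₁(X) = X and γ_{k+1}(X) = [γ_k(X), X]. Assume γ_n(U) = 1 and γ_n(T) = 1. Let G = U ⋊ T be the semidirect product, and let [U,T] denote the subgroup of G generated by the commutators u⁻¹t⁻¹ut with u ∈ U and t ∈ T (regarding U and T as subgroups of G). Then γ_m(G) = [U,T] for every m ≥ n; in particular γ_n(G) = ⋂_{k ≥ 1} γ_k(G) = [U,T]. -/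
set_option synthInstance.maxHeartbeats 400000
set_option maxHeartbeats 1000000

/-!
If the commutator of `x` and `y` commutes with both, then `⁅x, y⁆ ^ n` equals both `⁅x ^ n, y⁆` and
`⁅x, y ^ n⁆`, so if moreover `x` and `y` have coprime orders, then they commute. Applied in the
quotients by the successive terms of the lower central series, this puts `⁅H, K⁆` into every
`γ_k(G)` whenever the elements of `H` have orders coprime to those of `K`. Conversely, if `H` and
`K` generate `G`, then their images in `G ⧸ ⁅H, K⁆` centralize each other, and `γ_k` of such a
product is the product of the `γ_k`. Altogether `γ_k(G) = γ_k(H) γ_k(K) ⁅H, K⁆`.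
-/

section Commutator

open scoped commutatorElement

variable {G : Type*} [Group G] {x y : G}

lemma commutatorElement_pow_right_of_commute (h : Commute ⁅x, y⁆ y) (n : ℕ) :
    ⁅x, y ^ n⁆ = ⁅x, y⁆ ^ n :=
  calc ⁅x, y ^ n⁆ = (x * y * x⁻¹) ^ n * (y ^ n)⁻¹ := by rw [conj_pow, commutatorElement_def]
    _ = (⁅x, y⁆ * y) ^ n * (y ^ n)⁻¹ := by rw [commutatorElement_def, inv_mul_cancel_right]
    _ = ⁅x, y⁆ ^ n := by rw [h.mul_pow, mul_inv_cancel_right]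

lemma commutatorElement_pow_left_of_commute (h : Commute ⁅x, y⁆ x) (n : ℕ) :
    ⁅x ^ n, y⁆ = ⁅x, y⁆ ^ n := by
  have h' : Commute ⁅y, x⁆ x := by simpa only [commutatorElement_inv] using h.inv_left
  rw [← commutatorElement_inv, commutatorElement_pow_right_of_commute h', ← inv_pow,
    commutatorElement_inv]

lemma commute_of_coprime_orderOf (hx : Commute ⁅x, y⁆ x) (hy : Commute ⁅x, y⁆ y)
    (hco : (orderOf x).Coprime (orderOf y)) : Commute x y := by
  have pow_orderOf_left : ⁅x, y⁆ ^ orderOf x = 1 := by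
    rw [← commutatorElement_pow_left_of_commute hx, pow_orderOf_eq_one, commutatorElement_one_left]
  have pow_orderOf_right : ⁅x, y⁆ ^ orderOf y = 1 := by
    rw [← commutatorElement_pow_right_of_commute hy, pow_orderOf_eq_one,
      commutatorElement_one_right]
  rw [← commutatorElement_eq_one_iff_commute, ← pow_one ⁅x, y⁆, ← hco.gcd_eq_one]
  exact pow_gcd_eq_one.mpr ⟨pow_orderOf_left, pow_orderOf_right⟩

lemma commute_mk_iff_commutatorElement_mem {N : Subgroup G} [N.Normal] :
    Commute (x : G ⧸ N) (y : G ⧸ N) ↔ ⁅x, y⁆ ∈ N := by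
  rw [← commutatorElement_eq_one_iff_commute, ← QuotientGroup.eq_one_iff]
  rfl

lemma commutatorElement_mem_of_coprime_orderOf {N : Subgroup G} [N.Normal]
    (hx : ⁅⁅x, y⁆, x⁆ ∈ N) (hy : ⁅⁅x, y⁆, y⁆ ∈ N) (hco : (orderOf x).Coprime (orderOf y)) :
    ⁅x, y⁆ ∈ N :=
  commute_mk_iff_commutatorElement_mem.mp <|
    commute_of_coprime_orderOf (commute_mk_iff_commutatorElement_mem.mpr hx)
      (commute_mk_iff_commutatorElement_mem.mpr hy)
      (hco.of_dvd (orderOf_map_dvd (QuotientGroup.mk' N) x)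
        (orderOf_map_dvd (QuotientGroup.mk' N) y))

lemma commutatorElement_mem_lowerCentralSeries_of_coprime_orderOf
    (hco : (orderOf x).Coprime (orderOf y)) (k : ℕ) :
    ⁅x, y⁆ ∈ (⊤ : Subgroup G).lowerCentralSeries k := by
  induction k with
  | zero => exact Subgroup.mem_top _
  | succ k ih =>
    have mem_succ (z : G) : ⁅⁅x, y⁆, z⁆ ∈ (⊤ : Subgroup G).lowerCentralSeries (k + 1) :=
      Subgroup.commutator_mem_commutator ih (Subgroup.mem_top z)
    exact commutatorElement_mem_of_coprime_orderOf (mem_succ x) (mem_succ y) hco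

end Commutator

section Subgroup

variable {G : Type*} [Group G] {H K : Subgroup G}

lemma commutator_le_lowerCentralSeries_of_coprime_orderOf
    (hco : ∀ h ∈ H, ∀ k ∈ K, (orderOf h).Coprime (orderOf k)) (n : ℕ) :
    ⁅H, K⁆ ≤ (⊤ : Subgroup G).lowerCentralSeries n :=
  Subgroup.commutator_le.mpr fun h hh k hk =>
    commutatorElement_mem_lowerCentralSeries_of_coprime_orderOf (hco h hh k hk) n

lemma normal_commutator_of_sup_eq_top (hHK : H ⊔ K = ⊤) : ⁅H, K⁆.Normal := by
  rw [← Subgroup.normalizer_eq_top_iff, eq_top_iff, ← hHK]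
  exact sup_le (Subgroup.normalizer_commutator_ge_left H K)
    (Subgroup.normalizer_commutator_ge_right H K)

lemma lowerCentralSeries_range {A : Type*} [Group A] (f : A →* G) (n : ℕ) :
    f.range.lowerCentralSeries n = ((⊤ : Subgroup A).lowerCentralSeries n).map f := by
  rw [Subgroup.map_lowerCentralSeries, ← MonoidHom.range_eq_map]

lemma map_noncommCoprod_prod {A B : Type*} [Group A] [Group B] (f : A →* G) (g : B →* G)
    (hcomm : ∀ a b, Commute (f a) (g b)) (S : Subgroup A) (T : Subgroup B) :
    (S.prod T).map (f.noncommCoprod g hcomm) = S.map f ⊔ T.map g := by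
  apply le_antisymm
  · rintro _ ⟨⟨a, b⟩, ⟨ha, hb⟩, rfl⟩
    exact Subgroup.mul_mem_sup (Subgroup.mem_map_of_mem f ha) (Subgroup.mem_map_of_mem g hb)
  · refine sup_le ?_ ?_
    · rintro _ ⟨a, ha, rfl⟩
      exact ⟨(a, 1), ⟨ha, T.one_mem⟩, by simp⟩
    · rintro _ ⟨b, hb, rfl⟩
      exact ⟨(1, b), ⟨S.one_mem, hb⟩, by simp⟩

lemma lowerCentralSeries_sup_of_commutator_eq_bot (h : ⁅H, K⁆ = ⊥) (n : ℕ) :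
    (H ⊔ K).lowerCentralSeries n = H.lowerCentralSeries n ⊔ K.lowerCentralSeries n := by
  have hcomm (a : H) (b : K) : Commute (H.subtype a) (K.subtype b) :=
    (Subgroup.commutator_eq_bot_iff_le_centralizer.mp h a.2 b b.2).symm
  have range_eq : (H.subtype.noncommCoprod K.subtype hcomm).range = H ⊔ K := by
    rw [MonoidHom.noncommCoprod_range, H.range_subtype, K.range_subtype]
  rw [← range_eq, lowerCentralSeries_range, Subgroup.top_lowerCentralSeries_prod,
    map_noncommCoprod_prod, H.top_subtype_lowerCentralSeries, K.top_subtype_lowerCentralSeries]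

lemma lowerCentralSeries_top_le_of_sup_eq_top (hHK : H ⊔ K = ⊤) (n : ℕ) :
    (⊤ : Subgroup G).lowerCentralSeries n ≤
      H.lowerCentralSeries n ⊔ K.lowerCentralSeries n ⊔ ⁅H, K⁆ := by
  have := normal_commutator_of_sup_eq_top hHK
  let q := QuotientGroup.mk' ⁅H, K⁆
  have hcomm : ⁅H.map q, K.map q⁆ = ⊥ := by
    rw [← Subgroup.map_commutator, QuotientGroup.map_mk'_self]
  have hmap : ((⊤ : Subgroup G).lowerCentralSeries n).map q =
      (H.lowerCentralSeries n ⊔ K.lowerCentralSeries n).map q := by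
    rw [← hHK, Subgroup.map_lowerCentralSeries, Subgroup.map_sup,
      lowerCentralSeries_sup_of_commutator_eq_bot hcomm, Subgroup.map_sup,
      Subgroup.map_lowerCentralSeries, Subgroup.map_lowerCentralSeries]
  simpa only [q, QuotientGroup.ker_mk'] using Subgroup.map_le_map_iff.mp hmap.le

theorem lowerCentralSeries_top_eq_of_coprime_orderOf (hHK : H ⊔ K = ⊤)
    (hco : ∀ h ∈ H, ∀ k ∈ K, (orderOf h).Coprime (orderOf k)) (n : ℕ) :
    (⊤ : Subgroup G).lowerCentralSeries n =
      H.lowerCentralSeries n ⊔ K.lowerCentralSeries n ⊔ ⁅H, K⁆ :=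
  le_antisymm (lowerCentralSeries_top_le_of_sup_eq_top hHK n) <|
    sup_le (sup_le (Subgroup.lowerCentralSeries_mono n le_top)
      (Subgroup.lowerCentralSeries_mono n le_top))
      (commutator_le_lowerCentralSeries_of_coprime_orderOf hco n)

theorem lcs_of_semidirect_product_general (hHK : H ⊔ K = ⊤)
    (hco : ∀ h ∈ H, ∀ k ∈ K, (orderOf h).Coprime (orderOf k)) {c : ℕ}
    (hH : H.lowerCentralSeries c ≤ ⁅H, K⁆) (hK : K.lowerCentralSeries c ≤ ⁅H, K⁆) :
    (∀ m : ℕ, c ≤ m → (⊤ : Subgroup G).lowerCentralSeries m = ⁅H, K⁆) ∧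
      (⨅ k : ℕ, (⊤ : Subgroup G).lowerCentralSeries k) = ⁅H, K⁆ := by
  have stable (m : ℕ) (hm : c ≤ m) : (⊤ : Subgroup G).lowerCentralSeries m = ⁅H, K⁆ := by
    rw [lowerCentralSeries_top_eq_of_coprime_orderOf hHK hco, sup_eq_right]
    exact sup_le ((H.lowerCentralSeries_antitone hm).trans hH)
      ((K.lowerCentralSeries_antitone hm).trans hK)
  exact ⟨stable, le_antisymm ((iInf_le _ c).trans (stable c le_rfl).le)
    (le_iInf (commutator_le_lowerCentralSeries_of_coprime_orderOf hco))⟩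

end Subgroup

lemma coprime_orderOf_of_mem_range {A B G : Type*} [Group A] [Group B] [Group G]
    (f : A →* G) (g : B →* G) (hco : ∀ (a : A) (b : B), (orderOf a).Coprime (orderOf b)) :
    ∀ x ∈ f.range, ∀ y ∈ g.range, (orderOf x).Coprime (orderOf y) := by
  rintro _ ⟨a, rfl⟩ _ ⟨b, rfl⟩
  exact (hco a b).of_dvd (orderOf_map_dvd f a) (orderOf_map_dvd g b)

lemma range_inl_sup_range_inr_eq_top {U T : Type*} [Group U] [Group T] (φ : T →* MulAut U) :
    (SemidirectProduct.inl : U →* U ⋊[φ] T).range ⊔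
      (SemidirectProduct.inr : T →* U ⋊[φ] T).range = ⊤ := by
  rw [eq_top_iff]
  intro g _
  rw [← SemidirectProduct.inl_left_mul_inr_right g]
  exact Subgroup.mul_mem_sup ⟨g.left, rfl⟩ ⟨g.right, rfl⟩

/-- Let `U` be a finite `p`-group and `T` a finite `p'`-group acting on `U`, with
`γ_n(U) = 1` and `γ_n(T) = 1` (where `γ₁(X) = X`, so `γ_n = lowerCentralSeries (n-1)`).
Then in `G = U ⋊ T` we have `γ_m(G) = [U,T]` for all `m ≥ n`; in particular
`γ_n(G) = ⋂_k γ_k(G) = [U,T]`. -/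
theorem lcs_of_semidirect_product
    (p : ℕ) (hp : p.Prime)
    (U : Type) [Group U] [Finite U] (hU : IsPGroup p U)
    (T : Type) [Group T] [Finite T] (hT : Nat.Coprime (Nat.card T) p)
    (φ : T →* MulAut U) (n : ℕ) (hn : 1 ≤ n)
    (hUn : Subgroup.lowerCentralSeries (⊤ : Subgroup U) (n - 1) = ⊥)
    (hTn : Subgroup.lowerCentralSeries (⊤ : Subgroup T) (n - 1) = ⊥) :
    (∀ m : ℕ, n ≤ m →
      Subgroup.lowerCentralSeries (⊤ : Subgroup (U ⋊[φ] T)) (m - 1) =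
        ⁅(SemidirectProduct.inl : U →* U ⋊[φ] T).range,
          (SemidirectProduct.inr : T →* U ⋊[φ] T).range⁆) ∧
    (⨅ k : ℕ, Subgroup.lowerCentralSeries (⊤ : Subgroup (U ⋊[φ] T)) k) =
      ⁅(SemidirectProduct.inl : U →* U ⋊[φ] T).range,
        (SemidirectProduct.inr : T →* U ⋊[φ] T).range⁆ := by
  have hco (u : U) (t : T) : (orderOf u).Coprime (orderOf t) :=
    (hU.orderOf_coprime hT.symm u).of_dvd_right (orderOf_dvd_natCard t)
  exact (lcs_of_semidirect_product_general (c := n - 1) (range_inl_sup_range_inr_eq_top φ)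
    (coprime_orderOf_of_mem_range _ _ hco)
    (by simp only [lowerCentralSeries_range, hUn, Subgroup.map_bot, bot_le])
    (by simp only [lowerCentralSeries_range, hTn, Subgroup.map_bot, bot_le])).imp_left
    fun stable m hm => stable (m - 1) (Nat.sub_le_sub_right hm 1)
end

section
/- Let Γ be a finite group and m ≥ 0 a natural number. Let Γ^{(m)} denote the m-th term of the derived series of Γ (Γ^{(0)} = Γ and Γ^{(k+1)} = [Γ^{(k)}, Γ^{(k)}]). Then there exists a solvable subgroup S ≤ Γ such that Γ = Γ^{(m)}·S, i.e., every element of Γ can be written as a product x·s with x ∈ Γ^{(m)} and s ∈ S. -/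
/-!
Let `N` be a normal subgroup of `Γ` with `Γ ⧸ N` solvable, such as `Γ^{(m)}`, and let `S` be minimal
among the subgroups with `N ⊔ S = ⊤`. Every maximal subgroup of `S` contains `N ⊓ S`, since
otherwise it would still generate `Γ` together with `N`. So `N ⊓ S` lies in the Frattini subgroup of
`S`, which is nilpotent, and `S` is an extension of a subgroup of the solvable group `Γ ⧸ N` by the
nilpotent group `N ⊓ S`.
-/

theorem inf_le_of_minimal_sup_eq_of_covBy {α : Type*} [Lattice α] {a b c t : α}
    (hb : Minimal (a ⊔ · = t) b) (hcb : c ⋖ b) : a ⊓ b ≤ c := by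
  by_contra hle
  have hjoin : c ⊔ a ⊓ b = b :=
    (hcb.eq_or_eq le_sup_left (sup_le hcb.le inf_le_right)).resolve_left (mt sup_eq_left.1 hle)
  have hc : a ⊔ c = t := by
    rw [← hb.prop, ← hjoin, sup_left_comm, sup_inf_self, sup_comm]
  exact hcb.lt.not_ge (hb.le_of_le hc hcb.le)

section

variable {G : Type*} [Group G]

theorem isCoatom_iff_map_subtype_covBy {S : Subgroup G} {M : Subgroup S} :
    IsCoatom M ↔ M.map S.subtype ⋖ S :=
  let e : Subgroup S ≃o Set.Iic S := Subgroup.MapSubtype.orderIso S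
  (e.isCoatom_iff M).symm.trans Set.Iic.isCoatom_iff

theorem subgroupOf_le_frattini_of_minimal_sup_eq {N S K : Subgroup G}
    (hS : Minimal (N ⊔ · = K) S) : N.subgroupOf S ≤ frattini S := by
  refine le_iInf₂ fun M hM ↦ ?_
  rw [← Subgroup.map_le_map_iff_of_injective S.subtype_injective, Subgroup.subgroupOf_map_subtype]
  exact inf_le_of_minimal_sup_eq_of_covBy hS (isCoatom_iff_map_subtype_covBy.1 hM)

theorem isNilpotent_subgroupOf_of_minimal_sup_eq {N S K : Subgroup G} [Finite S]
    (hS : Minimal (N ⊔ · = K) S) : Group.IsNilpotent (N.subgroupOf S) := by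
  have : Group.IsNilpotent (frattini S) := frattini_nilpotent
  exact Group.nilpotent_of_mulEquiv
    (Subgroup.subgroupOfEquivOfLe (subgroupOf_le_frattini_of_minimal_sup_eq hS))

theorem isSolvable_of_isSolvable_subgroupOf_of_isSolvable_quotient (N S : Subgroup G) [N.Normal]
    [Group.IsSolvable (N.subgroupOf S)] [Group.IsSolvable (G ⧸ N)] : Group.IsSolvable S := by
  refine Group.isSolvable_of_ker_le_range (N.subgroupOf S).subtype
    ((QuotientGroup.mk' N).comp S.subtype) ?_
  rw [Subgroup.range_subtype, ← MonoidHom.comap_ker, QuotientGroup.ker_mk', Subgroup.subgroupOf]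

theorem isSolvable_quotient_of_derivedSeries_le {N : Subgroup G} [N.Normal] {n : ℕ}
    (h : derivedSeries G n ≤ N) : Group.IsSolvable (G ⧸ N) := by
  refine ⟨n, ?_⟩
  rwa [← map_derivedSeries_eq (QuotientGroup.mk'_surjective N), Subgroup.map_eq_bot_iff,
    QuotientGroup.ker_mk']

theorem derived_series_solvable_complement_general [Finite G] (N : Subgroup G) [N.Normal]
    [Group.IsSolvable (G ⧸ N)] :
    ∃ S : Subgroup G, Group.IsSolvable S ∧ ∀ g : G, ∃ x ∈ N, ∃ s ∈ S, g = x * s := by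
  obtain ⟨S, hS⟩ := exists_minimal_of_wellFoundedLT (N ⊔ · = ⊤) ⟨⊤, sup_top_eq N⟩
  have := isNilpotent_subgroupOf_of_minimal_sup_eq hS
  refine ⟨S, isSolvable_of_isSolvable_subgroupOf_of_isSolvable_quotient N S, fun g ↦ ?_⟩
  have hg : g ∈ N ⊔ S := hS.prop ▸ Subgroup.mem_top g
  simpa only [eq_comm] using Subgroup.mem_sup_of_normal_left.1 hg

end

/-- For any finite group `Γ` and any `m`, there is a solvable subgroup `S ≤ Γ` with
`Γ = Γ^{(m)}·S`, where `Γ^{(m)}` is the `m`-th term of the derived series. -/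
theorem derived_series_solvable_complement
    (Γ : Type) [Group Γ] [Finite Γ] (m : ℕ) :
    ∃ S : Subgroup Γ, IsSolvable ↥S ∧
      ∀ g : Γ, ∃ x ∈ derivedSeries Γ m, ∃ s ∈ S, g = x * s := by
  have := isSolvable_quotient_of_derivedSeries_le (le_refl (derivedSeries Γ m))
  exact derived_series_solvable_complement_general (derivedSeries Γ m)
end

section
/- There is an absolute constant c with the following property: for every natural number n ≥ 1, every field F, and every finite subgroup Γ of GL_n(F), there exists a natural number m ≤ c·(1 + log n) such that the m-th term Γ^{(m)} of the derived series of Γ is perfect, i.e., Γ^{(m+1)} = Γ^{(m)}. -/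
open Matrix

set_option synthInstance.maxHeartbeats 400000
set_option maxHeartbeats 1000000

/-!
Let `R` be the last term of the derived series of `Γ`, and let `H` be a minimal subgroup with
`H R = Γ`. By minimality `H ∩ R` lies in the Frattini subgroup of `H`, which is nilpotent, so `H` is
solvable. The derived series of `H` maps onto that of `Γ / R`, and it suffices to bound the derived
length of solvable linear groups of degree `n` by `O(log n)`.

After base change to an algebraic closure, a composition series of length at most `n` reduces this
to irreducible representations at the cost of `O(log n)` further commutators, since each commutator
halves the number of steps of a filtration. In the irreducible case, argue by induction on `n`:

* If some abelian normal subgroup of the group `G` is not central, it has `t` weights on the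
  representation space `V`, and the least multiplicity `d < n` of a weight satisfies `t d ≤ n`. The
  group permutes the weights, and the stabilizer of a weight acts on a space of dimension `d`; since
  `log t + log d ≤ log n`, the bounds add up. It suffices to fix one nonzero vector, because a
  normal subgroup of `G` doing so acts trivially on `V`. Permutation groups of degree `t` reduce
  similarly to primitive ones, where a nontrivial abelian normal subgroup `N` is regular, hence of
  order `t` and self-centralizing, and the group acts on `N` by automorphisms.
* Otherwise, let `A` be the preimage of a maximal abelian normal subgroup of `G` modulo its center
  `Z`. Elements of `A` in different cosets of `Z` have different weights for the conjugation action
  of `A` on `End V`, so `A / Z` has order at most `n²`, and the centralizer of `A` lies in `Z`.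

In both cases there remains an action by automorphisms on an abelian group of order at most `n²`.
Its elementary abelian sections have dimension `O(log n)`, to which the induction applies, giving a
bound `O(log log n)` that leaves ample room in the inductive step.
-/

open scoped commutatorElement

section DerivedSeries

variable {G H : Type*} [Group G] [Group H]

theorem derivedSeries_add_le_map {K : Subgroup G} {a : ℕ} (h : derivedSeries G a ≤ K) (b : ℕ) :
    derivedSeries G (a + b) ≤ (derivedSeries K b).map K.subtype := by
  induction b with
  | zero => simpa [← MonoidHom.range_eq_map] using h
  | succ b ih =>
    rw [← add_assoc, derivedSeries_succ, derivedSeries_succ, Subgroup.map_commutator]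
    exact Subgroup.commutator_mono ih ih

theorem derivedSeries_le_ker_of_derivedSeries_eq_bot {m : ℕ} (h : derivedSeries H m = ⊥)
    (f : G →* H) : derivedSeries G m ≤ f.ker := by
  rw [← MonoidHom.comap_bot, ← Subgroup.map_le_iff_le_comap, ← h]
  exact map_derivedSeries_le_derivedSeries f m

theorem card_derivedSeries_mul_two_pow_le [Finite G] [Group.IsSolvable G] (i : ℕ)
    (hi : derivedSeries G i ≠ ⊥) : Nat.card (derivedSeries G i) * 2 ^ i ≤ Nat.card G := by
  induction i with
  | zero => simp
  | succ i ih =>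
    have hi' : derivedSeries G i ≠ ⊥ := fun h ↦ hi (by simp [derivedSeries_succ, h])
    have hlt : derivedSeries G (i + 1) < derivedSeries G i :=
      Group.IsSolvable.commutator_lt_of_ne_bot hi'
    obtain ⟨k, hk⟩ := Subgroup.card_dvd_of_le hlt.le
    have hk₀ : k ≠ 0 := by rintro rfl; exact Nat.card_pos.ne' hk
    have hk₁ : k ≠ 1 := by
      rintro rfl
      exact hlt.ne (Subgroup.eq_of_le_of_card_ge hlt.le (by rw [hk, mul_one]))
    calc Nat.card (derivedSeries G (i + 1)) * 2 ^ (i + 1)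
        = Nat.card (derivedSeries G (i + 1)) * 2 * 2 ^ i := by ring
      _ ≤ Nat.card (derivedSeries G i) * 2 ^ i := by rw [hk]; gcongr; omega
      _ ≤ Nat.card G := ih hi'

theorem derivedSeries_eq_bot_of_card_le_two_pow [Finite G] [Group.IsSolvable G] {m : ℕ}
    (hm : Nat.card G ≤ 2 ^ m) : derivedSeries G m = ⊥ := by
  by_contra h
  have hcard := (card_derivedSeries_mul_two_pow_le m h).trans hm
  exact h (Subgroup.eq_bot_of_card_le _ (Nat.le_of_mul_le_mul_right (by simpa) (by positivity)))

theorem derivedSeries_le_ker_of_card_le_two_pow [Group.IsSolvable G] [Finite H] (f : G →* H)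
    {m : ℕ} (hm : Nat.card H ≤ 2 ^ m) : derivedSeries G m ≤ f.ker :=
  have := Group.isSolvable_of_surjective f.rangeRestrict_surjective
  (derivedSeries_le_ker_of_derivedSeries_eq_bot (derivedSeries_eq_bot_of_card_le_two_pow
    ((Subgroup.card_le_card_group _).trans hm)) f.rangeRestrict).trans_eq f.ker_rangeRestrict

theorem derivedSeries_le_ker_mulAut_of_card_le_two_pow [Group.IsSolvable G] [Finite H]
    (φ : G →* MulAut H) {m : ℕ} (hm : Nat.card H ≤ 2 ^ m) :
    derivedSeries G (m * 2 ^ m) ≤ φ.ker := by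
  have := DFunLike.finite (MulAut H)
  refine derivedSeries_le_ker_of_card_le_two_pow φ ?_
  calc Nat.card (MulAut H)
      ≤ Nat.card (H → H) :=
        Nat.card_le_card_of_injective _ (DFunLike.coe_injective (F := MulAut H))
    _ = Nat.card H ^ Nat.card H := Nat.card_fun
    _ ≤ (2 ^ m) ^ 2 ^ m :=
        (Nat.pow_le_pow_left hm _).trans (Nat.pow_le_pow_right (by positivity) hm)
    _ = 2 ^ (m * 2 ^ m) := (pow_mul 2 m _).symm

end DerivedSeries

section Subquotient

variable {k G V : Type*} [Ring k] [Group G] [AddCommGroup V] [Module k V]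
  {ρ : Representation k G V}

/-- The representation of `G` on the subquotient `N / (N ∩ K)` of `V`, for two
subrepresentations `K` and `N`; it is the section `N / K` when `K ≤ N`. -/
def subquotient (K N : Subrepresentation ρ) :
    Representation k G (N.toSubmodule ⧸ K.toSubmodule.comap N.toSubmodule.subtype) :=
  N.toRepresentation.quotient _ fun g _ hx ↦ K.apply_mem_toSubmodule g hx

theorem subquotient_mk_eq_zero_iff {K N : Subrepresentation ρ} {x : N.toSubmodule} :
    (Submodule.Quotient.mk x : N.toSubmodule ⧸ K.toSubmodule.comap N.toSubmodule.subtype) = 0 ↔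
      (x : V) ∈ K :=
  Submodule.Quotient.mk_eq_zero _

theorem mem_ker_subquotient {K N : Subrepresentation ρ} {g : G} :
    g ∈ (subquotient K N).ker ↔ ∀ x ∈ N, ρ g x - x ∈ K := by
  rw [MonoidHom.mem_ker, LinearMap.ext_iff, Submodule.Quotient.forall, Subtype.forall]
  exact forall₂_congr fun _ _ ↦ Submodule.Quotient.eq _

theorem ker_subquotient_bot_top : (subquotient (⊥ : Subrepresentation ρ) ⊤).ker = ρ.ker := by
  ext g
  rw [mem_ker_subquotient, MonoidHom.mem_ker, LinearMap.ext_iff]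
  exact ⟨fun h x ↦ sub_eq_zero.1 (h x trivial), fun h x _ ↦ sub_eq_zero.2 (h x)⟩

theorem ker_subquotient_self (K : Subrepresentation ρ) : (subquotient K K).ker = ⊤ :=
  top_unique fun g _ ↦ mem_ker_subquotient.2 fun _ hx ↦
    sub_mem (S := Submodule k V) (K.apply_mem_toSubmodule g hx) hx

/-- With `y = (hg)⁻¹ x`, the vector `[g, h] x - x` is the difference of the images of `h y - y` and
`g y - y` under `g - 1` and `h - 1`. -/
theorem commutator_le_ker_subquotient {K N P : Subrepresentation ρ} {H : Subgroup G}
    (hKN : H ≤ (subquotient K N).ker) (hNP : H ≤ (subquotient N P).ker) :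
    ⁅H, H⁆ ≤ (subquotient K P).ker := by
  rw [Subgroup.commutator_le]
  intro g hg h hh
  rw [mem_ker_subquotient]
  intro x hx
  obtain ⟨y, hy, rfl⟩ : ∃ y ∈ P, x = ρ (h * g) y :=
    ⟨ρ (h * g)⁻¹ x, P.apply_mem_toSubmodule _ hx, (ρ.self_inv_apply _ x).symm⟩
  have hgy := mem_ker_subquotient.1 (hNP hg) y hy
  have hhy := mem_ker_subquotient.1 (hNP hh) y hy
  have key : ρ ⁅g, h⁆ (ρ (h * g) y) - ρ (h * g) y =
      (ρ g (ρ h y - y) - (ρ h y - y)) - (ρ h (ρ g y - y) - (ρ g y - y)) := by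
    rw [← Module.End.mul_apply, ← map_mul, show ⁅g, h⁆ * (h * g) = g * h by
      simp [commutatorElement_def, mul_assoc]]
    simp only [map_mul, Module.End.mul_apply, map_sub]
    abel
  rw [key]
  exact sub_mem (S := Submodule k V) (mem_ker_subquotient.1 (hKN hg) _ hhy)
    (mem_ker_subquotient.1 (hKN hh) _ hgy)

theorem derivedSeries_le_ker_subquotient_two_pow {f : ℕ → Subrepresentation ρ} {m : ℕ}
    (hf : ∀ i, derivedSeries G m ≤ (subquotient (f i) (f (i + 1))).ker) (j i : ℕ) :
    derivedSeries G (m + j) ≤ (subquotient (f i) (f (i + 2 ^ j))).ker := by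
  induction j generalizing i with
  | zero => exact hf i
  | succ j ih =>
    rw [← add_assoc, derivedSeries_succ, pow_succ, mul_two, ← add_assoc]
    exact commutator_le_ker_subquotient (ih i) (ih (i + 2 ^ j))

theorem derivedSeries_le_ker_of_filtration {f : ℕ → Subrepresentation ρ} {m j : ℕ}
    (hbot : f 0 = ⊥) (htop : f (2 ^ j) = ⊤)
    (hf : ∀ i, derivedSeries G m ≤ (subquotient (f i) (f (i + 1))).ker) :
    derivedSeries G (m + j) ≤ ρ.ker := by
  have h := derivedSeries_le_ker_subquotient_two_pow hf j 0
  rwa [zero_add, hbot, htop, ker_subquotient_bot_top] at h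

/-- The preimage in `N` of a subrepresentation of `N / (N ∩ K)`. -/
def subquotientPreimage {K N : Subrepresentation ρ} (W : Subrepresentation (subquotient K N)) :
    Subrepresentation ρ where
  toSubmodule := (W.toSubmodule.comap (Submodule.mkQ _)).map N.toSubmodule.subtype
  apply_mem_toSubmodule := by
    rintro g _ ⟨x, hx, rfl⟩
    exact ⟨N.toRepresentation g x, W.apply_mem_toSubmodule g hx, rfl⟩

theorem coe_mem_subquotientPreimage {K N : Subrepresentation ρ}
    {W : Subrepresentation (subquotient K N)} {x : N.toSubmodule} :
    (x : V) ∈ subquotientPreimage W ↔ Submodule.Quotient.mk x ∈ W :=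
  ⟨fun ⟨_, hy, hyx⟩ ↦ Subtype.ext hyx ▸ hy, fun hx ↦ ⟨x, hx, rfl⟩⟩

end Subquotient

section Irreducible

variable {F G V : Type*} [Field F] [Group G] [AddCommGroup V] [Module F V]
  {ρ : Representation F G V}

theorem isIrreducible_subquotient {K N : Subrepresentation ρ} (h : K ⋖ N) :
    (subquotient K N).IsIrreducible where
  exists_pair_ne := by
    obtain ⟨x, hxN, hxK⟩ := SetLike.exists_of_lt h.lt
    refine ⟨⊥, ⊤, fun he ↦ hxK ?_⟩
    exact (subquotient_mk_eq_zero_iff (x := ⟨x, hxN⟩)).1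
      (he ▸ trivial : _ ∈ (⊥ : Subrepresentation (subquotient K N)))
  eq_bot_or_eq_top W := by
    have hKW : K ≤ subquotientPreimage W := fun x hx ↦ by
      rw [coe_mem_subquotientPreimage (x := ⟨x, h.le hx⟩), subquotient_mk_eq_zero_iff.2 hx]
      exact W.toSubmodule.zero_mem
    have hWN : subquotientPreimage W ≤ N := by
      rintro _ ⟨x, -, rfl⟩
      exact x.2
    refine (h.eq_or_eq hKW hWN).imp (fun hW ↦ bot_unique ?_) (fun hW ↦ top_unique ?_)
    · refine (Submodule.Quotient.forall _).2 fun x hx ↦ subquotient_mk_eq_zero_iff.2 ?_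
      exact hW.le (coe_mem_subquotientPreimage.2 hx)
    · exact (Submodule.Quotient.forall _).2 fun x _ ↦ coe_mem_subquotientPreimage.1 (hW.ge x.2)

theorem finrank_toSubmodule_strictMono [FiniteDimensional F V] :
    StrictMono fun W : Subrepresentation ρ ↦ Module.finrank F W.toSubmodule :=
  fun _ _ h ↦ Submodule.finrank_lt_finrank_of_lt h

theorem exists_wcovBy_seq {α : Type*} [PartialOrder α] [BoundedOrder α] {r : α → ℕ}
    (hr : StrictMono r) {n : ℕ} (hn : r ⊤ ≤ n) :
    ∃ f : ℕ → α, f 0 = ⊥ ∧ f n = ⊤ ∧ ∀ i, f i ⩿ f (i + 1) := by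
  have : WellFoundedLT α := hr.wellFoundedLT
  have : WellFoundedGT α := StrictAnti.wellFoundedGT (f := fun a ↦ r ⊤ - r a) fun a b hab ↦
    Nat.sub_lt_sub_left ((hr hab).trans_le (hr.monotone le_top)) (hr hab)
  obtain ⟨a, ha₀, l, hal, ha⟩ :=
    exists_covBy_seq_of_wellFoundedLT_wellFoundedGT_of_le (bot_le (a := (⊤ : α)))
  have hrank (i : ℕ) (hi : i ≤ l) : i ≤ r (a i) := by
    induction i with
    | zero => exact Nat.zero_le _
    | succ i ih => exact (ih (by omega)).trans_lt (hr (ha i (by omega)).lt)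
  have hln : l ≤ n := (hrank l le_rfl).trans (hal ▸ hn)
  refine ⟨fun i ↦ a (min i l), by simpa, by simpa [hln], fun i ↦ ?_⟩
  rcases lt_or_ge i l with hi | hi
  · simpa [hi.le, Nat.succ_le_of_lt hi] using (ha i hi).wcovBy
  · simp [hi, hi.trans i.le_succ]

end Irreducible

section FieldExtension

universe u v w

/-- The bound for irreducible representations of dimension `n` of solvable groups over
algebraically closed fields. It is named as a predicate because it is proved by induction on `n`,
and because the same induction uses it in a second triple of universes. -/
def IrreducibleBound (n : ℕ) : Prop :=
  ∀ (F : Type u) [Field F] [IsAlgClosed F] (V : Type w) [AddCommGroup V] [Module F V]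
    [FiniteDimensional F V] (G : Type v) [Group G] [Group.IsSolvable G]
    (ρ : Representation F G V) [ρ.IsIrreducible], Module.finrank F V = n →
    derivedSeries G (400 * Nat.log 2 n + 1) ≤ ρ.ker

variable {F : Type u} [Field F] {V : Type w} [AddCommGroup V] [Module F V] [FiniteDimensional F V]
  {G : Type v} [Group G] [Group.IsSolvable G] {n : ℕ}

theorem IrreducibleBound.derivedSeries_le_ker_subquotient [IsAlgClosed F]
    (h : ∀ m ≤ n, IrreducibleBound.{u, v, w} m) {ρ : Representation F G V}
    {K N : Subrepresentation ρ} (hn : Module.finrank F N.toSubmodule ≤ n) (hKN : K ⩿ N) :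
    derivedSeries G (400 * Nat.log 2 n + 1) ≤ (subquotient K N).ker := by
  rcases hKN.eq_or_covBy with rfl | hKN
  · exact le_top.trans_eq (ker_subquotient_self K).symm
  have := isIrreducible_subquotient hKN
  have hle := (Submodule.finrank_quotient_le (K.toSubmodule.comap N.toSubmodule.subtype)).trans hn
  refine (derivedSeries_antitone G ?_).trans (h _ hle F _ G (subquotient K N) rfl)
  gcongr

theorem IrreducibleBound.derivedSeries_le_ker_of_isAlgClosed [IsAlgClosed F]
    (h : ∀ m ≤ n, IrreducibleBound.{u, v, w} m) (ρ : Representation F G V)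
    (hn : Module.finrank F V ≤ n) : derivedSeries G (401 * Nat.log 2 n + 2) ≤ ρ.ker := by
  have hn' : Module.finrank F (⊤ : Subrepresentation ρ).toSubmodule ≤ 2 ^ (Nat.log 2 n + 1) :=
    (finrank_top F V).trans_le (hn.trans (Nat.lt_pow_succ_log_self one_lt_two n).le)
  obtain ⟨f, hbot, htop, hf⟩ := exists_wcovBy_seq finrank_toSubmodule_strictMono hn'
  convert derivedSeries_le_ker_of_filtration hbot htop fun i ↦
    derivedSeries_le_ker_subquotient h ((Submodule.finrank_le _).trans hn) (hf i) using 2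
  ring

theorem IrreducibleBound.derivedSeries_le_ker
    (h : ∀ m ≤ n, IrreducibleBound.{u, v, max u w} m) (ρ : Representation F G V)
    (hn : Module.finrank F V ≤ n) : derivedSeries G (401 * Nat.log 2 n + 2) ≤ ρ.ker := by
  let K := AlgebraicClosure F
  let ρ' : Representation K G (TensorProduct F K V) :=
    (Module.End.baseChangeHom F K V : Module.End F V →* _).comp ρ
  have hker : ρ'.ker ≤ ρ.ker := fun g hg ↦
    MonoidHom.mem_ker.2 <| LinearMap.baseChangeHom_injective F V K <|
      (MonoidHom.mem_ker.1 hg).trans (map_one (Module.End.baseChangeHom F K V)).symm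
  exact (derivedSeries_le_ker_of_isAlgClosed h ρ' (by simpa)).trans hker

end FieldExtension

section FiniteAbelian

universe u v w

variable {G : Type v} [Group G]

section Torsion

variable {A : Type*} [AddCommGroup A] {ρ : Representation ℤ G A}

variable (ρ) in
/-- The `a`-torsion of `A`, as a subrepresentation of a `ℤ`-linear representation on `A`. -/
def torsionSubrepresentation (a : ℕ) : Subrepresentation ρ where
  toSubmodule := Submodule.torsionBy ℤ A a
  apply_mem_toSubmodule g x hx := by
    rw [Submodule.mem_torsionBy_iff] at hx ⊢
    rw [← map_smul, hx, map_zero]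

theorem mem_torsionSubrepresentation {a : ℕ} {x : A} :
    x ∈ torsionSubrepresentation ρ a ↔ a • x = 0 := by
  rw [← natCast_zsmul]
  exact Submodule.mem_torsionBy_iff _ _

theorem ker_torsion_le_ker_subquotient (a b : ℕ) :
    (torsionSubrepresentation ρ b).toRepresentation.ker ≤
      (subquotient (torsionSubrepresentation ρ a) (torsionSubrepresentation ρ (a * b))).ker := by
  intro g hg
  refine mem_ker_subquotient.2 fun x hx ↦ mem_torsionSubrepresentation.2 ?_
  rw [mem_torsionSubrepresentation, mul_comm, mul_smul] at hx
  have hfix : ρ g (a • x) = a • x := congrArg Subtype.val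
    (LinearMap.congr_fun hg ⟨a • x, mem_torsionSubrepresentation.2 hx⟩)
  rw [smul_sub, ← map_nsmul, hfix, sub_self]

theorem length_primeFactorsList_le_log (n : ℕ) : n.primeFactorsList.length ≤ Nat.log 2 n := by
  rcases eq_or_ne n 0 with rfl | hn
  · simp
  refine Nat.le_log_of_pow_le one_lt_two ?_
  exact (List.pow_card_le_prod _ _ fun p hp ↦ (Nat.prime_of_mem_primeFactorsList hp).two_le).trans
    (Nat.prod_primeFactorsList hn).le

/-- A `ℤ`-linear representation on a `ℤ/p`-module, regarded as a `ℤ/p`-linear one. -/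
def zmodRepresentation (p : ℕ) [Module (ZMod p) A] (ρ : Representation ℤ G A) :
    Representation (ZMod p) G A where
  toFun g := (ρ g).toAddMonoidHom.toZModLinearMap p
  map_one' := by ext; simp
  map_mul' _ _ := by ext; simp

theorem ker_zmodRepresentation (p : ℕ) [Module (ZMod p) A] (ρ : Representation ℤ G A) :
    (zmodRepresentation p ρ).ker = ρ.ker := by
  ext g
  simp only [MonoidHom.mem_ker, LinearMap.ext_iff]
  rfl

/-- The torsion subgroups for the partial products of the prime factors of the order of `A` form a
filtration each of whose sections embeds equivariantly into the `p`-torsion for some prime `p`. -/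
theorem derivedSeries_le_ker_of_le_ker_torsion [Finite A] {m k : ℕ}
    (hk : Nat.log 2 (Nat.card A) ≤ k)
    (h : ∀ p : ℕ, p.Prime → derivedSeries G m ≤
      (torsionSubrepresentation ρ p).toRepresentation.ker) :
    derivedSeries G (m + (Nat.log 2 k + 1)) ≤ ρ.ker := by
  let l := (Nat.card A).primeFactorsList
  have hl : l.length ≤ 2 ^ (Nat.log 2 k + 1) := (length_primeFactorsList_le_log _).trans <|
    hk.trans (Nat.lt_pow_succ_log_self one_lt_two k).le
  refine derivedSeries_le_ker_of_filtration
    (f := fun i ↦ torsionSubrepresentation ρ (l.take i).prod) ?_ ?_ fun i ↦ ?_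
  · exact bot_unique fun x hx ↦ by
      have hx₁ : 1 • x = 0 := mem_torsionSubrepresentation.1 hx
      rwa [one_nsmul] at hx₁
  · refine top_unique fun x _ ↦ mem_torsionSubrepresentation.2 ?_
    rw [List.take_of_length_le hl, Nat.prod_primeFactorsList Nat.card_pos.ne', card_nsmul_eq_zero']
  · rcases lt_or_ge i l.length with hi | hi
    · rw [List.prod_take_succ l i hi]
      exact (h _ (Nat.prime_of_mem_primeFactorsList (List.getElem_mem hi))).trans
        (ker_torsion_le_ker_subquotient _ _)
    · rw [List.take_of_length_le hi, List.take_of_length_le (hi.trans i.le_succ)]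
      exact le_top.trans_eq (ker_subquotient_self _).symm

end Torsion

variable [Group.IsSolvable G] {k : ℕ}

theorem IrreducibleBound.derivedSeries_le_ker_of_zmodModule
    (h : ∀ m ≤ k, IrreducibleBound.{0, v, w} m) {A : Type w} [AddCommGroup A] [Finite A]
    (p : ℕ) [Fact p.Prime] [Module (ZMod p) A] (ρ : Representation ℤ G A)
    (hk : Nat.log 2 (Nat.card A) ≤ k) : derivedSeries G (401 * Nat.log 2 k + 2) ≤ ρ.ker := by
  have hdim : Module.finrank (ZMod p) A ≤ k := by
    refine (Nat.le_log_of_pow_le one_lt_two ?_).trans hk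
    calc 2 ^ Module.finrank (ZMod p) A
        ≤ p ^ Module.finrank (ZMod p) A := Nat.pow_le_pow_left (Fact.out : p.Prime).two_le _
      _ = Nat.card A := by rw [Module.natCard_eq_pow_finrank (K := ZMod p) (V := A), Nat.card_zmod]
  rw [← ker_zmodRepresentation p ρ]
  exact derivedSeries_le_ker h (zmodRepresentation p ρ) hdim

theorem IrreducibleBound.derivedSeries_le_ker_of_finite
    (h : ∀ m ≤ k, IrreducibleBound.{0, v, w} m) {A : Type w} [AddCommGroup A] [Finite A]
    (ρ : Representation ℤ G A) (hk : Nat.log 2 (Nat.card A) ≤ k) :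
    derivedSeries G (402 * Nat.log 2 k + 3) ≤ ρ.ker := by
  convert derivedSeries_le_ker_of_le_ker_torsion (ρ := ρ) hk (m := 401 * Nat.log 2 k + 2)
    fun p hp ↦ ?_ using 2
  · ring
  have := Fact.mk hp
  let _ : Module (ZMod p) (torsionSubrepresentation ρ p).toSubmodule :=
    AddCommGroup.zmodModule fun x ↦ Subtype.ext (mem_torsionSubrepresentation.1 x.2)
  exact derivedSeries_le_ker_of_zmodModule h p (torsionSubrepresentation ρ p).toRepresentation
    ((Nat.log_mono_right (Nat.card_le_card_of_injective _ Subtype.val_injective)).trans hk)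

theorem IrreducibleBound.derivedSeries_le_ker_mulAut
    (h : ∀ m ≤ k, IrreducibleBound.{0, v, w} m) {X : Type w} [CommGroup X] [Finite X]
    (φ : G →* MulAut X) (hk : Nat.log 2 (Nat.card X) ≤ k) :
    derivedSeries G (402 * Nat.log 2 k + 3) ≤ φ.ker := by
  let _ : MulDistribMulAction G X := MulDistribMulAction.compHom X φ
  have hker : (Representation.ofMulDistribMulAction G X).ker ≤ φ.ker := fun g hg ↦
    MulEquiv.ext fun x ↦ Additive.ofMul.injective (LinearMap.congr_fun hg (Additive.ofMul x))
  exact (derivedSeries_le_ker_of_finite h (Representation.ofMulDistribMulAction G X) hk).trans hker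

theorem four_mul_log_two_mul_add_one_le {L : ℕ} (hL : 3 ≤ L) :
    4 * Nat.log 2 (2 * L + 1) ≤ 3 * L := by
  have hpow : 2 ^ Nat.log 2 (2 * L + 1) ≤ 2 * L + 1 := Nat.pow_log_le_self 2 (by omega)
  by_contra! hlt
  generalize Nat.log 2 (2 * L + 1) = l at hpow hlt
  rcases lt_or_ge l 4 with hl | hl
  · interval_cases l <;> omega
  · obtain ⟨j, rfl⟩ := Nat.exists_eq_add_of_le hl
    have := (Nat.lt_two_pow_self : j < 2 ^ j)
    rw [pow_add] at hpow
    omega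

theorem two_mul_add_one_lt_two_pow {L : ℕ} (hL : 3 ≤ L) : 2 * L + 1 < 2 ^ L := by
  obtain ⟨j, rfl⟩ := Nat.exists_eq_add_of_le hL
  have := (Nat.lt_two_pow_self : j < 2 ^ j)
  rw [pow_add]
  omega

/-- For `n < 8` the whole automorphism group of `X` is small; for `8 ≤ n` the dimensions of the
representations of `G` on elementary abelian sections of `X` are logarithmic in `n`. The constant
has to be at least `6 * 2 ^ 6`, the bound obtained in the first case. -/
theorem IrreducibleBound.derivedSeries_le_ker_mulAut_of_card_le_sq {n : ℕ} (hn : 1 < n)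
    (h : ∀ m < n, IrreducibleBound.{0, v, w} m) {X : Type w} [CommGroup X] [Finite X]
    (φ : G →* MulAut X) (hX : Nat.card X ≤ n ^ 2) :
    derivedSeries G (399 * Nat.log 2 n) ≤ φ.ker := by
  rcases lt_or_ge n 8 with hn8 | hn8
  · have hX64 : Nat.card X ≤ 2 ^ 6 := hX.trans ((Nat.pow_le_pow_left hn8.le 2).trans (by norm_num))
    have hlog : 1 ≤ Nat.log 2 n := Nat.log_pos one_lt_two hn
    refine (derivedSeries_antitone G ?_).trans
      (derivedSeries_le_ker_mulAut_of_card_le_two_pow φ hX64)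
    omega
  · have hlog : 3 ≤ Nat.log 2 n := Nat.le_log_of_pow_le one_lt_two hn8
    have hlogn : 2 * Nat.log 2 n + 1 < n :=
      (two_mul_add_one_lt_two_pow hlog).trans_le (Nat.pow_log_le_self 2 (by omega))
    have hlogX : Nat.log 2 (Nat.card X) ≤ 2 * Nat.log 2 n + 1 := by
      refine Nat.lt_succ_iff.1 (Nat.log_lt_of_lt_pow Nat.card_pos.ne' (hX.trans_lt ?_))
      calc n ^ 2 < (2 ^ (Nat.log 2 n + 1)) ^ 2 :=
            Nat.pow_lt_pow_left (Nat.lt_pow_succ_log_self one_lt_two n) two_ne_zero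
        _ = 2 ^ (2 * Nat.log 2 n + 1 + 1) := by ring
    have hloglog := four_mul_log_two_mul_add_one_le hlog
    refine (derivedSeries_antitone G ?_).trans
      (derivedSeries_le_ker_mulAut (fun m hm ↦ h m (hm.trans_lt hlogn)) φ hlogX)
    omega

end FiniteAbelian

section NormalSubgroups

variable {G : Type*} [Group G]

theorem exists_normal_le_not_le_commutator_le [Group.IsSolvable G] {D Z : Subgroup G} [D.Normal]
    (hD : ¬ D ≤ Z) : ∃ N : Subgroup G, N.Normal ∧ N ≤ D ∧ ¬ N ≤ Z ∧ ⁅N, N⁆ ≤ Z := by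
  classical
  let N (i : ℕ) : Subgroup G := (derivedSeries D i).map D.subtype
  have hsucc (i : ℕ) : ⁅N i, N i⁆ = N (i + 1) := (Subgroup.map_commutator _ _ _).symm
  have hex : ∃ i, N i ≤ Z := by
    obtain ⟨n, hn⟩ := (inferInstance : Group.IsSolvable D).solvable
    exact ⟨n, by simp [N, hn]⟩
  obtain ⟨i, hi⟩ : ∃ i, Nat.find hex = i + 1 := Nat.exists_eq_succ_of_ne_zero fun h₀ ↦ hD <| by
    simpa [N, h₀, ← MonoidHom.range_eq_map] using Nat.find_spec hex
  refine ⟨N i, inferInstance, Subgroup.map_subtype_le _, Nat.find_min hex (by omega), ?_⟩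
  rw [hsucc, ← hi]
  exact Nat.find_spec hex

theorem ker_conjNormal (N : Subgroup G) [N.Normal] :
    (MulAut.conjNormal (H := N)).ker = Subgroup.centralizer N := by
  ext g
  simp only [MonoidHom.mem_ker, MulEquiv.ext_iff, Subtype.forall, Subtype.ext_iff,
    MulAut.conjNormal_apply, MulAut.one_apply, Subgroup.mem_centralizer_iff, mul_inv_eq_iff_eq_mul,
    SetLike.mem_coe]
  exact forall₂_congr fun _ _ ↦ eq_comm

theorem exists_maximal_normal_isMulCommutative (G : Type*) [Group G] :
    ∃ A : Subgroup G, Maximal (fun B : Subgroup G ↦ B.Normal ∧ IsMulCommutative B) A := by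
  refine (zorn_le_nonempty₀ {B : Subgroup G | B.Normal ∧ IsMulCommutative B}
    (fun c hc hchain A hA ↦ ?_) ⊥ ⟨inferInstance, inferInstance⟩).imp fun _ ↦ And.right
  have hdir := hchain.directedOn
  refine ⟨sSup c, ⟨⟨fun x hx g ↦ ?_⟩, .of_comm fun x y ↦ ?_⟩, fun B hB ↦ le_sSup hB⟩
  · obtain ⟨B, hB, hxB⟩ := (Subgroup.mem_sSup_of_directedOn ⟨A, hA⟩ hdir).1 hx
    exact (le_sSup hB : B ≤ sSup c) ((hc hB).1.conj_mem x hxB g)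
  · obtain ⟨B, hB, hxB⟩ := (Subgroup.mem_sSup_of_directedOn ⟨A, hA⟩ hdir).1 x.2
    obtain ⟨D, hD, hyD⟩ := (Subgroup.mem_sSup_of_directedOn ⟨A, hA⟩ hdir).1 y.2
    obtain ⟨E, hE, hBE, hDE⟩ := hdir B hB D hD
    have := (hc hE).2
    have hxy := congrArg Subtype.val (mul_comm' (⟨x, hBE hxB⟩ : E) ⟨y, hDE hyD⟩)
    exact Subtype.ext hxy

theorem isMulCommutative_sup {A B : Subgroup G} [IsMulCommutative A] [IsMulCommutative B]
    (hAB : A ≤ Subgroup.centralizer B) : IsMulCommutative ↥(A ⊔ B) := by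
  have hA := Subgroup.le_centralizer A
  have hB := Subgroup.le_centralizer B
  rw [← Subgroup.le_centralizer_iff_isMulCommutative]
  refine sup_le (Subgroup.le_centralizer_iff.1 (sup_le hA ?_))
    (Subgroup.le_centralizer_iff.1 (sup_le hAB hB))
  exact Subgroup.le_centralizer_iff.1 hAB

open Subgroup QuotientGroup in
theorem isMulCommutative_map_mk'_iff {Z : Subgroup G} [Z.Normal] {A : Subgroup G} :
    IsMulCommutative (A.map (mk' Z)) ↔ ⁅A, A⁆ ≤ Z := by
  rw [← le_centralizer_iff_isMulCommutative, ← commutator_eq_bot_iff_le_centralizer,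
    ← map_commutator, Subgroup.map_eq_bot_iff, ker_mk']

open Subgroup QuotientGroup in
/-- Take for `A` the preimage of a maximal abelian normal subgroup of `G ⧸ center G`. A normal
subgroup of the centralizer of `A` that is abelian modulo the center lies in `A`, by maximality. -/
theorem exists_normal_centralizer_le_center [Group.IsSolvable G]
    (hG : ∀ A : Subgroup G, A.Normal → IsMulCommutative A → A ≤ center G) :
    ∃ A : Subgroup G, A.Normal ∧ ⁅A, A⁆ ≤ center G ∧ centralizer A ≤ center G := by
  obtain ⟨B, ⟨_, _⟩, hmax⟩ := exists_maximal_normal_isMulCommutative (G ⧸ center G)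
  let A := B.comap (mk' (center G))
  have hAB : A.map (mk' (center G)) = B := map_comap_eq_self_of_surjective (mk'_surjective _) B
  refine ⟨A, inferInstance, isMulCommutative_map_mk'_iff.1 (by rwa [hAB]), ?_⟩
  by_contra hC
  obtain ⟨N, _, hNC, hNZ, hNN⟩ := exists_normal_le_not_le_commutator_le hC
  have := isMulCommutative_map_mk'_iff.2 hNN
  have hBN : B ≤ centralizer (N.map (mk' (center G))) := by
    rw [← hAB, ← commutator_eq_bot_iff_le_centralizer, ← map_commutator,
      commutator_eq_bot_iff_le_centralizer.2 (le_centralizer_iff.1 hNC), Subgroup.map_bot]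
  have := (inferInstance : N.Normal).map (mk' (center G)) (mk'_surjective _)
  have hNA : N ≤ A := map_le_iff_le_comap.1 <| le_sup_right.trans <|
    hmax ⟨inferInstance, isMulCommutative_sup hBN⟩ le_sup_left
  exact hNZ <| hG N inferInstance <| le_centralizer_iff_isMulCommutative.1 <|
    hNC.trans (centralizer_le hNA)

theorem commutator_le_centralizer {K A : Subgroup G} (h : ⁅K, A⁆ ≤ Subgroup.center G) :
    ⁅K, K⁆ ≤ Subgroup.centralizer A := by
  have hKA : ⁅⁅K, A⁆, K⁆ = ⊥ := Subgroup.commutator_eq_bot_iff_le_centralizer.2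
    (h.trans (Subgroup.center_le_centralizer _))
  rw [← Subgroup.commutator_eq_bot_iff_le_centralizer]
  exact Subgroup.commutator_commutator_eq_bot_of_rotate hKA (by rwa [Subgroup.commutator_comm A K])

end NormalSubgroups

section Permutations

open MulAction
open scoped Pointwise

section FaithfulPrimitive

variable {G Ω : Type*} [Group G] [MulAction G Ω] [FaithfulSMul G Ω]

theorem eq_one_of_mem_centralizer_of_smul_eq {N : Subgroup G} [IsPretransitive N Ω] {g : G}
    (hg : g ∈ Subgroup.centralizer (N : Set G)) {ω : Ω} (hω : g • ω = ω) : g = 1 := by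
  refine FaithfulSMul.eq_of_smul_eq_smul (α := Ω) fun ω' ↦ ?_
  obtain ⟨a, rfl⟩ := exists_smul_eq N ω ω'
  rw [one_smul, Subgroup.smul_def, smul_smul, ← Subgroup.mem_centralizer_iff.1 hg a a.2,
    mul_smul, hω]

theorem centralizer_le_of_isPretransitive {N : Subgroup G} [IsPretransitive N Ω] [Nonempty Ω]
    (hN : N ≤ Subgroup.centralizer N) : Subgroup.centralizer N ≤ N := by
  intro g hg
  obtain ⟨ω⟩ := ‹Nonempty Ω›
  obtain ⟨a, ha⟩ := exists_smul_eq N (g • ω) ω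
  have hag : (a : G) * g = 1 := eq_one_of_mem_centralizer_of_smul_eq (N := N) (ω := ω)
    (mul_mem (hN a.2) hg) (by rw [mul_smul]; exact ha)
  rw [eq_inv_of_mul_eq_one_right hag]
  exact inv_mem a.2

theorem card_le_of_isPretransitive {N : Subgroup G} [IsPretransitive N Ω] [Nonempty Ω] [Finite Ω]
    (hN : N ≤ Subgroup.centralizer N) : Finite N ∧ Nat.card N ≤ Nat.card Ω := by
  obtain ⟨ω⟩ := ‹Nonempty Ω›
  have hinj : Function.Injective fun a : N ↦ a • ω := fun a b hab ↦ by
    have hba : b⁻¹ * a = 1 := Subtype.ext <| eq_one_of_mem_centralizer_of_smul_eq (N := N)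
      (hN (b⁻¹ * a).2) (ω := ω) (by
        rw [← Subgroup.smul_def, mul_smul, inv_smul_eq_iff]; exact hab)
    exact (inv_mul_eq_one.1 hba).symm
  exact ⟨Finite.of_injective _ hinj, Nat.card_le_card_of_injective _ hinj⟩

theorem isPretransitive_of_not_le_bot [IsPreprimitive G Ω] {N : Subgroup G} [N.Normal]
    (hN : ¬ N ≤ ⊥) : IsPretransitive N Ω := by
  refine IsQuasiPreprimitive.isPretransitive_of_normal (G := G) fun h ↦ hN fun a ha ↦ ?_
  refine Subgroup.mem_bot.2 (FaithfulSMul.eq_of_smul_eq_smul (α := Ω) fun ω ↦ ?_)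
  have hω : ω ∈ fixedPoints N Ω := h ▸ Set.mem_univ ω
  rw [one_smul]
  exact hω ⟨a, ha⟩

end FaithfulPrimitive

section Imprimitive

variable {G Ω : Type*} [Group G] [MulAction G Ω]

theorem le_ker_toPermHom_iff {H : Subgroup G} :
    H ≤ (toPermHom G Ω).ker ↔ ∀ g ∈ H, ∀ ω : Ω, g • ω = ω :=
  forall₂_congr fun _ _ ↦ Equiv.ext_iff

theorem card_orbit_lt_of_not_isPretransitive [Finite Ω] (h : ¬ IsPretransitive G Ω) (ω : Ω) :
    Nat.card (orbit G ω) < Nat.card Ω := by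
  rw [Nat.card_coe_set_eq]
  exact Set.ncard_lt_card fun hω ↦ h ((isPretransitive_iff_orbit_eq_univ ω).2 hω)

theorem exists_isBlock_of_not_isPreprimitive [Finite Ω] [IsPretransitive G Ω]
    (h : ¬ IsPreprimitive G Ω) (ω : Ω) :
    ∃ B : Set Ω, ω ∈ B ∧ IsBlock G B ∧ Nat.card B < Nat.card Ω ∧
      Nat.card (orbit G B) < Nat.card Ω ∧ Nat.card B * Nat.card (orbit G B) = Nat.card Ω := by
  obtain ⟨B, hω, hB, hBtriv⟩ : ∃ B : Set Ω, ω ∈ B ∧ IsBlock G B ∧ ¬ IsTrivialBlock B := by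
    by_contra! hcon
    exact h (IsPreprimitive.of_isTrivialBlock_base ω fun {B} hω hB ↦ hcon B hω hB)
  have hcard := hB.ncard_block_mul_ncard_orbit_eq ⟨ω, hω⟩
  have hB₁ : 1 < B.ncard := by
    by_contra! hle
    exact hBtriv (.inl ((Set.ncard_le_one_iff_subsingleton).1 hle))
  have hBlt : B.ncard < Nat.card Ω := Set.ncard_lt_card fun hB ↦ hBtriv (.inr hB)
  simp only [Nat.card_coe_set_eq]
  refine ⟨B, hω, hB, hBlt, ?_, hcard⟩
  have hpos : 0 < (orbit G B).ncard := Nat.pos_of_ne_zero fun h₀ ↦ by simp [h₀] at hcard; omega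
  rw [← hcard]
  exact lt_mul_left hpos hB₁

theorem derivedSeries_smul_eq_of_mem {B : Set Ω} {a b : ℕ}
    (ha : derivedSeries G a ≤ (toPermHom G (orbit G B)).ker)
    (hb : derivedSeries (stabilizer G B) b ≤ (toPermHom (stabilizer G B) B).ker)
    {g : G} (hg : g ∈ derivedSeries G (a + b)) {ω : Ω} (hω : ω ∈ B) : g • ω = ω := by
  have hstab : derivedSeries G a ≤ stabilizer G B := fun v hv ↦
    congrArg Subtype.val (le_ker_toPermHom_iff.1 ha v hv ⟨B, mem_orbit_self B⟩)
  obtain ⟨v, hv, rfl⟩ := derivedSeries_add_le_map hstab b hg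
  exact congrArg Subtype.val (le_ker_toPermHom_iff.1 hb v hv ⟨ω, hω⟩)

end Imprimitive

theorem log_two_add_log_two_le {a b : ℕ} (h : a * b ≠ 0) :
    Nat.log 2 a + Nat.log 2 b ≤ Nat.log 2 (a * b) := by
  obtain ⟨ha, hb⟩ := mul_ne_zero_iff.1 h
  refine Nat.le_log_of_pow_le one_lt_two ?_
  rw [pow_add]
  exact Nat.mul_le_mul (Nat.pow_log_le_self 2 ha) (Nat.pow_log_le_self 2 hb)

universe v w

open scoped IsMulCommutative in
theorem IrreducibleBound.derivedSeries_eq_bot_of_isPreprimitive {G : Type v} [Group G]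
    [Group.IsSolvable G] {Ω : Type w} [Finite Ω] [Nontrivial Ω] [MulAction G Ω] [FaithfulSMul G Ω]
    [IsPreprimitive G Ω] (h : ∀ m < Nat.card Ω, IrreducibleBound.{0, v, v} m) :
    derivedSeries G (400 * Nat.log 2 (Nat.card Ω)) = ⊥ := by
  have hG : ¬ (⊤ : Subgroup G) ≤ ⊥ := fun htop ↦ by
    obtain ⟨x, y, hxy⟩ := exists_pair_ne Ω
    obtain ⟨g, rfl⟩ := exists_smul_eq G x y
    have hg : g = 1 := htop trivial
    exact hxy (by rw [hg, one_smul])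
  obtain ⟨N, _, -, hN, hNcomm⟩ := exists_normal_le_not_le_commutator_le hG
  have hNcent := Subgroup.commutator_eq_bot_iff_le_centralizer.1 (le_bot_iff.1 hNcomm)
  have := isPretransitive_of_not_le_bot (Ω := Ω) hN
  have := Subgroup.le_centralizer_iff_isMulCommutative.1 hNcent
  obtain ⟨_, hcard⟩ := card_le_of_isPretransitive (Ω := Ω) hNcent
  have hcent : derivedSeries G (399 * Nat.log 2 (Nat.card Ω)) ≤ N := by
    refine (derivedSeries_le_ker_mulAut_of_card_le_sq Finite.one_lt_card h
      (MulAut.conjNormal (H := N)) (hcard.trans (Nat.le_self_pow two_ne_zero _))).trans ?_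
    rw [ker_conjNormal]
    exact centralizer_le_of_isPretransitive (Ω := Ω) hNcent
  have hlog : 1 ≤ Nat.log 2 (Nat.card Ω) := Nat.log_pos one_lt_two Finite.one_lt_card
  have hbot : derivedSeries G (399 * Nat.log 2 (Nat.card Ω) + 1) ≤ ⊥ :=
    (Subgroup.commutator_mono hcent hcent).trans hNcomm
  exact le_bot_iff.1 ((derivedSeries_antitone G (by omega)).trans hbot)

theorem IrreducibleBound.derivedSeries_le_ker_toPermHom_of_isPreprimitive {G : Type v} [Group G]
    [Group.IsSolvable G] {Ω : Type w} [Finite Ω] [Nontrivial Ω] [MulAction G Ω]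
    [IsPreprimitive G Ω] (h : ∀ m < Nat.card Ω, IrreducibleBound.{0, v, v} m) :
    derivedSeries G (400 * Nat.log 2 (Nat.card Ω)) ≤ (toPermHom G Ω).ker := by
  let Q := G ⧸ (toPermHom G Ω).ker
  let _ : MulAction Q Ω := compHom Ω (QuotientGroup.kerLift (toPermHom G Ω))
  have : FaithfulSMul Q Ω := ⟨fun hab ↦
    QuotientGroup.kerLift_injective (toPermHom G Ω) (Equiv.ext hab)⟩
  let f : Ω →ₑ[QuotientGroup.mk' (toPermHom G Ω).ker] Ω := ⟨id, fun _ _ ↦ rfl⟩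
  have : IsPreprimitive Q Ω := .of_surjective (f := f) Function.surjective_id
  exact (derivedSeries_le_ker_of_derivedSeries_eq_bot (derivedSeries_eq_bot_of_isPreprimitive h)
    (QuotientGroup.mk' (toPermHom G Ω).ker)).trans_eq (QuotientGroup.ker_mk' _)

theorem IrreducibleBound.derivedSeries_le_ker_toPermHom {n : ℕ}
    (h : ∀ m < n, IrreducibleBound.{0, v, v} m) {G : Type v} [Group G] [Group.IsSolvable G]
    {Ω : Type w} [Finite Ω] [MulAction G Ω] (hΩ : Nat.card Ω ≤ n) :
    derivedSeries G (400 * Nat.log 2 (Nat.card Ω)) ≤ (toPermHom G Ω).ker := by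
  induction hd : Nat.card Ω using Nat.strong_induction_on generalizing G Ω with | _ d ih
  subst hd
  rw [le_ker_toPermHom_iff]
  intro g hg ω
  rcases subsingleton_or_nontrivial Ω with _ | _
  · exact Subsingleton.elim _ _
  by_cases htrans : IsPretransitive G Ω
  · by_cases hprim : IsPreprimitive G Ω
    · exact le_ker_toPermHom_iff.1 (derivedSeries_le_ker_toPermHom_of_isPreprimitive
        fun m hm ↦ h m (hm.trans_le hΩ)) g hg ω
    · obtain ⟨B, hω, -, hB, horb, hcard⟩ := exists_isBlock_of_not_isPreprimitive hprim ω
      have horbit := ih _ horb (G := G) (Ω := orbit G B) (horb.le.trans hΩ) rfl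
      have hblock := ih _ hB (G := stabilizer G B) (Ω := B) (hB.le.trans hΩ) rfl
      have hlog := log_two_add_log_two_le (hcard.trans_ne Nat.card_pos.ne')
      rw [hcard] at hlog
      exact derivedSeries_smul_eq_of_mem horbit hblock
        (derivedSeries_antitone G (by omega) hg) hω
  · have hlt := card_orbit_lt_of_not_isPretransitive htrans ω
    have horbit := ih _ hlt (G := G) (Ω := orbit G ω) (hlt.le.trans hΩ) rfl
    refine congrArg Subtype.val (le_ker_toPermHom_iff.1 horbit g
      (derivedSeries_antitone G ?_ hg) ⟨ω, mem_orbit_self ω⟩)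
    gcongr

end Permutations

section FixedVectors

theorem exists_isAtom_le {F G V : Type*} [Field F] [Group G] [AddCommGroup V] [Module F V]
    [FiniteDimensional F V] {ρ : Representation F G V} {N : Subrepresentation ρ} (hN : N ≠ ⊥) :
    ∃ W ≤ N, IsAtom W := by
  have : WellFoundedLT (Subrepresentation ρ) := finrank_toSubmodule_strictMono.wellFoundedLT
  have := isAtomic_of_orderBot_wellFounded_lt (α := Subrepresentation ρ) wellFounded_lt
  obtain ⟨W, hW, hWN⟩ := (eq_bot_or_exists_atom_le N).resolve_left hN
  exact ⟨W, hWN, hW⟩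

theorem le_ker_of_forall_apply_eq {F G V : Type*} [Field F] [Group G] [AddCommGroup V]
    [Module F V] {ρ : Representation F G V} [ρ.IsIrreducible] {N : Subgroup G} [N.Normal] {x : V}
    (hx : x ≠ 0) (hN : ∀ g ∈ N, ρ g x = x) : N ≤ ρ.ker := by
  let W : Subrepresentation ρ :=
    ⟨Representation.invariants (ρ.comp N.subtype), fun g _ hy ↦ ρ.le_comap_invariants N g hy⟩
  have hW : W = ⊤ := (eq_bot_or_eq_top W).resolve_left fun h ↦ hx <| by
    have hxW : x ∈ W := fun g ↦ hN g g.2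
    rwa [h] at hxW
  intro g hg
  refine LinearMap.ext fun y ↦ ?_
  have hy : y ∈ W := hW ▸ trivial
  exact hy ⟨g, hg⟩

universe u v w

theorem IrreducibleBound.exists_forall_apply_eq {F : Type u} [Field F] [IsAlgClosed F] {V : Type w}
    [AddCommGroup V] [Module F V] [FiniteDimensional F V] {G : Type v} [Group G]
    [Group.IsSolvable G] {n : ℕ} (h : ∀ m ≤ n, IrreducibleBound.{u, v, w} m)
    {ρ : Representation F G V} {N : Subrepresentation ρ} (hN : N ≠ ⊥)
    (hn : Module.finrank F N.toSubmodule ≤ n) :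
    ∃ x ∈ N, x ≠ 0 ∧ ∀ g ∈ derivedSeries G (400 * Nat.log 2 n + 1), ρ g x = x := by
  obtain ⟨W, hWN, hW⟩ := exists_isAtom_le hN
  obtain ⟨x, hxW, hx⟩ := (Submodule.ne_bot_iff _).1 fun h ↦
    hW.1 (Subrepresentation.toSubmodule_injective h)
  refine ⟨x, hWN hxW, hx, fun g hg ↦ sub_eq_zero.1 ?_⟩
  exact (mem_ker_subquotient (K := ⊥)).1 (derivedSeries_le_ker_subquotient h
    ((finrank_toSubmodule_strictMono.monotone hWN).trans hn) hW.bot_covBy.wcovBy hg) x hxW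

end FixedVectors

section Weights

open Module.End

theorem card_mul_le_finrank_of_iSupIndep {F V ι : Type*} [Field F] [AddCommGroup V] [Module F V]
    [FiniteDimensional F V] [Finite ι] {p : ι → Submodule F V} (hp : iSupIndep p) {d : ℕ}
    (hd : ∀ i, d ≤ Module.finrank F (p i)) : Nat.card ι * d ≤ Module.finrank F V := by
  classical
  have := Fintype.ofFinite ι
  calc Nat.card ι * d
      ≤ ∑ i, Module.finrank F (p i) := by
        rw [Nat.card_eq_fintype_card, ← Finset.card_univ, ← smul_eq_mul]
        exact Finset.card_nsmul_le_sum _ _ _ fun i _ ↦ hd i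
    _ = Module.finrank F (DirectSum ι fun i ↦ p i) := (Module.finrank_directSum F _).symm
    _ ≤ Module.finrank F V :=
        LinearMap.finrank_le_finrank_of_injective hp.dfinsupp_lsum_injective

variable {F A V : Type*} [Field F] [Group A] [AddCommGroup V] [Module F V]

/-- The space of vectors on which each `a : A` acts as the scalar `χ a`. -/
def weightSpace (ρ : Representation F A V) (χ : A → F) : Submodule F V :=
  ⨅ a, eigenspace (ρ a) (χ a)

/-- The weights of a representation, as functions on the group (each of them is automatically a
character). -/
def weights (ρ : Representation F A V) : Set (A → F) :=
  {χ | weightSpace ρ χ ≠ ⊥}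

variable {ρ : Representation F A V}

theorem mem_weightSpace {χ : A → F} {x : V} : x ∈ weightSpace ρ χ ↔ ∀ a, ρ a x = χ a • x := by
  simp only [weightSpace, Submodule.mem_iInf, mem_eigenspace_iff]

theorem mem_weights_of_mem_weightSpace {χ : A → F} {x : V} (hx : x ∈ weightSpace ρ χ)
    (hx₀ : x ≠ 0) : χ ∈ weights ρ :=
  (Submodule.ne_bot_iff _).2 ⟨x, hx, hx₀⟩

theorem iSupIndep_weightSpace (hρ : ∀ a b, Commute (ρ a) (ρ b)) : iSupIndep (weightSpace ρ) :=
  (independent_iInf_maxGenEigenspace_of_forall_mapsTo (fun a ↦ ρ a) fun a b μ ↦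
    mapsTo_maxGenEigenspace_of_comm (hρ b a) μ).mono
      fun _ ↦ iInf_mono fun _ ↦ eigenspace_le_maxGenEigenspace

variable [FiniteDimensional F V]

theorem finite_weights (hρ : ∀ a b, Commute (ρ a) (ρ b)) : Finite (weights ρ) :=
  WellFoundedGT.finite_ne_bot_of_iSupIndep (iSupIndep_weightSpace hρ)

theorem card_weights_mul_le_finrank (hρ : ∀ a b, Commute (ρ a) (ρ b)) {d : ℕ}
    (hd : ∀ χ ∈ weights ρ, d ≤ Module.finrank F (weightSpace ρ χ)) :
    Nat.card (weights ρ) * d ≤ Module.finrank F V :=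
  have := finite_weights hρ
  card_mul_le_finrank_of_iSupIndep
    ((iSupIndep_weightSpace hρ).comp Subtype.val_injective) fun χ ↦ hd χ χ.2

/-- On a minimal subrepresentation every eigenspace of every `ρ a` is everything. -/
theorem nonempty_weights [IsAlgClosed F] [Nontrivial V] (hρ : ∀ a b, Commute (ρ a) (ρ b)) :
    (weights ρ).Nonempty := by
  have htop : (⊤ : Subrepresentation ρ) ≠ ⊥ := fun h ↦
    top_ne_bot (α := Submodule F V) (congrArg Subrepresentation.toSubmodule h)
  obtain ⟨W, -, hW⟩ := exists_isAtom_le htop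
  have hW₀ : W.toSubmodule ≠ ⊥ := fun h ↦ hW.1 (Subrepresentation.toSubmodule_injective h)
  have := Submodule.nontrivial_iff_ne_bot.2 hW₀
  have hscalar (a : A) : ∃ μ : F, ∀ x ∈ W, ρ a x = μ • x := by
    obtain ⟨μ, hμ⟩ := exists_eigenvalue (W.toRepresentation a)
    obtain ⟨x, hx⟩ := hμ.exists_hasEigenvector
    let E : Subrepresentation ρ := ⟨eigenspace (ρ a) μ, fun b y hy ↦
      mapsTo_genEigenspace_of_comm (hρ a b) μ 1 hy⟩
    have hxE : (x : V) ∈ W ⊓ E :=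
      ⟨x.2, mem_eigenspace_iff.2 (congrArg Subtype.val hx.apply_eq_smul)⟩
    have hWE : W ⊓ E = W := (hW.le_iff.1 inf_le_left).resolve_left fun h ↦ hx.2 <| by
      rw [h] at hxE
      exact Subtype.ext hxE
    exact ⟨μ, fun y hy ↦ mem_eigenspace_iff.1 (inf_eq_left.1 hWE hy)⟩
  choose χ hχ using hscalar
  obtain ⟨x, hxW, hx⟩ := (Submodule.ne_bot_iff _).1 hW₀
  exact ⟨χ, mem_weights_of_mem_weightSpace (mem_weightSpace.2 fun a ↦ hχ a x hxW) hx⟩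

end Weights

section Clifford

section NormalSubgroup

variable {F G V : Type*} [Field F] [Group G] [AddCommGroup V] [Module F V]
  {ρ : Representation F G V} {A : Subgroup G} [A.Normal]

theorem apply_mem_weightSpace {χ : A → F} {x : V} (hx : x ∈ weightSpace (ρ.comp A.subtype) χ)
    (g : G) : ρ g x ∈ weightSpace (ρ.comp A.subtype) fun a ↦ χ (MulAut.conjNormal g⁻¹ a) := by
  rw [mem_weightSpace] at hx ⊢
  intro a
  have hconj : (a : G) * g = g * (MulAut.conjNormal g⁻¹ a : A) := by simp [mul_assoc]
  change ρ a (ρ g x) = _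
  rw [← Module.End.mul_apply, ← map_mul, hconj, map_mul, Module.End.mul_apply]
  exact (congrArg (ρ g) (hx (MulAut.conjNormal g⁻¹ a))).trans (map_smul _ _ _)

/-- The conjugation action on the weights of a normal subgroup, for which `g` maps the space of the
weight `χ` to that of `g • χ`. -/
instance : MulAction G (weights (ρ.comp A.subtype)) where
  smul g χ := ⟨fun a ↦ χ.1 (MulAut.conjNormal g⁻¹ a), by
    obtain ⟨x, hx, hx₀⟩ := (Submodule.ne_bot_iff _).1 χ.2
    exact mem_weights_of_mem_weightSpace (apply_mem_weightSpace hx g)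
      ((ρ.apply_bijective g).injective.ne_iff' (map_zero _) |>.2 hx₀)⟩
  one_smul χ := Subtype.ext <| funext fun a ↦ congrArg χ.1 (by simp)
  mul_smul g h χ := Subtype.ext <| funext fun a ↦ congrArg χ.1 (by simp)

theorem apply_mem_weightSpace_of_smul_eq {χ : weights (ρ.comp A.subtype)} {g : G}
    (hg : g • χ = χ) {x : V} (hx : x ∈ weightSpace (ρ.comp A.subtype) χ) :
    ρ g x ∈ weightSpace (ρ.comp A.subtype) χ := by
  have h := apply_mem_weightSpace hx g
  rwa [show (fun a ↦ χ.1 (MulAut.conjNormal g⁻¹ a)) = χ from congrArg Subtype.val hg] at h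

/-- The space of a weight `χ` of a normal subgroup, as a representation of the stabilizer of `χ`. -/
def weightSubrepresentation (χ : weights (ρ.comp A.subtype)) :
    Subrepresentation (ρ.comp (MulAction.stabilizer G χ).subtype) :=
  ⟨weightSpace (ρ.comp A.subtype) χ, fun g _ hx ↦ apply_mem_weightSpace_of_smul_eq g.2 hx⟩

end NormalSubgroup

universe u v w

variable {F : Type u} [Field F] [IsAlgClosed F] {V : Type w} [AddCommGroup V] [Module F V]
  [FiniteDimensional F V] {G : Type v} [Group G] [Group.IsSolvable G]

/-- If the `A`-weights are `t` in number and `χ` has the least multiplicity `d`, so that `t * d` is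
at most the dimension, then the derived series first stabilizes `χ` and then fixes a vector of
weight `χ`. -/
theorem IrreducibleBound.derivedSeries_le_ker_of_forall_weightSpace_ne_top
    {ρ : Representation F G V} [ρ.IsIrreducible]
    (hperm : ∀ m < Module.finrank F V, IrreducibleBound.{0, v, v} m)
    (h : ∀ m < Module.finrank F V, IrreducibleBound.{u, v, w} m)
    {A : Subgroup G} [A.Normal] [IsMulCommutative A]
    (htop : ∀ χ, weightSpace (ρ.comp A.subtype) χ ≠ ⊤) :
    derivedSeries G (400 * Nat.log 2 (Module.finrank F V) + 1) ≤ ρ.ker := by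
  have : Nontrivial V := IsSimpleModule.nontrivial (MonoidAlgebra F G) ρ.asModule
  have hA (a b : A) : Commute ((ρ.comp A.subtype) a) ((ρ.comp A.subtype) b) :=
    Commute.map (mul_comm' a b) _
  have := finite_weights hA
  have := (nonempty_weights hA).to_subtype
  obtain ⟨χ, hχ⟩ := Finite.exists_min fun χ : weights (ρ.comp A.subtype) ↦
    Module.finrank F (weightSpace (ρ.comp A.subtype) χ)
  set t := Nat.card (weights (ρ.comp A.subtype))
  set d := Module.finrank F (weightSpace (ρ.comp A.subtype) χ.1)
  have htd : t * d ≤ Module.finrank F V := card_weights_mul_le_finrank hA fun ψ hψ ↦ hχ ⟨ψ, hψ⟩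
  have ht : 0 < t := Nat.card_pos
  have hd : 0 < d := Submodule.one_le_finrank_iff.2 χ.2
  have hdlt : d < Module.finrank F V := Submodule.finrank_lt (htop χ)
  have hlog : Nat.log 2 t + Nat.log 2 d ≤ Nat.log 2 (Module.finrank F V) :=
    (log_two_add_log_two_le (mul_pos ht hd).ne').trans (Nat.log_mono_right htd)
  have hstab : derivedSeries G (400 * Nat.log 2 t) ≤ MulAction.stabilizer G χ := fun g hg ↦
    le_ker_toPermHom_iff.1
      (derivedSeries_le_ker_toPermHom hperm ((Nat.le_mul_of_pos_right t hd).trans htd)) g hg χ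
  have hbot : weightSubrepresentation χ ≠ ⊥ := fun hbot ↦
    χ.2 (congrArg Subrepresentation.toSubmodule hbot)
  obtain ⟨x, -, hx₀, hx⟩ := exists_forall_apply_eq (fun m hm ↦ h m (hm.trans_lt hdlt)) hbot le_rfl
  refine le_ker_of_forall_apply_eq hx₀ fun g hg ↦ ?_
  obtain ⟨s, hs, rfl⟩ := derivedSeries_add_le_map hstab (400 * Nat.log 2 d + 1)
    (derivedSeries_antitone G (by omega) hg)
  exact hx s hs

end Clifford

section QuasiPrimitive

open Representation Subgroup QuotientGroup

section Conjugation

variable {F G V : Type*} [Field F] [Group G] [AddCommGroup V] [Module F V]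
  {ρ : Representation F G V}

theorem le_center_of_weightSpace_eq_top (hρ : Function.Injective ρ) {A : Subgroup G} {χ : A → F}
    (hχ : weightSpace (ρ.comp A.subtype) χ = ⊤) : A ≤ center G := by
  intro a ha
  refine mem_center_iff.2 fun g ↦ hρ (LinearMap.ext fun x ↦ ?_)
  have hscalar (y : V) : ρ a y = χ ⟨a, ha⟩ • y :=
    mem_weightSpace.1 (hχ ▸ Submodule.mem_top : y ∈ weightSpace (ρ.comp A.subtype) χ) ⟨a, ha⟩
  simp only [map_mul, Module.End.mul_apply, hscalar, map_smul]

theorem linHom_apply_self (g a : G) : linHom ρ ρ g (ρ a) = ρ (g * a * g⁻¹) := by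
  rw [linHom_apply, mul_assoc, map_mul, map_mul]
  rfl

theorem inv_mul_mem_centralizer_of_mem_weightSpace_linHom (hρ : Function.Injective ρ)
    {A : Subgroup G} {χ : A → F} {a b : G}
    (ha : ρ a ∈ weightSpace ((linHom ρ ρ).comp A.subtype) χ)
    (hb : ρ b ∈ weightSpace ((linHom ρ ρ).comp A.subtype) χ) : a⁻¹ * b ∈ centralizer A := by
  refine mem_centralizer_iff.2 fun g hg ↦ ?_
  have hag : ρ (g⁻¹ * a * g⁻¹⁻¹) = χ ⟨g⁻¹, inv_mem hg⟩ • ρ a :=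
    (linHom_apply_self g⁻¹ a).symm.trans (mem_weightSpace.1 ha ⟨g⁻¹, inv_mem hg⟩)
  have hbg : ρ (g⁻¹ * b * g⁻¹⁻¹) = χ ⟨g⁻¹, inv_mem hg⟩ • ρ b :=
    (linHom_apply_self g⁻¹ b).symm.trans (mem_weightSpace.1 hb ⟨g⁻¹, inv_mem hg⟩)
  have hab : g⁻¹ * a * g⁻¹⁻¹ * (a⁻¹ * b) = g⁻¹ * b * g⁻¹⁻¹ := hρ <| by
    rw [map_mul, hag, hbg, smul_mul_assoc, ← map_mul, mul_inv_cancel_left]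
  simpa [mul_assoc] using congrArg (a⁻¹ * g * ·) hab

variable [FiniteDimensional F V] [IsAlgClosed F] [ρ.IsIrreducible]

theorem exists_apply_eq_smul_of_mem_center {z : G} (hz : z ∈ center G) :
    ∃ c : F, ∀ x, ρ z x = c • x := by
  let f : IntertwiningMap ρ ρ := ⟨ρ z, fun g ↦ by
    rw [← Module.End.mul_eq_comp, ← Module.End.mul_eq_comp, ← map_mul, ← map_mul,
      mem_center_iff.1 hz g]⟩
  obtain ⟨c, hc⟩ := IsIrreducible.algebraMap_intertwiningMap_bijective_of_isAlgClosed.2 f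
  exact ⟨c, fun x ↦ (DFunLike.congr_fun hc x).symm⟩

theorem exists_mem_weightSpace_linHom {A : Subgroup G} (hA : ⁅A, A⁆ ≤ center G) {a : G}
    (ha : a ∈ A) : ∃ χ, ρ a ∈ weightSpace ((linHom ρ ρ).comp A.subtype) χ := by
  choose c hc using fun g : A ↦
    exists_apply_eq_smul_of_mem_center (ρ := ρ) (hA (commutator_mem_commutator g.2 ha))
  refine ⟨c, mem_weightSpace.2 fun g ↦ (linHom_apply_self (g : G) a).trans ?_⟩
  refine LinearMap.ext fun x ↦ ?_
  rw [← inv_mul_cancel_right ((g : G) * a * (g : G)⁻¹) a, ← commutatorElement_def, map_mul]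
  exact hc g (ρ a x)

theorem center_le_ker_linHom : center G ≤ (linHom ρ ρ).ker := by
  intro z hz
  obtain ⟨c, hc⟩ := exists_apply_eq_smul_of_mem_center (ρ := ρ) hz
  refine LinearMap.ext fun T ↦ LinearMap.ext fun x ↦ ?_
  calc ρ z (T (ρ z⁻¹ x)) = T (ρ z (ρ z⁻¹ x)) := by rw [hc, hc, map_smul]
    _ = T x := by rw [self_inv_apply]

theorem commute_linHom {A : Subgroup G} (hA : ⁅A, A⁆ ≤ center G) (a b : A) :
    Commute (((linHom ρ ρ).comp A.subtype) a) (((linHom ρ ρ).comp A.subtype) b) := by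
  have hab : linHom ρ ρ ⁅(a : G), (b : G)⁆ = 1 :=
    center_le_ker_linHom (hA (commutator_mem_commutator a.2 b.2))
  change linHom ρ ρ a * linHom ρ ρ b = linHom ρ ρ b * linHom ρ ρ a
  rw [← map_mul, ← map_mul, ← one_mul (linHom ρ ρ (b * a)), ← hab, ← map_mul]
  congr 1
  simp [commutatorElement_def, mul_assoc]

theorem card_map_mk'_center_le (hρ : Function.Injective ρ) {A : Subgroup G}
    (hA : ⁅A, A⁆ ≤ center G) (hAC : A ⊓ centralizer A ≤ center G) :
    Finite (A.map (mk' (center G))) ∧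
      Nat.card (A.map (mk' (center G))) ≤ Module.finrank F V ^ 2 := by
  choose a haA ha using fun b : A.map (mk' (center G)) ↦ mem_map.1 b.2
  replace haA (b) : a b ∈ A := haA b
  choose χ hχ using fun b ↦ exists_mem_weightSpace_linHom (ρ := ρ) hA (haA b)
  have : Nontrivial V := IsSimpleModule.nontrivial (MonoidAlgebra F G) ρ.asModule
  have hne (g : G) : ρ g ≠ 0 := fun h ↦ by
    obtain ⟨x, hx⟩ := exists_ne (0 : V)
    exact hx ((ρ.apply_bijective g).injective (by rw [h, LinearMap.zero_apply, map_zero]))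
  let f (b : A.map (mk' (center G))) : weights ((linHom ρ ρ).comp A.subtype) :=
    ⟨χ b, mem_weights_of_mem_weightSpace (hχ b) (hne _)⟩
  have hf : Function.Injective f := fun b b' hbb' ↦ by
    have hχb : χ b = χ b' := congrArg Subtype.val hbb'
    have hbC := inv_mul_mem_centralizer_of_mem_weightSpace_linHom hρ (hχ b) (hχb ▸ hχ b')
    rw [Subtype.ext_iff, ← ha, ← ha]
    exact QuotientGroup.eq.2 (hAC ⟨A.mul_mem (A.inv_mem (haA b)) (haA b'), hbC⟩)
  have := finite_weights (commute_linHom (ρ := ρ) hA)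
  refine ⟨.of_injective f hf, (Nat.card_le_card_of_injective f hf).trans ?_⟩
  have hweights := card_weights_mul_le_finrank (commute_linHom (ρ := ρ) hA) (d := 1)
    fun χ hχ ↦ Submodule.one_le_finrank_iff.2 hχ
  rwa [mul_one, Module.finrank_linearMap, ← sq] at hweights

end Conjugation

theorem commutator_ker_conjNormal_comp_mk'_le {G : Type*} [Group G] {Z A : Subgroup G} [Z.Normal]
    [(A.map (mk' Z)).Normal] :
    ⁅((MulAut.conjNormal (H := A.map (mk' Z))).comp (mk' Z)).ker, A⁆ ≤ Z := by
  rw [← MonoidHom.comap_ker, ker_conjNormal]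
  refine ((Subgroup.map_eq_bot_iff _).1 ?_).trans_eq (ker_mk' Z)
  rw [map_commutator, commutator_eq_bot_iff_le_centralizer]
  exact map_comap_le _ _

universe u v w

open scoped IsMulCommutative in
theorem IrreducibleBound.derivedSeries_eq_bot_of_forall_le_center {F : Type u} [Field F]
    [IsAlgClosed F] {V : Type w} [AddCommGroup V] [Module F V] [FiniteDimensional F V] {G : Type v}
    [Group G] [Group.IsSolvable G] {ρ : Representation F G V} [ρ.IsIrreducible]
    (hρ : Function.Injective ρ) (hn : 1 < Module.finrank F V)
    (h : ∀ m < Module.finrank F V, IrreducibleBound.{0, v, v} m)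
    (hG : ∀ A : Subgroup G, A.Normal → IsMulCommutative A → A ≤ center G) :
    derivedSeries G (400 * Nat.log 2 (Module.finrank F V) + 1) = ⊥ := by
  obtain ⟨A, hA, hAA, hAC⟩ := exists_normal_centralizer_le_center hG
  have := hA.map (mk' (center G)) (mk'_surjective _)
  have := isMulCommutative_map_mk'_iff.2 hAA
  obtain ⟨_, hcard⟩ := card_map_mk'_center_le hρ hAA (inf_le_right.trans hAC)
  set L := Nat.log 2 (Module.finrank F V)
  let φ := (MulAut.conjNormal (H := A.map (mk' (center G)))).comp (mk' (center G))
  have hφ : derivedSeries G (399 * L) ≤ φ.ker :=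
    derivedSeries_le_ker_mulAut_of_card_le_sq hn h φ hcard
  have hcenter : derivedSeries G (399 * L + 1) ≤ center G :=
    ((commutator_mono hφ hφ).trans
      (commutator_le_centralizer commutator_ker_conjNormal_comp_mk'_le)).trans hAC
  have hbot : derivedSeries G (399 * L + 2) ≤ ⊥ := (commutator_mono hcenter hcenter).trans_eq <|
    commutator_eq_bot_iff_le_centralizer.2 (center_le_centralizer _)
  have hL : 1 ≤ L := Nat.log_pos one_lt_two hn
  exact le_bot_iff.1 ((derivedSeries_antitone G (by omega)).trans hbot)

end QuasiPrimitive

section SolvableLinearGroups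

open Representation

section Surjective

variable {F G H V : Type*} [Field F] [Group G] [Group H] [AddCommGroup V] [Module F V]

theorem isIrreducible_of_comp {σ : Representation F H V} (f : G →* H)
    [h : IsIrreducible (σ.comp f)] : σ.IsIrreducible := by
  let e (W : Subrepresentation σ) : Subrepresentation (σ.comp f) :=
    ⟨W.toSubmodule, fun g ↦ W.apply_mem_toSubmodule (f g)⟩
  have he : Function.Injective e := fun W W' h ↦
    Subrepresentation.toSubmodule_injective <| show (e W).toSubmodule = (e W').toSubmodule by rw [h]
  exact
    { exists_pair_ne := ⟨⊥, ⊤, fun h ↦ bot_ne_top (α := Subrepresentation (σ.comp f)) <|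
        congrArg e h⟩
      eq_bot_or_eq_top := fun W ↦
        (eq_bot_or_eq_top (e W)).imp (fun h ↦ he (h.trans rfl)) fun h ↦ he (h.trans rfl) }

theorem isIrreducible_lift_ker (ρ : Representation F G V) [h : ρ.IsIrreducible] :
    Representation.IsIrreducible (QuotientGroup.lift ρ.ker ρ le_rfl) :=
  isIrreducible_of_comp (h := h) (QuotientGroup.mk' ρ.ker)

theorem derivedSeries_one_le_ker_of_finrank_eq_one (ρ : Representation F G V)
    (hV : Module.finrank F V = 1) : derivedSeries G 1 ≤ ρ.ker := by
  rw [derivedSeries_one]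
  refine Subgroup.commutator_le.2 fun g _ h _ ↦ ?_
  obtain ⟨c, hc, -⟩ := LinearMap.existsUnique_eq_smul_id_of_finrank_eq_one hV (ρ g)
  have hgh : ρ (g * h) = ρ (h * g) := LinearMap.ext fun x ↦ by
    simp only [map_mul, hc, Module.End.mul_apply, LinearMap.smul_apply, LinearMap.id_apply,
      map_smul]
  calc ρ ⁅g, h⁆ = ρ (g * h) * ρ (h * g)⁻¹ := by
        rw [← map_mul, _root_.mul_inv_rev, commutatorElement_def, mul_assoc (g * h)]
    _ = 1 := by rw [hgh, ← map_mul, mul_inv_cancel, map_one]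

end Surjective

universe u v w

theorem IrreducibleBound.derivedSeries_eq_bot_of_injective {F : Type u} [Field F] [IsAlgClosed F]
    {V : Type w} [AddCommGroup V] [Module F V] [FiniteDimensional F V] {G : Type v} [Group G]
    [Group.IsSolvable G] {ρ : Representation F G V} [ρ.IsIrreducible] (hρ : Function.Injective ρ)
    (hn : 1 < Module.finrank F V)
    (hperm : ∀ m < Module.finrank F V, IrreducibleBound.{0, v, v} m)
    (h : ∀ m < Module.finrank F V, IrreducibleBound.{u, v, w} m) :
    derivedSeries G (400 * Nat.log 2 (Module.finrank F V) + 1) = ⊥ := by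
  by_cases hcenter : ∀ A : Subgroup G, A.Normal → IsMulCommutative A → A ≤ Subgroup.center G
  · exact derivedSeries_eq_bot_of_forall_le_center hρ hn hperm hcenter
  · push Not at hcenter
    obtain ⟨A, _, _, hA⟩ := hcenter
    have hker := derivedSeries_le_ker_of_forall_weightSpace_ne_top hperm h fun χ hχ ↦
      hA (le_center_of_weightSpace_eq_top hρ hχ)
    rwa [(MonoidHom.ker_eq_bot_iff ρ).2 hρ, le_bot_iff] at hker

theorem irreducibleBound_of_forall_lt {n : ℕ} (hperm : ∀ m < n, IrreducibleBound.{0, v, v} m)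
    (h : ∀ m < n, IrreducibleBound.{u, v, w} m) : IrreducibleBound.{u, v, w} n := by
  rintro F _ _ V _ _ _ G _ _ ρ _ rfl
  have : Nontrivial V := IsSimpleModule.nontrivial (MonoidAlgebra F G) ρ.asModule
  obtain hn | hn := Nat.eq_or_lt_of_le (Module.finrank_pos (R := F) (M := V))
  · exact (derivedSeries_antitone G (by simp)).trans
      (derivedSeries_one_le_ker_of_finrank_eq_one ρ hn.symm)
  have := isIrreducible_lift_ker ρ
  have hbot : derivedSeries (G ⧸ ρ.ker) (400 * Nat.log 2 (Module.finrank F V) + 1) = ⊥ :=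
    IrreducibleBound.derivedSeries_eq_bot_of_injective
      ((QuotientGroup.injective_lift_iff ρ.ker ρ le_rfl).2 rfl) hn hperm h
  rwa [← QuotientGroup.ker_mk' ρ.ker, ← Subgroup.map_eq_bot_iff,
    map_derivedSeries_eq (QuotientGroup.mk'_surjective _)]

theorem irreducibleBound (n : ℕ) : IrreducibleBound.{u, v, w} n := by
  have hperm (n : ℕ) : IrreducibleBound.{0, v, v} n := by
    induction n using Nat.strong_induction_on with
    | h n ih => exact irreducibleBound_of_forall_lt ih ih
  induction n using Nat.strong_induction_on with
  | h n ih => exact irreducibleBound_of_forall_lt (fun m _ ↦ hperm m) ih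

end SolvableLinearGroups

section FrattiniReduction

open Subgroup

variable {G : Type*} [Group G]

theorem subgroupOf_le_frattini_of_minimal {H R : Subgroup G}
    (h : Minimal (fun K : Subgroup G ↦ K ⊔ R = ⊤) H) : R.subgroupOf H ≤ frattini H := by
  refine le_iInf₂ fun M hM ↦ ?_
  by_contra hRM
  have hMR : M.map H.subtype ⊔ R = ⊤ := by
    refine top_le_iff.1 (h.prop.ge.trans (sup_le ?_ le_sup_right))
    calc H = (M ⊔ R.subgroupOf H).map H.subtype := by
          rw [hM.2 _ (left_lt_sup.2 hRM), ← MonoidHom.range_eq_map, range_subtype]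
      _ = M.map H.subtype ⊔ R ⊓ H := by rw [Subgroup.map_sup, subgroupOf_map_subtype]
      _ ≤ _ := sup_le_sup_left inf_le_left _
  have hHM : H ≤ M.map H.subtype := h.le_of_le hMR (map_subtype_le M)
  refine hM.1 (top_le_iff.1 fun x _ ↦ ?_)
  obtain ⟨y, hy, hyx⟩ := hHM x.2
  rwa [← Subtype.ext hyx]

variable [Finite G]

theorem exists_isSolvable_sup_eq_top (R : Subgroup G) [R.Normal] [Group.IsSolvable (G ⧸ R)] :
    ∃ H : Subgroup G, Group.IsSolvable H ∧ H ⊔ R = ⊤ := by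
  obtain ⟨H, hH⟩ :=
    exists_minimal_of_wellFoundedLT (fun K : Subgroup G ↦ K ⊔ R = ⊤) ⟨⊤, top_sup_eq R⟩
  have := frattini_nilpotent (G := H)
  refine ⟨H, Group.isSolvable_of_ker_le_range (frattini H).subtype
    ((QuotientGroup.mk' R).comp H.subtype) ?_, hH.prop⟩
  rw [range_subtype, ← MonoidHom.comap_ker, QuotientGroup.ker_mk']
  exact subgroupOf_le_frattini_of_minimal hH

variable (G) in
theorem exists_forall_derivedSeries_le : ∃ N, ∀ m, derivedSeries G N ≤ derivedSeries G m := by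
  obtain ⟨N, hN⟩ :=
    exists_minimalFor_of_wellFoundedLT (fun _ ↦ True) (derivedSeries G) ⟨0, trivial⟩
  exact ⟨N, fun m ↦ (hN.le_of_le trivial (derivedSeries_antitone G (le_max_left N m))).trans
    (derivedSeries_antitone G (le_max_right N m))⟩

theorem derivedSeries_succ_eq_of_forall_isSolvable {m : ℕ}
    (h : ∀ H : Subgroup G, Group.IsSolvable H → derivedSeries H m = ⊥) :
    derivedSeries G (m + 1) = derivedSeries G m := by
  obtain ⟨N, hN⟩ := exists_forall_derivedSeries_le G
  let R := derivedSeries G N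
  have : Group.IsSolvable (G ⧸ R) := ⟨N, by
    rw [← map_derivedSeries_eq (QuotientGroup.mk'_surjective R), Subgroup.map_eq_bot_iff,
      QuotientGroup.ker_mk']⟩
  obtain ⟨H, hH, hHR⟩ := exists_isSolvable_sup_eq_top R
  have hsurj : Function.Surjective ((QuotientGroup.mk' R).comp H.subtype) := by
    rw [← MonoidHom.range_eq_top, MonoidHom.range_comp, range_subtype]
    rw [← sup_bot_eq (H.map _), ← QuotientGroup.map_mk'_self R, ← Subgroup.map_sup, hHR,
      ← MonoidHom.range_eq_map, QuotientGroup.range_mk']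
  have hm : derivedSeries G m ≤ R := by
    rw [← QuotientGroup.ker_mk' R, ← Subgroup.map_eq_bot_iff,
      map_derivedSeries_eq (QuotientGroup.mk'_surjective R), ← map_derivedSeries_eq hsurj, h H hH,
      Subgroup.map_bot]
  exact le_antisymm (derivedSeries_antitone G m.le_succ) (hm.trans (hN _))

end FrattiniReduction

section GeneralLinearGroup

universe u

theorem derivedSeries_eq_bot_of_injective {F : Type u} [Field F] {G : Type*} [Group G]
    [Group.IsSolvable G] {n : ℕ} {f : G →* GL (Fin n) F} (hf : Function.Injective f) :
    derivedSeries G (401 * Nat.log 2 n + 2) = ⊥ := by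
  let ρ : Representation F G (Fin n → F) :=
    (Matrix.toLinAlgEquiv' : Matrix (Fin n) (Fin n) F ≃ₐ[F] _).toMonoidHom.comp
      ((Units.coeHom _).comp f)
  have hρ : Function.Injective ρ :=
    Matrix.toLinAlgEquiv'.injective.comp (Units.val_injective.comp hf)
  rw [← le_bot_iff, ← (MonoidHom.ker_eq_bot_iff ρ).2 hρ]
  exact IrreducibleBound.derivedSeries_le_ker (fun m _ ↦ irreducibleBound m) ρ (by simp)

theorem natLog_two_le_two_mul_log (n : ℕ) : (Nat.log 2 n : ℝ) ≤ 2 * Real.log n := by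
  have hlog : 0 ≤ Real.log n := Real.log_natCast_nonneg n
  refine (Real.natLog_le_logb n 2).trans ?_
  rw [Real.logb, div_le_iff₀ (by positivity)]
  push_cast
  nlinarith [Real.log_two_gt_d9]

theorem perfect_core_bounded_derived_length_general :
    ∃ c : ℝ, ∀ n : ℕ, 1 ≤ n → ∀ (F : Type u) [Field F],
      ∀ Γ : Subgroup (GL (Fin n) F), Finite ↥Γ →
      ∃ m : ℕ, (m : ℝ) ≤ c * (1 + Real.log n) ∧
        derivedSeries ↥Γ (m + 1) = derivedSeries ↥Γ m := by
  refine ⟨802, fun n _ F _ Γ _ ↦ ⟨401 * Nat.log 2 n + 2, ?_, ?_⟩⟩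
  · push_cast
    linarith [natLog_two_le_two_mul_log n]
  · exact derivedSeries_succ_eq_of_forall_isSolvable fun H _ ↦
      derivedSeries_eq_bot_of_injective (f := Γ.subtype.comp H.subtype)
        (Γ.subtype_injective.comp H.subtype_injective)

end GeneralLinearGroup

/-- There is an absolute constant `c` such that for every `n ≥ 1`, every field `F` and
every finite subgroup `Γ ≤ GL_n(F)`, some term `Γ^{(m)}` of the derived series with
`m ≤ c·(1 + log n)` is perfect. -/
theorem perfect_core_bounded_derived_length :
    ∃ c : ℝ, ∀ n : ℕ, 1 ≤ n → ∀ (F : Type) [Field F],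
      ∀ Γ : Subgroup (GL (Fin n) F), Finite ↥Γ →
      ∃ m : ℕ, (m : ℝ) ≤ c * (1 + Real.log n) ∧
        derivedSeries ↥Γ (m + 1) = derivedSeries ↥Γ m :=
  perfect_core_bounded_derived_length_general
end

section
/- Let F be an algebraically closed field of characteristic p > 0 and let G be a finite subgroup of GL_n(F). Then the following are equivalent: (i) G is trigonalizable, i.e., there exists g ∈ GL_n(F) such that g·x·g⁻¹ is an upper triangular matrix (all entries below the diagonal are zero) for every x ∈ G; (ii) G is p-by-abelian, i.e., there is a normal subgroup U of G such that U is a p-group and the quotient G/U is abelian. -/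
open Matrix
open scoped commutatorElement

set_option synthInstance.maxHeartbeats 400000
set_option maxHeartbeats 1000000

/-!
On upper triangular matrices, taking the diagonal is multiplicative, so it is a homomorphism from a
trigonalized group to the commutative monoid `F^n`. Its kernel consists of unitriangular matrices,
and in characteristic `p` being unipotent is the same as having `p`-power order, because
`(a - 1) ^ p ^ m = a ^ p ^ m - 1`.

Conversely, a normal `p`-subgroup `U` acts unipotently on every subquotient of `F^n`. On an
irreducible representation all unipotent operators have trace equal to the dimension, so
`ρ g - 1` is trace-orthogonal to the span of the image of `ρ`, which by Burnside's theorem is the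
whole endomorphism ring; hence `ρ g = 1`. Therefore `U` has nonzero invariants on every nonzero
subquotient (Kolchin's theorem). The abelian group `G ⧸ U` acts on them with a common eigenvector,
and taking such eigenvectors in successive quotients yields a basis that spans an invariant flag.
-/

open Module

theorem isNilpotent_sub_one_iff_exists_pow_char_pow_eq_one (k : Type*) {A : Type*} [Field k]
    [Ring A] [Algebra k A] (p : ℕ) [Fact p.Prime] [CharP k p] (a : A) :
    IsNilpotent (a - 1) ↔ ∃ m : ℕ, a ^ p ^ m = 1 := by
  nontriviality A
  have : CharP A p := charP_of_injective_algebraMap' k p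
  have sub_one_pow (m : ℕ) : (a - 1) ^ p ^ m = a ^ p ^ m - 1 := by
    rw [sub_pow_char_pow_of_commute _ _ (Commute.one_right a), one_pow]
  constructor
  · rintro ⟨m, hm⟩
    refine ⟨m, sub_eq_zero.1 ?_⟩
    rw [← sub_one_pow]
    exact pow_eq_zero_of_le (Nat.lt_pow_self (Fact.out : p.Prime).one_lt).le hm
  · rintro ⟨m, hm⟩
    exact ⟨p ^ m, by rw [sub_one_pow, hm, sub_self]⟩

theorem commutatorElement_mem_ker {G M : Type*} [Group G] [CommMonoid M] (φ : G →* M) (a b : G) :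
    ⁅a, b⁆ ∈ φ.ker := by
  have h := Abelianization.commutator_subset_ker φ.toHomUnits
    (Subgroup.commutator_mem_commutator (Subgroup.mem_top a) (Subgroup.mem_top b))
  exact congrArg Units.val (MonoidHom.mem_ker.1 h)

section UpperTriangular

variable {ι R : Type*} [Fintype ι] [LinearOrder ι]

theorem isUpperTriangular_mul_apply_self [NonUnitalNonAssocSemiring R] {M N : Matrix ι ι R}
    (hM : M.IsUpperTriangular) (hN : N.IsUpperTriangular) (i : ι) :
    (M * N) i i = M i i * N i i := by
  rw [Matrix.mul_apply]
  refine Finset.sum_eq_single i (fun j _ hj => ?_) (by simp)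
  rcases lt_or_gt_of_ne hj with h | h
  · rw [hM h, zero_mul]
  · rw [hN h, mul_zero]

theorem isNilpotent_sub_one_of_isUpperTriangular [CommRing R] {M : Matrix ι ι R}
    (hM : M.IsUpperTriangular) (hdiag : ∀ i, M i i = 1) : IsNilpotent (M - 1) := by
  have hcharpoly : (M - 1).charpoly = Polynomial.X ^ Fintype.card ι := by
    rw [charpoly_of_isUpperTriangular _ (hM.sub blockTriangular_one)]
    simp [hdiag]
  refine ⟨Fintype.card ι, ?_⟩
  have cayley_hamilton := aeval_self_charpoly (M - 1)
  rwa [hcharpoly, map_pow, Polynomial.aeval_X] at cayley_hamilton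

/-- The diagonal of a representation by upper triangular matrices, as a homomorphism to the
pointwise monoid of tuples; its components are the diagonal characters of the representation. -/
def diagHom {G : Type*} [Monoid G] [Semiring R] (f : G →* Matrix ι ι R)
    (hf : ∀ x, (f x).IsUpperTriangular) : G →* (ι → R) where
  toFun x := (f x).diag
  map_one' := by simp
  map_mul' x y := by
    ext i
    simpa using isUpperTriangular_mul_apply_self (hf x) (hf y) i

theorem isPGroup_ker_diagHom {G k : Type*} [Group G] [Field k] (p : ℕ) [Fact p.Prime]
    [CharP k p] (f : G →* Matrix ι ι k) (hf : ∀ x, (f x).IsUpperTriangular)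
    (hinj : Function.Injective f) : IsPGroup p (diagHom f hf).ker := by
  rintro ⟨x, hx⟩
  obtain ⟨m, hm⟩ := (isNilpotent_sub_one_iff_exists_pow_char_pow_eq_one k p (f x)).1
    (isNilpotent_sub_one_of_isUpperTriangular (hf x) (congrFun (MonoidHom.mem_ker.1 hx)))
  refine ⟨m, Subtype.ext (hinj ?_)⟩
  simpa using hm

end UpperTriangular

section Burnside

variable {k V : Type*} [Field k] [AddCommGroup V] [Module k V]

theorem surjective_lsmul_of_isSimpleModule {A : Type*} [Ring A] [Algebra k A] [Module A V]
    [IsScalarTower k A V] [IsSimpleModule A V] [FiniteDimensional k V] [IsAlgClosed k] :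
    Function.Surjective (Algebra.lsmul k k V : A →ₐ[k] End k V) := by
  classical
  intro f
  let f' : End (End A V) V :=
    { f with
      map_smul' := fun c v => by
        obtain ⟨c, rfl⟩ := (IsSimpleModule.algebraMap_end_bijective_of_isAlgClosed k).2 c
        simp }
  let b := finBasis k V
  obtain ⟨a, ha⟩ := jacobson_density f' (Finset.univ.image b)
  exact ⟨a, b.ext fun i => (ha (b i) (by simp)).symm⟩

theorem eq_zero_of_forall_trace_mul_eq_zero [FiniteDimensional k V] {f : End k V}
    (hf : ∀ g, LinearMap.trace k V (f * g) = 0) : f = 0 := by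
  ext v
  refine (forall_dual_apply_eq_zero_iff k (f v)).1 fun φ => ?_
  have h := hf (φ.smulRight v)
  rwa [show f * φ.smulRight v = φ.smulRight (f v) by ext; simp, LinearMap.trace_smulRight] at h

end Burnside

section Subrepresentation

variable {k G V : Type*} [Monoid G] [AddCommGroup V]

theorem isIrreducible_toRepresentation_of_isAtom [Field k] [Module k V] {ρ : Representation k G V}
    {σ : Subrepresentation ρ} (hσ : IsAtom σ) : σ.toRepresentation.IsIrreducible := by
  let incl (τ : Subrepresentation σ.toRepresentation) : Subrepresentation ρ :=
    { toSubmodule := τ.toSubmodule.map σ.toSubmodule.subtype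
      apply_mem_toSubmodule := by
        rintro g _ ⟨w, hw, rfl⟩
        exact ⟨_, τ.apply_mem_toSubmodule g hw, rfl⟩ }
  have incl_injective : Function.Injective incl := fun τ τ' h =>
    Subrepresentation.toSubmodule_injective <|
      Submodule.map_injective_of_injective σ.toSubmodule.injective_subtype
        (congrArg Subrepresentation.toSubmodule h)
  have incl_bot : incl ⊥ = ⊥ := Subrepresentation.toSubmodule_injective (Submodule.map_bot _)
  have incl_top : incl ⊤ = σ :=
    Subrepresentation.toSubmodule_injective (Submodule.map_subtype_top _)
  have incl_le (τ : Subrepresentation σ.toRepresentation) : incl τ ≤ σ :=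
    Submodule.map_subtype_le _ _
  have : Nontrivial (Subrepresentation σ.toRepresentation) :=
    ⟨⊥, ⊤, fun h => hσ.1 (by rw [← incl_top, ← h, incl_bot])⟩
  refine ⟨fun τ => (hσ.le_iff.1 (incl_le τ)).imp (fun h => ?_) (fun h => ?_)⟩
  · exact incl_injective (h.trans incl_bot.symm)
  · exact incl_injective (h.trans incl_top.symm)

theorem exists_subrepresentation_isIrreducible [Field k] [Module k V] [FiniteDimensional k V]
    [Nontrivial V] (ρ : Representation k G V) :
    ∃ σ : Subrepresentation ρ, σ.toRepresentation.IsIrreducible := by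
  have : WellFoundedLT (Subrepresentation ρ) :=
    StrictMono.wellFoundedLT (f := Subrepresentation.toSubmodule) fun _ _ h => h
  obtain ⟨σ, hσ, -⟩ := (eq_bot_or_exists_atom_le (⊤ : Subrepresentation ρ)).resolve_left
    fun h => top_ne_bot (congrArg Subrepresentation.toSubmodule h)
  exact ⟨σ, isIrreducible_toRepresentation_of_isAtom hσ⟩

theorem isNilpotent_toRepresentation_sub_one [CommRing k] [Module k V] {ρ : Representation k G V}
    (σ : Subrepresentation ρ) {g : G} (hg : IsNilpotent (ρ g - 1)) :
    IsNilpotent (σ.toRepresentation g - 1) := by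
  obtain ⟨m, hm⟩ := hg
  have mapsTo : ∀ v ∈ σ.toSubmodule, (ρ g - 1) v ∈ σ.toSubmodule := fun v hv =>
    sub_mem (σ.apply_mem_toSubmodule g hv) hv
  have restrict_eq : σ.toRepresentation g - 1 = (ρ g - 1).restrict mapsTo := rfl
  refine ⟨m, ?_⟩
  rw [restrict_eq, Module.End.pow_restrict]
  ext v
  simp [hm]

end Subrepresentation

section CommonEigenvector

variable {k G V : Type*} [Field k] [IsAlgClosed k] [AddCommGroup V] [Module k V]
  [FiniteDimensional k V]

section Monoid

variable [Monoid G] (ρ : Representation k G V)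

open scoped MonoidAlgebra in
theorem surjective_asAlgebraHom_of_isIrreducible [ρ.IsIrreducible] :
    Function.Surjective ρ.asAlgebraHom := by
  have : IsSimpleModule k[G] ρ.asModule := inferInstance
  have : IsScalarTower k k[G] ρ.asModule := inferInstance
  exact surjective_lsmul_of_isSimpleModule (k := k) (A := k[G]) (V := ρ.asModule)

theorem eq_zero_of_isIrreducible_of_forall_trace_mul_eq_zero [ρ.IsIrreducible] {f : End k V}
    (hf : ∀ g, LinearMap.trace k V (f * ρ g) = 0) : f = 0 := by
  refine eq_zero_of_forall_trace_mul_eq_zero fun φ => ?_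
  obtain ⟨a, rfl⟩ := surjective_asAlgebraHom_of_isIrreducible ρ φ
  induction a using MonoidAlgebra.induction_linear with
  | zero => simp
  | add a b ha hb => rw [map_add, mul_add, map_add, ha, hb, add_zero]
  | single g c => simp [hf]

theorem eq_one_of_isIrreducible_of_isNilpotent_sub_one [ρ.IsIrreducible]
    (hρ : ∀ g, IsNilpotent (ρ g - 1)) (g : G) : ρ g = 1 := by
  have trace_apply (x : G) : LinearMap.trace k V (ρ x) = finrank k V := by
    have h := (LinearMap.isNilpotent_trace_of_isNilpotent (hρ x)).eq_zero
    rwa [map_sub, LinearMap.trace_one, sub_eq_zero] at h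
  refine sub_eq_zero.1 (eq_zero_of_isIrreducible_of_forall_trace_mul_eq_zero ρ fun x => ?_)
  rw [sub_mul, one_mul, ← map_mul, map_sub, trace_apply, trace_apply, sub_self]

theorem exists_common_eigenvector_of_isMulCommutative [IsMulCommutative G] [Nontrivial V] :
    ∃ v : V, v ≠ 0 ∧ ∀ g, ∃ c : k, ρ g v = c • v := by
  obtain ⟨σ, hσ⟩ := exists_subrepresentation_isIrreducible ρ
  obtain ⟨v, hv, hspan⟩ := finrank_eq_one_iff'.1
    (Representation.IsIrreducible.finrank_eq_one_of_isMulCommutative σ.toRepresentation)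
  refine ⟨v, by simpa using hv, fun g => ?_⟩
  obtain ⟨c, hc⟩ := hspan (σ.toRepresentation g v)
  exact ⟨c, congrArg Subtype.val hc.symm⟩

end Monoid

variable [Group G] (ρ : Representation k G V)

theorem invariants_ne_bot_of_isNilpotent_sub_one [Nontrivial V]
    (hρ : ∀ g, IsNilpotent (ρ g - 1)) : ρ.invariants ≠ ⊥ := by
  obtain ⟨σ, hσ⟩ := exists_subrepresentation_isIrreducible ρ
  have σ_trivial (g : G) : σ.toRepresentation g = 1 :=
    eq_one_of_isIrreducible_of_isNilpotent_sub_one _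
      (fun x => isNilpotent_toRepresentation_sub_one σ (hρ x)) g
  have le_invariants : σ.toSubmodule ≤ ρ.invariants := fun v hv g =>
    congrArg Subtype.val (LinearMap.congr_fun (σ_trivial g) ⟨v, hv⟩)
  refine ne_bot_of_le_ne_bot (fun h => ?_) le_invariants
  refine bot_ne_top (α := Subrepresentation σ.toRepresentation)
    (Subrepresentation.toSubmodule_injective ?_)
  have : Subsingleton σ.toSubmodule := Submodule.subsingleton_iff_eq_bot.2 h
  exact Subsingleton.elim _ _

theorem exists_common_eigenvector_of_isNilpotent_sub_one [Nontrivial V] (U : Subgroup G)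
    [U.Normal] [IsMulCommutative (G ⧸ U)] (hU : ∀ u ∈ U, IsNilpotent (ρ u - 1)) :
    ∃ v : V, v ≠ 0 ∧ ∀ g, ∃ c : k, ρ g v = c • v := by
  have : Nontrivial (Representation.invariants (ρ.comp U.subtype)) :=
    Submodule.nontrivial_iff_ne_bot.2
      (invariants_ne_bot_of_isNilpotent_sub_one (ρ.comp U.subtype) fun u => hU u u.2)
  obtain ⟨v, hv, heigen⟩ := exists_common_eigenvector_of_isMulCommutative (ρ.quotientToInvariants U)
  refine ⟨v, by simpa using hv, fun g => ?_⟩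
  obtain ⟨c, hc⟩ := heigen g
  exact ⟨c, congrArg Subtype.val hc⟩

end CommonEigenvector

section Flag

variable {ι k V : Type*} [Field k] [AddCommGroup V] [Module k V]

theorem exists_linearIndependent_apply_mem_span_Iic (f : ι → End k V)
    (hf : ∀ W : Submodule k V, (∀ i, W ≤ W.comap (f i)) → W ≠ ⊤ →
      ∃ v ∉ W, ∀ i, f i v ∈ W ⊔ k ∙ v) (m : ℕ) (hm : m ≤ finrank k V) :
    ∃ v : Fin m → V, LinearIndependent k v ∧
      ∀ i j, f i (v j) ∈ Submodule.span k (v '' Set.Iic j) := by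
  induction m with
  | zero => exact ⟨Fin.elim0, linearIndependent_empty_type, fun _ j => j.elim0⟩
  | succ m ih =>
    obtain ⟨v, hv, hmem⟩ := ih (Nat.le_of_succ_le hm)
    have invariant (i : ι) :
        Submodule.span k (Set.range v) ≤ (Submodule.span k (Set.range v)).comap (f i) := by
      rw [Submodule.span_le]
      rintro _ ⟨j, rfl⟩
      exact Submodule.span_mono (Set.image_subset_range v _) (hmem i j)
    have proper : Submodule.span k (Set.range v) ≠ ⊤ := by
      intro h
      have := finrank_span_eq_card hv
      rw [h, finrank_top, Fintype.card_fin] at this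
      lia
    obtain ⟨w, hw, hfw⟩ := hf _ invariant proper
    refine ⟨Fin.snoc v w, linearIndependent_finSnoc.2 ⟨hv, hw⟩, fun i j => ?_⟩
    cases j using Fin.lastCases with
    | last =>
      rw [← Fin.top_eq_last, Set.Iic_top, Set.image_univ, Fin.range_snoc, Submodule.span_insert,
        sup_comm, Fin.top_eq_last, Fin.snoc_last]
      exact hfw i
    | cast j =>
      rw [Fin.snoc_castSucc]
      refine Submodule.span_mono ?_ (hmem i j)
      rintro _ ⟨l, hl, rfl⟩
      exact ⟨l.castSucc, by simpa using hl, Fin.snoc_castSucc ..⟩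

theorem exists_basis_isUpperTriangular_toMatrix [FiniteDimensional k V] {n : ℕ}
    (hn : finrank k V = n) (f : ι → End k V)
    (hf : ∀ W : Submodule k V, (∀ i, W ≤ W.comap (f i)) → W ≠ ⊤ →
      ∃ v ∉ W, ∀ i, f i v ∈ W ⊔ k ∙ v) :
    ∃ b : Basis (Fin n) k V, ∀ i, (LinearMap.toMatrix b b (f i)).IsUpperTriangular := by
  obtain ⟨v, hv, hmem⟩ := exists_linearIndependent_apply_mem_span_Iic f hf n hn.ge
  let b := basisOfLinearIndependentOfCardEqFinrank' v hv (by simp [hn])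
  refine ⟨b, fun i r s hrs => ?_⟩
  have hb : Submodule.span k (v '' Set.Iic s) ≤ LinearMap.ker (b.coord r) := by
    rw [Submodule.span_le]
    rintro _ ⟨j, hj, rfl⟩
    have hjr : j ≠ r := (lt_of_le_of_lt hj hrs).ne
    have : v j = b j := by simp [b]
    simp [this, hjr]
  rw [LinearMap.toMatrix_apply]
  simpa [b] using hb (hmem i s)

end Flag

section PGroup

variable {k G V : Type*} [Field k] [AddCommGroup V] [Module k V] [Group G]
  (p : ℕ) [Fact p.Prime] [CharP k p] (ρ : Representation k G V)

theorem isNilpotent_sub_one_of_isPGroup {U : Subgroup G} (hU : IsPGroup p U) {u : G}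
    (hu : u ∈ U) : IsNilpotent (ρ u - 1) := by
  obtain ⟨m, hm⟩ := hU ⟨u, hu⟩
  have pow_eq_one : u ^ p ^ m = 1 := by simpa using congrArg Subtype.val hm
  refine (isNilpotent_sub_one_iff_exists_pow_char_pow_eq_one k p _).2 ⟨m, ?_⟩
  rw [← map_pow, pow_eq_one, map_one]

theorem exists_basis_isUpperTriangular_of_isPGroup [IsAlgClosed k] [FiniteDimensional k V] {n : ℕ}
    (hn : finrank k V = n) (U : Subgroup G) [U.Normal] [IsMulCommutative (G ⧸ U)]
    (hU : IsPGroup p U) :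
    ∃ b : Basis (Fin n) k V, ∀ g, (LinearMap.toMatrix b b (ρ g)).IsUpperTriangular := by
  refine exists_basis_isUpperTriangular_toMatrix hn ρ fun W hW hWtop => ?_
  have : Nontrivial (V ⧸ W) := Submodule.Quotient.nontrivial_iff.2 hWtop
  obtain ⟨v, hv, heigen⟩ := exists_common_eigenvector_of_isNilpotent_sub_one (ρ.quotient W hW) U
    fun _ => isNilpotent_sub_one_of_isPGroup p _ hU
  obtain ⟨v, rfl⟩ := W.mkQ_surjective v
  refine ⟨v, by simpa using hv, fun g => ?_⟩
  obtain ⟨c, hc⟩ := heigen g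
  have hmem : ρ g v - c • v ∈ W := (Submodule.Quotient.eq W).1 hc
  rw [← sub_add_cancel (ρ g v) (c • v)]
  exact Submodule.add_mem_sup hmem (Submodule.smul_mem _ c (Submodule.mem_span_singleton_self v))

end PGroup

theorem exists_conj_eq_toMatrix {ι R : Type*} [Fintype ι] [DecidableEq ι] [CommRing R]
    (b : Basis ι R (ι → R)) :
    ∃ g : GL ι R, ∀ x : GL ι R,
      ((g * x * g⁻¹ : GL ι R) : Matrix ι ι R) = LinearMap.toMatrix b b (toLin' x) := by
  let e := Pi.basisFun R ι
  refine ⟨⟨b.toMatrix e, e.toMatrix b, b.toMatrix_mul_toMatrix_flip e,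
    e.toMatrix_mul_toMatrix_flip b⟩, fun x => ?_⟩
  rw [← basis_toMatrix_mul_linearMap_toMatrix_mul_basis_toMatrix b e b e,
    LinearMap.toMatrix_eq_toMatrix', LinearMap.toMatrix'_toLin']
  rfl

theorem trigonalizable_iff_p_by_abelian_general
    (n : ℕ) (F : Type*) [Field F] [IsAlgClosed F]
    (p : ℕ) (hp : p.Prime) [CharP F p]
    (G : Subgroup (GL (Fin n) F)) :
    (∃ g : GL (Fin n) F, ∀ x ∈ G, ∀ i j : Fin n, j < i →
        ((g * x * g⁻¹ : GL (Fin n) F) : Matrix (Fin n) (Fin n) F) i j = 0) ↔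
    (∃ U : Subgroup ↥G, U.Normal ∧ IsPGroup p ↥U ∧ ∀ a b : ↥G, ⁅a, b⁆ ∈ U) := by
  have := Fact.mk hp
  constructor
  · rintro ⟨g, hg⟩
    let f : G →* Matrix (Fin n) (Fin n) F :=
      (Units.coeHom _).comp ((MulAut.conj g).toMonoidHom.comp G.subtype)
    have hf : ∀ x, (f x).IsUpperTriangular := fun x => hg x x.2
    have hinj : Function.Injective f :=
      Units.val_injective.comp ((MulAut.conj g).injective.comp G.subtype_injective)
    exact ⟨(diagHom f hf).ker, inferInstance, isPGroup_ker_diagHom p f hf hinj,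
      commutatorElement_mem_ker _⟩
  · rintro ⟨U, hnormal, hU, hcomm⟩
    have : IsMulCommutative (G ⧸ U) := Subgroup.Normal.quotient_commutative_iff_commutator_le.2
      (Subgroup.commutator_le.2 fun a _ b _ => hcomm a b)
    let ρ : Representation F G (Fin n → F) :=
      (toLinAlgEquiv' : Matrix (Fin n) (Fin n) F ≃ₐ[F] End F (Fin n → F)).toMonoidHom.comp
        ((Units.coeHom _).comp G.subtype)
    obtain ⟨b, hb⟩ := exists_basis_isUpperTriangular_of_isPGroup p ρ (finrank_fin_fun F) U hU
    obtain ⟨g, hg⟩ := exists_conj_eq_toMatrix b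
    exact ⟨g, fun x hx i j hij => by rw [hg]; exact hb ⟨x, hx⟩ hij⟩

/-- Over an algebraically closed field `F` of characteristic `p > 0`, a finite subgroup
`G ≤ GL_n(F)` is trigonalizable (conjugate into the upper triangular matrices) if and
only if it is `p`-by-abelian (it has a normal `p`-subgroup with abelian quotient). -/
theorem trigonalizable_iff_p_by_abelian
    (n : ℕ) (F : Type) [Field F] [IsAlgClosed F]
    (p : ℕ) (hp : p.Prime) [CharP F p]
    (G : Subgroup (GL (Fin n) F)) (hG : Finite ↥G) :
    (∃ g : GL (Fin n) F, ∀ x ∈ G, ∀ i j : Fin n, j < i →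
        ((g * x * g⁻¹ : GL (Fin n) F) : Matrix (Fin n) (Fin n) F) i j = 0) ↔
    (∃ U : Subgroup ↥G, U.Normal ∧ IsPGroup p ↥U ∧ ∀ a b : ↥G, ⁅a, b⁆ ∈ U) :=
  trigonalizable_iff_p_by_abelian_general n F p hp G
end
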